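/- arXiv:2407.15547 — 4 statements merged into one kernel-verified Lean document; each statement's English description precedes it below -/
import Mathlib

section
/- Let τ : [0,∞) → ℂ be Lipschitz continuous. Suppose there is an open set Ω ⊆ ℂ containing the closed half-plane {s : Re s ≥ 0} and an analytic function F on Ω such that F(s) = L{τ;s} for all s ∈ Ω with Re s > 0. Then τ(x) → 0 as x → ∞. -/
open Filter Set MeasureTheory

/-- The Laplace transform of `f : [0,∞) → ℂ` (given as a function on `ℝ`),
`L{f;s} = ∫_0^∞ f(x) e^{-sx} dx`. -/
noncomputable def Laplace (f : ℝ → ℂ) (s : ℂ) : ℂ :=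
  ∫ x in Set.Ioi (0 : ℝ), f x * Complex.exp (-(s * (x : ℂ)))

open FourierTransform SchwartzMap

lemma ik_bound {τ : ℝ → ℂ} {K : NNReal} (h : LipschitzWith K τ) (x y : ℝ) :
    ‖τ x‖ ≤ ‖τ y‖ + K * |x - y| := by
  have h1 := h.dist_le_mul x y
  rw [dist_eq_norm, Real.dist_eq] at h1
  have h2 := norm_sub_norm_le (τ x) (τ y)
  linarith

lemma ik_int1 {τ : ℝ → ℂ} {K : NNReal} (h : LipschitzWith K τ) {σ : ℝ} (hσ : 0 < σ) :
    IntegrableOn (fun x : ℝ => τ x * Complex.exp (-((σ : ℂ) * (x : ℂ)))) (Ioi 0) := by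
  have i0 := integrableOn_rpow_mul_exp_neg_mul_rpow (p := 1) (s := 0) (b := σ)
    (by norm_num) one_pos hσ
  have i1 := integrableOn_rpow_mul_exp_neg_mul_rpow (p := 1) (s := 1) (b := σ)
    (by norm_num) one_pos hσ
  refine Integrable.mono' ((i0.const_mul ‖τ 0‖).add (i1.const_mul K)) ?_ ?_
  · have := h.continuous
    exact Continuous.aestronglyMeasurable (by fun_prop)
  · filter_upwards [ae_restrict_mem measurableSet_Ioi] with x hx
    have hx' : (0 : ℝ) < x := hx
    have hb := ik_bound h x 0
    rw [sub_zero, abs_of_pos hx'] at hb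
    have e : ‖Complex.exp (-((σ : ℂ) * (x : ℂ)))‖ = Real.exp (-σ * x) := by
      rw [Complex.norm_exp]; simp
    rw [norm_mul, e]
    simp only [Pi.add_apply, Real.rpow_zero, Real.rpow_one, one_mul]
    have := mul_le_mul_of_nonneg_right hb (Real.exp_pos (-σ * x)).le
    linarith

lemma ik_int2 {τ : ℝ → ℂ} {K : NNReal} (h : LipschitzWith K τ) (ψ : 𝓢(ℝ, ℂ)) (y : ℝ) :
    Integrable (fun u : ℝ => τ (u + y) * ψ u) := by
  have i0 := ψ.integrable_pow_mul volume 0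
  have i1 := ψ.integrable_pow_mul volume 1
  refine Integrable.mono' ((i0.const_mul ‖τ y‖).add (i1.const_mul K)) ?_ ?_
  · have := h.continuous
    have := ψ.continuous
    exact Continuous.aestronglyMeasurable (by fun_prop)
  · refine Eventually.of_forall fun u => ?_
    have hb := ik_bound h (u + y) y
    rw [add_sub_cancel_right] at hb
    rw [norm_mul]
    simp only [Pi.add_apply, pow_zero, pow_one, one_mul, Real.norm_eq_abs]
    have := mul_le_mul_of_nonneg_right hb (norm_nonneg (ψ u))
    linarith

lemma ik_int3 {τ : ℝ → ℂ} {K : NNReal} (h : LipschitzWith K τ) (ψ : 𝓢(ℝ, ℂ)) (y : ℝ) :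
    Integrable (fun x : ℝ => τ x * ψ (x - y)) := by
  have := (ik_int2 h ψ y).comp_sub_right y
  simpa using this

lemma ik_fub {τ : ℝ → ℂ} {K : NNReal} (h : LipschitzWith K τ) {F : ℂ → ℂ}
    (hF : ∀ s : ℂ, 0 < s.re → F s = Laplace τ s) (φ : 𝓢(ℝ, ℂ)) (y : ℝ) {σ : ℝ} (hσ : 0 < σ) :
    ∫ x in Ioi (0 : ℝ), τ x * Complex.exp (-((σ : ℂ) * (x : ℂ))) * (𝓕 φ) (x - y) =
      ∫ v : ℝ, φ v * Complex.exp ((2 * Real.pi * v * y : ℝ) * Complex.I) *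
        F (σ + (2 * Real.pi * v : ℝ) * Complex.I) := by
  have key : ∫ x in Ioi (0 : ℝ), ∫ v : ℝ, τ x * Complex.exp (-((σ : ℂ) * (x : ℂ))) *
        φ v * Complex.exp ((-2 * Real.pi * v * (x - y) : ℝ) * Complex.I) =
      ∫ v : ℝ, ∫ x in Ioi (0 : ℝ), τ x * Complex.exp (-((σ : ℂ) * (x : ℂ))) *
        φ v * Complex.exp ((-2 * Real.pi * v * (x - y) : ℝ) * Complex.I) := by
    apply integral_integral_swap
    have i := (ik_int1 h hσ).mul_prod (φ.integrable (μ := volume))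
    refine i.mono ?_ ?_
    · have := h.continuous
      have := φ.continuous
      apply Continuous.aestronglyMeasurable
      simp only [Function.uncurry_def]
      fun_prop
    · refine Eventually.of_forall fun p => ?_
      simp only [Function.uncurry_def]
      rw [norm_mul _ (Complex.exp _), Complex.norm_exp_ofReal_mul_I, mul_one]
  calc _ = _ := ?_
    _ = _ := key
    _ = _ := ?_
  · congr 1
    ext x
    rw [fourier_coe, Real.fourier_real_eq_integral_exp_smul, ← integral_const_mul]
    congr 1
    ext v
    rw [smul_eq_mul]
    ring
  · congr 1
    ext v
    rw [hF _ (by simpa using hσ), Laplace, ← integral_const_mul]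
    congr 1
    ext x
    have : Complex.exp (-((σ : ℂ) * (x : ℂ))) *
        Complex.exp ((-2 * Real.pi * v * (x - y) : ℝ) * Complex.I) =
        Complex.exp ((2 * Real.pi * v * y : ℝ) * Complex.I) *
        Complex.exp (-((σ + (2 * Real.pi * v : ℝ) * Complex.I) * (x : ℂ))) := by
      rw [← Complex.exp_add, ← Complex.exp_add]
      congr 1
      push_cast
      ring
    linear_combination (τ x * φ v) * this

lemma ik_id {τ : ℝ → ℂ} {K : NNReal} (h : LipschitzWith K τ) {F : ℂ → ℂ}
    (hFc : ContinuousOn F {s : ℂ | 0 ≤ s.re})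
    (hF : ∀ s : ℂ, 0 < s.re → F s = Laplace τ s) (φ : 𝓢(ℝ, ℂ)) (hφ : HasCompactSupport φ) (y : ℝ) :
    ∫ x in Ioi (0 : ℝ), τ x * (𝓕 φ) (x - y) =
      ∫ v : ℝ, φ v * Complex.exp ((2 * Real.pi * v * y : ℝ) * Complex.I) *
        F ((2 * Real.pi * v : ℝ) * Complex.I) := by
  have hl : Tendsto (fun σ : ℝ => ∫ x in Ioi (0 : ℝ), τ x *
      Complex.exp (-((σ : ℂ) * (x : ℂ))) * (𝓕 φ) (x - y)) (nhdsWithin 0 (Ioi 0))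
      (nhds (∫ x in Ioi (0 : ℝ), τ x * (𝓕 φ) (x - y))) := by
    apply tendsto_integral_filter_of_dominated_convergence
      (fun x => ‖τ x * (𝓕 φ) (x - y)‖)
    · have := h.continuous
      have := (𝓕 φ).continuous
      exact Eventually.of_forall fun σ => Continuous.aestronglyMeasurable (by fun_prop)
    · filter_upwards [self_mem_nhdsWithin] with σ hσ
      filter_upwards [ae_restrict_mem measurableSet_Ioi] with x hx
      have hσ' : (0 : ℝ) < σ := hσ
      have hx' : (0 : ℝ) < x := hx
      have e : ‖Complex.exp (-((σ : ℂ) * (x : ℂ)))‖ ≤ 1 := by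
        rw [Complex.norm_exp]
        simpa using (mul_pos hσ' hx').le
      rw [mul_right_comm, norm_mul _ (Complex.exp _)]
      exact mul_le_of_le_one_right (norm_nonneg _) e
    · exact (ik_int3 h _ y).norm.integrableOn
    · refine Eventually.of_forall fun x => ?_
      have c : Continuous fun σ : ℝ => τ x *
        Complex.exp (-((σ : ℂ) * (x : ℂ))) * (𝓕 φ) (x - y) := by fun_prop
      have := c.tendsto 0
      simp only [Complex.ofReal_zero, zero_mul, neg_zero, Complex.exp_zero, mul_one] at this
      exact this.mono_left nhdsWithin_le_nhds
  have hr : ContinuousOn (fun σ : ℝ => ∫ v : ℝ, φ v *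
      Complex.exp ((2 * Real.pi * v * y : ℝ) * Complex.I) *
        F (σ + (2 * Real.pi * v : ℝ) * Complex.I)) (Ici 0) := by
    apply continuousOn_integral_of_compact_support (k := tsupport φ) hφ
    · have := φ.continuous
      simp only [Function.uncurry_def]
      apply ContinuousOn.mul
      · exact Continuous.continuousOn (by fun_prop)
      · apply hFc.comp
        · exact Continuous.continuousOn (by fun_prop)
        · rintro ⟨σ, v⟩ hp
          simpa using hp
    · intro σ v _ hv
      rw [image_eq_zero_of_notMem_tsupport hv]
      simp
  have hr' := (hr 0 self_mem_Ici).mono_left (nhdsWithin_mono 0 Ioi_subset_Ici_self)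
  simp only [Complex.ofReal_zero, zero_add] at hr'
  refine tendsto_nhds_unique (hl.congr' ?_) hr'
  filter_upwards [self_mem_nhdsWithin] with σ hσ
  exact ik_fub h hF φ y hσ

lemma ik_lim {τ : ℝ → ℂ} {K : NNReal} (h : LipschitzWith K τ) {F : ℂ → ℂ}
    (hFc : ContinuousOn F {s : ℂ | 0 ≤ s.re})
    (hF : ∀ s : ℂ, 0 < s.re → F s = Laplace τ s) (φ : 𝓢(ℝ, ℂ)) (hφ : HasCompactSupport φ) :
    Tendsto (fun y : ℝ => ∫ x in Ioi (0 : ℝ), τ x * (𝓕 φ) (x - y)) atTop (nhds 0) := by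
  have := (Real.zero_at_infty_fourier
    (fun v : ℝ => φ v * F ((2 * Real.pi * v : ℝ) * Complex.I))).comp
    (tendsto_neg_atTop_atBot.mono_right atBot_le_cocompact)
  refine this.congr fun y => ?_
  rw [ik_id h hFc hF φ hφ, Function.comp_apply, Real.fourier_real_eq_integral_exp_smul]
  congr 1
  ext v
  rw [smul_eq_mul, show -2 * Real.pi * v * -y = 2 * Real.pi * v * y by ring]
  ring

lemma ik_tail (ψ : 𝓢(ℝ, ℂ)) :
    Tendsto (fun y : ℝ => ∫ x in Iic (0 : ℝ), ψ (x - y)) atTop (nhds 0) := by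
  have h := tendsto_setIntegral_of_antitone (μ := volume) (f := ψ) (s := fun y : ℝ => Iic (-y))
    (fun _ => measurableSet_Iic) (fun a b hab => Iic_subset_Iic.2 (neg_le_neg hab))
    ⟨0, ψ.integrable.integrableOn⟩
  have e : (⋂ y : ℝ, Iic (-y)) = ∅ := by
    ext x
    simp only [mem_iInter, mem_Iic, mem_empty_iff_false, iff_false, not_forall, not_le]
    exact ⟨-x + 1, by linarith⟩
  rw [e, setIntegral_empty] at h
  refine h.congr fun y => ?_
  rw [← integral_indicator measurableSet_Iic, ← integral_indicator measurableSet_Iic,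
    ← integral_sub_right_eq_self _ y]
  congr 1
  ext x
  simp [indicator]

lemma ik_main {τ : ℝ → ℂ} {K : NNReal} (h : LipschitzWith K τ)
    (h0 : ∀ x ≤ 0, τ x = τ 0) {F : ℂ → ℂ}
    (hFc : ContinuousOn F {s : ℂ | 0 ≤ s.re})
    (hF : ∀ s : ℂ, 0 < s.re → F s = Laplace τ s) (φ : 𝓢(ℝ, ℂ)) (hφ : HasCompactSupport φ)
    (hφ0 : φ 0 = 1) {ε : ℝ} (hε : 0 < ε) :
    ∀ᶠ y in atTop, ‖τ y‖ ≤ K * (∫ u : ℝ, ‖u‖ ^ 1 * ‖(𝓕 φ) u‖) + ε := by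
  have hone : ∫ u : ℝ, (𝓕 φ) u = 1 := by
    have e : 𝓕⁻ (𝓕 φ) = φ := FourierTransform.fourierInv_fourier_eq φ
    have e2 : (𝓕⁻ (𝓕 φ)) 0 = 1 := by rw [e, hφ0]
    rw [fourierInv_coe, Real.fourierInv_eq'] at e2
    simpa using e2
  have hT : Tendsto (fun y : ℝ => (∫ x in Ioi (0 : ℝ), τ x * (𝓕 φ) (x - y)) +
      τ 0 * ∫ x in Iic (0 : ℝ), (𝓕 φ) (x - y)) atTop (nhds 0) := by
    simpa using (ik_lim h hFc hF φ hφ).add ((ik_tail (𝓕 φ)).const_mul (τ 0))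
  filter_upwards [(tendsto_zero_iff_norm_tendsto_zero.1 hT).eventually (ge_mem_nhds hε)] with y hy
  have e1 : (∫ x in Ioi (0 : ℝ), τ x * (𝓕 φ) (x - y)) +
      τ 0 * ∫ x in Iic (0 : ℝ), (𝓕 φ) (x - y) = ∫ u : ℝ, τ (u + y) * (𝓕 φ) u := by
    have : τ 0 * ∫ x in Iic (0 : ℝ), (𝓕 φ) (x - y) =
        ∫ x in Iic (0 : ℝ), τ x * (𝓕 φ) (x - y) := by
      rw [← integral_const_mul]
      refine setIntegral_congr_fun measurableSet_Iic fun x hx => ?_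
      simp only [h0 x hx]
    rw [this, add_comm, intervalIntegral.integral_Iic_add_Ioi
      (ik_int3 h _ y).integrableOn (ik_int3 h _ y).integrableOn,
      ← integral_sub_right_eq_self (fun u : ℝ => τ (u + y) * (𝓕 φ : 𝓢(ℝ, ℂ)) u) y]
    simp
  rw [e1] at hy
  have e2 : τ y = (∫ u : ℝ, τ (u + y) * (𝓕 φ) u) +
      ∫ u : ℝ, (τ y - τ (u + y)) * (𝓕 φ) u := by
    rw [← integral_add (ik_int2 h _ y)]
    · have : ∀ u : ℝ, τ (u + y) * (𝓕 φ) u + (τ y - τ (u + y)) * (𝓕 φ) u = τ y * (𝓕 φ) u :=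
        fun u => by ring
      simp only [this]
      rw [integral_const_mul, hone, mul_one]
    · have := ((𝓕 φ).integrable (μ := volume)).const_mul (τ y) |>.sub (ik_int2 h (𝓕 φ) y)
      refine this.congr (Eventually.of_forall fun u => ?_)
      simp only [Pi.sub_apply]
      ring
  have e3 : ‖∫ u : ℝ, (τ y - τ (u + y)) * (𝓕 φ) u‖ ≤
      K * (∫ u : ℝ, ‖u‖ ^ 1 * ‖(𝓕 φ) u‖) := by
    rw [← integral_const_mul]
    refine norm_integral_le_of_norm_le (((𝓕 φ).integrable_pow_mul volume 1).const_mul _)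
      (Eventually.of_forall fun u => ?_)
    have := h.dist_le_mul y (u + y)
    rw [dist_eq_norm, Real.dist_eq, show y - (u + y) = -u by ring, abs_neg] at this
    rw [norm_mul, pow_one, ← mul_assoc, Real.norm_eq_abs]
    exact mul_le_mul_of_nonneg_right this (norm_nonneg _)
  have e4 := norm_add_le (∫ u : ℝ, τ (u + y) * (𝓕 φ) u) (∫ u : ℝ, (τ y - τ (u + y)) * (𝓕 φ) u)
  rw [← e2] at e4
  linarith

lemma ik_scale (τ : ℝ → ℂ) {l : ℝ} (hl : 0 < l) (s : ℂ) :
    Laplace (fun x => τ (l⁻¹ * x)) s = l * Laplace τ (l * s) := by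
  have := integral_comp_mul_left_Ioi
    (fun x : ℝ => τ x * Complex.exp (-((l * s) * (x : ℂ)))) 0 (inv_pos.2 hl)
  rw [mul_zero, inv_inv, Complex.real_smul] at this
  rw [Laplace, Laplace, ← this]
  congr 1
  ext x
  have hl' : (l : ℂ) ≠ 0 := by exact_mod_cast hl.ne'
  congr 3
  push_cast
  field_simp

lemma ik_phi : ∃ φ : 𝓢(ℝ, ℂ), HasCompactSupport φ ∧ φ 0 = 1 := by
  let b : ContDiffBump (0 : ℝ) := ⟨1, 2, one_pos, by norm_num⟩
  have hc : HasCompactSupport (fun x : ℝ => ((b x : ℝ) : ℂ)) :=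
    b.hasCompactSupport.comp_left (g := fun x : ℝ => (x : ℂ)) (by simp)
  have hs : ContDiff ℝ ((⊤ : ℕ∞) : WithTop ℕ∞) (fun x : ℝ => ((b x : ℝ) : ℂ)) :=
    Complex.ofRealCLM.contDiff.comp b.contDiff
  refine ⟨hc.toSchwartzMap hs, hc, ?_⟩
  change ((b 0 : ℝ) : ℂ) = 1
  rw [b.one_of_mem_closedBall (by simp [b])]
  simp

/-- The Ingham–Karamata theorem: if `τ` is Lipschitz on `[0,∞)` and its Laplace
transform extends analytically to an open set containing the closed half-plane
`{Re s ≥ 0}`, then `τ(x) → 0` as `x → ∞`. -/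
theorem ingham_karamata
    (τ : ℝ → ℂ) (K : NNReal) (hlip : LipschitzOnWith K τ (Set.Ici 0))
    (Ω : Set ℂ) (hΩopen : IsOpen Ω) (hΩ : {s : ℂ | 0 ≤ s.re} ⊆ Ω)
    (F : ℂ → ℂ) (hF : DifferentiableOn ℂ F Ω)
    (hFeq : ∀ s ∈ Ω, 0 < s.re → F s = Laplace τ s) :
    Tendsto τ atTop (nhds 0) := by
  obtain ⟨φ, hφ, hφ0⟩ := ik_phi
  set C : ℝ := ∫ u : ℝ, ‖u‖ ^ 1 * ‖(𝓕 φ) u‖ with hC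
  have hC0 : 0 ≤ C := integral_nonneg fun u => by positivity
  rw [tendsto_zero_iff_norm_tendsto_zero]
  -- the extension of `τ` to the real line, constant on the negative axis
  set t : ℝ → ℂ := fun x => τ (max x 0) with ht
  have htl : LipschitzWith K t := by
    refine LipschitzWith.of_dist_le_mul fun x y => ?_
    refine (hlip.dist_le_mul _ (le_max_right x 0) _ (le_max_right y 0)).trans ?_
    refine mul_le_mul_of_nonneg_left ?_ K.2
    rw [Real.dist_eq, Real.dist_eq]
    exact abs_max_sub_max_le_abs x y 0
  have hLap : ∀ s, Laplace t s = Laplace τ s := by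
    intro s
    refine setIntegral_congr_fun measurableSet_Ioi fun x hx => ?_
    have hx' : (0 : ℝ) < x := hx
    simp only [ht, max_eq_left hx'.le]
  have hFc : ContinuousOn F {s : ℂ | 0 ≤ s.re} := hF.continuousOn.mono hΩ
  rw [Metric.tendsto_nhds]
  intro ε hε
  -- scale so that the Lipschitz constant is small
  obtain ⟨n, hn⟩ := exists_nat_gt (K * C / (ε / 2))
  set l : ℝ := n + 1 with hl
  have hl0 : 0 < l := by positivity
  have hsmall : K / l * C ≤ ε / 2 := by
    rw [div_mul_eq_mul_div, div_le_iff₀ hl0]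
    rw [div_lt_iff₀ (by positivity)] at hn
    nlinarith
  set li : NNReal := ⟨l⁻¹, by positivity⟩ with hli
  have hsl : LipschitzWith (K * li) (fun x => t (l⁻¹ * x)) := by
    refine LipschitzWith.of_dist_le_mul fun x y => ?_
    refine (htl.dist_le_mul _ _).trans ?_
    rw [Real.dist_eq, Real.dist_eq, ← mul_sub, abs_mul, abs_of_pos (inv_pos.2 hl0), ← mul_assoc]
    rfl
  have hmain := ik_main hsl (F := fun s => l * F (l * s)) ?_ ?_ ?_ φ hφ hφ0
    (ε := ε / 4) (by positivity)
  · have hmul : Tendsto (fun y : ℝ => l * y) atTop atTop := tendsto_id.const_mul_atTop hl0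
    filter_upwards [hmul.eventually hmain, eventually_ge_atTop 0] with y hy hy0
    have e : t (l⁻¹ * (l * y)) = τ y := by
      rw [inv_mul_cancel_left₀ hl0.ne']
      simp only [ht, max_eq_left hy0]
    rw [e, ← hC] at hy
    have e2 : ((K * li : NNReal) : ℝ) = K / l := by
      rw [div_eq_mul_inv]; rfl
    rw [e2] at hy
    rw [Real.dist_eq, sub_zero, abs_of_nonneg (norm_nonneg _)]
    linarith
  · intro x hx
    have : l⁻¹ * x ≤ 0 := mul_nonpos_of_nonneg_of_nonpos (by positivity) hx
    simp [ht, this]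
  · refine continuousOn_const.mul (hFc.comp (by fun_prop) fun s hs => ?_)
    have hs' : 0 ≤ s.re := hs
    simpa using mul_nonneg hl0.le hs'
  · intro s hs
    have h1 : 0 < ((l : ℂ) * s).re := by simpa using mul_pos hl0 hs
    rw [ik_scale t hl0, hLap, hFeq _ (hΩ h1.le) h1]
end

section
/- Let ρ : [0,∞) → (0,∞) be any function with ρ(x) → 0 as x → ∞. Then there exists τ ∈ C¹[0,∞) with τ'(x) → 0 as x → ∞, and an entire function F with F(s) = L{τ;s} for all s with Re s > 0, such that limsup_{x→∞} |τ(x)|/ρ(x) = ∞. -/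
open Filter Set MeasureTheory

/-- A modulated Gaussian centred at `X`. -/
noncomputable def gg (B X : ℝ) (x : ℝ) : ℂ :=
  Complex.exp (-((B / X : ℝ) : ℂ) * (x : ℂ) ^ 2
    + (2 * (B : ℂ) + 4 * (B : ℂ) * Complex.I) * (x : ℂ) + (-((B * X : ℝ) : ℂ)))

/-- The derivative of `gg`. -/
noncomputable def gg' (B X : ℝ) (x : ℝ) : ℂ :=
  gg B X x * (-((B / X : ℝ) : ℂ) * (2 * (x : ℂ)) + (2 * (B : ℂ) + 4 * (B : ℂ) * Complex.I))

lemma gg_mul_exp (B X : ℝ) (s : ℂ) (x : ℝ) :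
    gg B X x * Complex.exp (-(s * (x : ℂ))) =
    Complex.exp (-((B / X : ℝ) : ℂ) * (x : ℂ) ^ 2
    + (2 * (B : ℂ) + 4 * (B : ℂ) * Complex.I - s) * (x : ℂ) + (-((B * X : ℝ) : ℂ))) := by
  rw [gg, ← Complex.exp_add]
  congr 1
  ring

lemma norm_gg_mul_exp (B X : ℝ) (s : ℂ) (x : ℝ) :
    ‖gg B X x * Complex.exp (-(s * (x : ℂ)))‖ =
      Real.exp (-(B / X) * x ^ 2 + (2 * B - s.re) * x - B * X) := by
  rw [gg_mul_exp, Complex.norm_exp]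
  congr 1
  have h1 : (x : ℂ) ^ 2 = ((x ^ 2 : ℝ) : ℂ) := by push_cast; ring
  rw [h1]
  simp only [Complex.add_re, Complex.neg_re, Complex.mul_re, Complex.ofReal_re, Complex.ofReal_im,
    Complex.sub_re, Complex.neg_im, Complex.I_re, Complex.I_im, Complex.mul_im]
  norm_num
  ring

lemma norm_gg {B X : ℝ} (hX : 1 ≤ X) (x : ℝ) :
    ‖gg B X x‖ = Real.exp (-(B / X) * (x - X) ^ 2) := by
  have h := norm_gg_mul_exp B X 0 x
  have hX0 : X ≠ 0 := by positivity
  simp only [zero_mul, neg_zero, Complex.exp_zero, mul_one] at h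
  rw [h]
  congr 1
  simp
  field_simp
  ring

lemma norm_gg_le_one {B X : ℝ} (hB : 1 ≤ B) (hX : 1 ≤ X) (x : ℝ) : ‖gg B X x‖ ≤ 1 := by
  rw [norm_gg hX, Real.exp_le_one_iff]
  have : 0 ≤ B / X * (x - X) ^ 2 := by positivity
  linarith

lemma continuous_gg (B X : ℝ) : Continuous (gg B X) := by
  unfold gg; fun_prop

lemma continuous_gg' (B X : ℝ) : Continuous (gg' B X) := by
  unfold gg'
  have := continuous_gg B X
  fun_prop

lemma integrable_gg {B X : ℝ} (hB : 1 ≤ B) (hX : 1 ≤ X) (s : ℂ) :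
    Integrable (fun x : ℝ => gg B X x * Complex.exp (-(s * (x : ℂ)))) := by
  simp only [gg_mul_exp]
  apply integrable_cexp_quadratic
  simp only [Complex.ofReal_re]
  positivity

lemma hasDerivAt_gg (B X x : ℝ) : HasDerivAt (gg B X) (gg' B X x) x := by
  have h0 : HasDerivAt (fun x : ℝ => (x : ℂ)) 1 x := Complex.ofRealCLM.hasDerivAt
  have h := (((h0.pow 2).const_mul (-((B / X : ℝ) : ℂ))).add
    (h0.const_mul (2 * (B : ℂ) + 4 * (B : ℂ) * Complex.I))).add_const (-((B * X : ℝ) : ℂ))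
  have h2 := h.cexp
  convert! h2 using 1
  simp [gg', gg]

lemma norm_gg'_le {B X : ℝ} (hB : 1 ≤ B) (hX : 1 ≤ X) (x : ℝ) :
    ‖gg' B X x‖ ≤ 2 * (B / X) * (|x - X| ^ (1 : ℝ) * Real.exp (-(B / X) * (x - X) ^ 2))
      + 4 * B * (|x - X| ^ (0 : ℝ) * Real.exp (-(B / X) * (x - X) ^ 2)) := by
  rw [gg', norm_mul, norm_gg hX, Real.rpow_one, Real.rpow_zero]
  have hX0 : X ≠ 0 := by positivity
  have h : (-((B / X : ℝ) : ℂ) * (2 * (x : ℂ)) + (2 * (B : ℂ) + 4 * (B : ℂ) * Complex.I))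
      = ((-(2 * (B / X) * (x - X)) : ℝ) : ℂ) + ((4 * B : ℝ) : ℂ) * Complex.I := by
    have : (X : ℂ) ≠ 0 := by exact_mod_cast hX0
    push_cast
    field_simp
    ring
  have h3 : ‖(-((B / X : ℝ) : ℂ) * (2 * (x : ℂ)) + (2 * (B : ℂ) + 4 * (B : ℂ) * Complex.I))‖
      ≤ 2 * (B / X) * |x - X| + 4 * B := by
    rw [h]
    refine (norm_add_le _ _).trans ?_
    rw [norm_mul, Complex.norm_I, Complex.norm_real, Complex.norm_real, Real.norm_eq_abs,
      Real.norm_eq_abs, abs_neg, abs_mul, abs_of_nonneg (by positivity : 0 ≤ 2 * (B / X)),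
      abs_of_nonneg (by positivity : 0 ≤ 4 * B), mul_one]
  have := mul_le_mul_of_nonneg_left h3 (Real.exp_nonneg (-(B / X) * (x - X) ^ 2))
  refine this.trans (le_of_eq ?_)
  ring

lemma norm_gg'_le' {B X : ℝ} (hB : 1 ≤ B) (hX : 1 ≤ X) (x : ℝ) :
    ‖gg' B X x‖ ≤ 8 * B := by
  refine (norm_gg'_le hB hX x).trans ?_
  rw [Real.rpow_one, Real.rpow_zero, one_mul]
  set y := |x - X| with hy
  have hy2 : (x - X) ^ 2 = y ^ 2 := (sq_abs _).symm
  rw [hy2]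
  set d := B / X with hd
  have hd0 : 0 < d := by positivity
  have hdB : d ≤ B := div_le_self (by linarith) hX
  have h1 : Real.exp (-d * y ^ 2) ≤ 1 := by
    rw [Real.exp_le_one_iff]; nlinarith [sq_nonneg y]
  have h2 : d * y ^ 2 * Real.exp (-d * y ^ 2) ≤ 1 := by
    have h3 := Real.add_one_le_exp (d * y ^ 2)
    have h4 : Real.exp (d * y ^ 2) * Real.exp (-d * y ^ 2) = 1 := by
      rw [← Real.exp_add]; simp
    have := mul_le_mul_of_nonneg_right h3 (Real.exp_nonneg (-d * y ^ 2))
    nlinarith [Real.exp_nonneg (-d * y ^ 2)]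
  have h5 : 2 * y ≤ 1 + y ^ 2 := by nlinarith [sq_nonneg (y - 1)]
  have h6 := mul_le_mul_of_nonneg_left h5
    (mul_nonneg hd0.le (Real.exp_nonneg (-d * y ^ 2)))
  nlinarith [mul_le_mul_of_nonneg_left h1 hd0.le, mul_le_mul_of_nonneg_left h1 (by linarith : 0 ≤ B)]

lemma tendsto_gg' {B X : ℝ} (hB : 1 ≤ B) (hX : 1 ≤ X) :
    Tendsto (gg' B X) atTop (nhds 0) := by
  have hd : 0 < B / X := by positivity
  have hc : Tendsto (fun x : ℝ => x - X) atTop (cocompact ℝ) :=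
    (tendsto_atTop_add_const_right atTop (-X) tendsto_id).mono_right atTop_le_cocompact
  have h1 := (tendsto_rpow_abs_mul_exp_neg_mul_sq_cocompact hd 1).comp hc
  have h0 := (tendsto_rpow_abs_mul_exp_neg_mul_sq_cocompact hd 0).comp hc
  have h := (h1.const_mul (2 * (B / X))).add (h0.const_mul (4 * B))
  simp only [mul_zero, add_zero] at h
  exact squeeze_zero_norm (fun x => norm_gg'_le hB hX x) h

lemma laplace_norm_le {B X : ℝ} (hB : 1 ≤ B) (hX : 1 ≤ X) {s : ℂ} {σ : ℝ} (hs : ‖s‖ ≤ σ) :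
    ‖Laplace (gg B X) s‖ ≤
      ∫ x in Set.Ioi (0 : ℝ), ‖gg B X x * Complex.exp (-(((-σ : ℝ) : ℂ) * (x : ℂ)))‖ := by
  refine norm_integral_le_of_norm_le (integrable_gg hB hX _).norm.integrableOn ?_
  refine (ae_restrict_iff' measurableSet_Ioi).2 (Eventually.of_forall fun x hx => ?_)
  rw [norm_gg_mul_exp, norm_gg_mul_exp, Real.exp_le_exp]
  have : -σ ≤ s.re := by
    have := Complex.abs_re_le_norm s
    have := neg_abs_le s.re
    linarith
  have hx0 : 0 < x := hx
  simp only [Complex.ofReal_re]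
  nlinarith

lemma differentiable_laplace {B X : ℝ} (hB : 1 ≤ B) (hX : 1 ≤ X) :
    Differentiable ℂ (Laplace (gg B X)) := by
  intro s
  have hcont : ∀ s : ℂ, Continuous (fun x : ℝ => gg B X x * Complex.exp (-(s * (x : ℂ)))) := by
    intro s
    have := continuous_gg B X
    fun_prop
  have key := hasDerivAt_integral_of_dominated_loc_of_deriv_le (𝕜 := ℂ)
    (μ := volume.restrict (Set.Ioi (0:ℝ))) (x₀ := s) (s := Metric.ball s 1)
    (F := fun s (x : ℝ) => gg B X x * Complex.exp (-(s * (x : ℂ))))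
    (F' := fun s (x : ℝ) => gg B X x * (Complex.exp (-(s * (x : ℂ))) * (-(x : ℂ))))
    (bound := fun x : ℝ => ‖gg B X x * Complex.exp (-(((s.re - 2 : ℝ) : ℂ) * (x : ℂ)))‖)
    (Metric.ball_mem_nhds s one_pos)
    (Eventually.of_forall fun z => (hcont z).aestronglyMeasurable)
    (integrable_gg hB hX s).integrableOn
    (by
      have : Continuous (fun x : ℝ => gg B X x * (Complex.exp (-(s * (x : ℂ))) * (-(x : ℂ)))) := by
        have := continuous_gg B X
        fun_prop
      exact this.aestronglyMeasurable)
    (by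
      refine (ae_restrict_iff' measurableSet_Ioi).2 (Eventually.of_forall fun x hx z hz => ?_)
      have hx0 : 0 < x := hx
      rw [← mul_assoc, norm_mul, norm_gg_mul_exp, norm_gg_mul_exp, norm_neg, Complex.norm_real,
        Real.norm_eq_abs, abs_of_pos hx0]
      have h1 : x ≤ Real.exp x := by linarith [Real.add_one_le_exp x]
      refine (mul_le_mul_of_nonneg_left h1 (Real.exp_nonneg _)).trans ?_
      rw [← Real.exp_add, Real.exp_le_exp]
      have h2 : s.re - 1 ≤ z.re := by
        have h3 := Complex.abs_re_le_norm (z - s)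
        rw [Metric.mem_ball, dist_eq_norm] at hz
        have h4 := neg_abs_le (z - s).re
        rw [Complex.sub_re] at h3 h4
        linarith
      simp only [Complex.ofReal_re]
      nlinarith)
    (integrable_gg hB hX _).norm.integrableOn
    (Eventually.of_forall fun x z _ => by
      have h0 : HasDerivAt (fun z : ℂ => -(z * (x : ℂ))) (-(x : ℂ)) z := by
        simpa using ((hasDerivAt_id z).mul_const (x : ℂ)).fun_neg
      exact h0.cexp.const_mul _)
  exact key.2.differentiableAt

lemma laplace_bound {B X : ℝ} (hB : 1 ≤ B) (hX : 1 ≤ X) {s : ℂ} (hs : ‖s‖ ≤ B) :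
    ‖Laplace (gg B X) s‖ ≤ 5 := by
  have hX0 : 0 < X := by linarith
  have hB0 : 0 < B := by linarith
  have hd : 0 < B / X := by positivity
  have hre := (Complex.abs_re_le_norm s).trans hs
  have him := (Complex.abs_im_le_norm s).trans hs
  rw [abs_le] at hre him
  have hsplit := integral_add_compl (measurableSet_Ioi (a := (0:ℝ))) (integrable_gg hB hX s)
  have hL : Laplace (gg B X) s = (∫ x : ℝ, gg B X x * Complex.exp (-(s * (x : ℂ))))
      - ∫ x in Set.Iic (0:ℝ), gg B X x * Complex.exp (-(s * (x : ℂ))) := by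
    rw [← hsplit, Set.compl_Ioi, Laplace]; ring
  have h1 : ‖∫ x in Set.Iic (0:ℝ), gg B X x * Complex.exp (-(s * (x : ℂ)))‖ ≤ 1 := by
    have : ‖∫ x in Set.Iic (0:ℝ), gg B X x * Complex.exp (-(s * (x : ℂ)))‖
        ≤ ∫ x in Set.Iic (0:ℝ), Real.exp (1 * x) := by
      refine norm_integral_le_of_norm_le (integrableOn_exp_mul_Iic one_pos 0) ?_
      refine (ae_restrict_iff' measurableSet_Iic).2 (Eventually.of_forall fun x hx => ?_)
      rw [norm_gg_mul_exp, Real.exp_le_exp]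
      have hx0 : x ≤ 0 := hx
      have : 0 ≤ B / X * x ^ 2 := by positivity
      have : 0 < B * X := by positivity
      nlinarith
    rw [integral_exp_mul_Iic one_pos] at this
    simpa using this
  have h2 : ‖∫ x : ℝ, gg B X x * Complex.exp (-(s * (x : ℂ)))‖ ≤ 4 := by
    simp only [gg_mul_exp]
    rw [integral_cexp_quadratic (by simpa using hd), norm_mul, neg_neg]
    have e1 : ((Real.pi : ℂ) / ((B / X : ℝ) : ℂ)) = ((Real.pi / (B / X) : ℝ) : ℂ) := by
      push_cast; rfl
    have e2 : ‖((Real.pi : ℂ) / ((B / X : ℝ) : ℂ)) ^ (1 / 2 : ℂ)‖ ≤ 4 * X := by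
      rw [e1, Complex.norm_cpow_eq_rpow_re_of_pos (by positivity)]
      have : ((1:ℂ) / 2).re = 1 / 2 := by norm_num
      rw [this, ← Real.sqrt_eq_rpow]
      apply Real.sqrt_le_iff.2 ⟨by positivity, ?_⟩
      rw [div_div_eq_mul_div, div_le_iff₀ hB0]
      have : Real.pi * X ≤ 4 * X := by nlinarith [Real.pi_le_four]
      have : 4 * X ≤ (4 * X) ^ 2 := by nlinarith
      nlinarith
    have e3 : ‖Complex.exp (-((B * X : ℝ) : ℂ) - (2 * (B : ℂ) + 4 * (B : ℂ) * Complex.I - s) ^ 2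
        / (4 * -((B / X : ℝ) : ℂ)))‖ ≤ Real.exp (-X) := by
      rw [Complex.norm_exp, Real.exp_le_exp]
      have : (2 * (B : ℂ) + 4 * (B : ℂ) * Complex.I - s) ^ 2
        / (4 * -((B / X : ℝ) : ℂ)) = (-(X / (4 * B)) : ℝ) *
          (2 * (B : ℂ) + 4 * (B : ℂ) * Complex.I - s) ^ 2 := by
        have : (B : ℂ) ≠ 0 := by exact_mod_cast hB0.ne'
        have : (X : ℂ) ≠ 0 := by exact_mod_cast hX0.ne'
        push_cast
        field_simp
      rw [this, Complex.sub_re, Complex.re_ofReal_mul, sq, Complex.mul_re]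
      simp only [Complex.sub_re, Complex.add_re, Complex.sub_im, Complex.add_im, Complex.neg_re,
        Complex.ofReal_re, Complex.mul_re, Complex.mul_im, Complex.I_re, Complex.I_im,
        Complex.ofReal_im]
      norm_num
      have h5 : (2 * B - s.re) * (2 * B - s.re) - (4 * B - s.im) * (4 * B - s.im) ≤ 0 := by
        nlinarith
      have h6 : 0 ≤ X / (4 * B) := by positivity
      nlinarith [mul_nonneg h6 (neg_nonneg.2 h5)]
    refine (mul_le_mul e2 e3 (norm_nonneg _) (by positivity)).trans ?_
    have h4 : X ≤ Real.exp X := by linarith [Real.add_one_le_exp X]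
    have h7 : Real.exp X * Real.exp (-X) = 1 := by rw [← Real.exp_add]; simp
    nlinarith [mul_le_mul_of_nonneg_right h4 (Real.exp_nonneg (-X))]
  rw [hL]
  refine (norm_sub_le _ _).trans ?_
  linarith

lemma norm_gg_far {B X y : ℝ} (hB : 1 ≤ B) (hX : 1 ≤ X) (hy : 2 * X ≤ y) :
    ‖gg B X y‖ ≤ Real.exp (-(y / 2)) := by
  rw [norm_gg hX, Real.exp_le_exp]
  have hX0 : 0 < X := by linarith
  have h1 : X * (y / 2) ≤ (y - X) ^ 2 := by nlinarith
  have h2 : y / 2 ≤ (y - X) ^ 2 / X := by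
    rw [le_div_iff₀ hX0]; linarith
  have h3 : B / X * (y - X) ^ 2 = B * ((y - X) ^ 2 / X) := by ring
  have h4 : 0 ≤ (y - X) ^ 2 / X := by positivity
  nlinarith

/-- Absence of remainders in the Ingham–Karamata theorem: for any positive `ρ`
tending to `0`, there is `τ ∈ C¹[0,∞)` with `τ'(x) → 0`, whose Laplace transform
extends to an entire function, but with `limsup_{x→∞} |τ(x)|/ρ(x) = ∞`. -/
theorem no_remainder_ingham_karamata
    (ρ : ℝ → ℝ) (hρpos : ∀ x : ℝ, 0 ≤ x → 0 < ρ x)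
    (hρ0 : Tendsto ρ atTop (nhds 0)) :
    ∃ τ τ' : ℝ → ℂ,
      (∀ x ∈ Set.Ici (0 : ℝ), HasDerivWithinAt τ (τ' x) (Set.Ici 0) x) ∧
      ContinuousOn τ' (Set.Ici 0) ∧
      Tendsto τ' atTop (nhds 0) ∧
      (∃ F : ℂ → ℂ, Differentiable ℂ F ∧ ∀ s : ℂ, 0 < s.re → F s = Laplace τ s) ∧
      (∀ C : ℝ, ∃ᶠ x in atTop, C < ‖τ x‖ / ρ x) := by

  -- choice of the centres
  have hP : ∀ n : ℕ, ∀ᶠ k : ℕ in atTop,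
      ρ ((2:ℝ) ^ k) < (1/4 : ℝ) ^ n / (4 * ((n:ℝ) + 1)) ∧
      Real.exp (-((2:ℝ) ^ k / 2)) < (1/4 : ℝ) ^ n / (4 * ((n:ℝ) + 1)) := by
    intro n
    have hpos : 0 < (1/4 : ℝ) ^ n / (4 * ((n:ℝ) + 1)) := by positivity
    have h2 : Tendsto (fun k : ℕ => (2:ℝ) ^ k) atTop atTop :=
      tendsto_pow_atTop_atTop_of_one_lt (by norm_num)
    have h3 := (hρ0.comp h2).eventually (gt_mem_nhds hpos)
    have h4 : Tendsto (fun k : ℕ => Real.exp (-((2:ℝ) ^ k / 2))) atTop (nhds 0) :=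
      Real.tendsto_exp_neg_atTop_nhds_zero.comp (h2.atTop_div_const (by norm_num))
    have h5 := h4.eventually (gt_mem_nhds hpos)
    filter_upwards [h3, h5] with k hk1 hk2 using ⟨hk1, hk2⟩
  obtain ⟨φ, hφ, hφP⟩ := extraction_forall_of_eventually hP
  set X : ℕ → ℝ := fun n => (2:ℝ) ^ (φ n) with hXdef
  set B : ℕ → ℝ := fun n => (n:ℝ) + 1 with hBdef
  set a : ℕ → ℝ := fun n => (1/4 : ℝ) ^ n with hadef
  have hX : ∀ n, 1 ≤ X n := fun n => one_le_pow₀ (by norm_num)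
  have hB : ∀ n, 1 ≤ B n := fun n => by simp [hBdef]
  have ha0 : ∀ n, 0 < a n := fun n => by positivity
  have hasum : Summable a := summable_geometric_of_lt_one (by norm_num) (by norm_num)
  have hX2 : ∀ m n, m < n → 2 * X m ≤ X n := by
    intro m n hmn
    have h1 : φ m + 1 ≤ φ n := hφ hmn
    calc 2 * X m = (2:ℝ) ^ (φ m + 1) := by rw [pow_succ]; simp only [hXdef]; ring
      _ ≤ X n := pow_le_pow_right₀ (by norm_num) h1
  have hnorma : ∀ n, ‖(a n : ℂ)‖ = a n := fun n => by
    rw [Complex.norm_real, Real.norm_eq_abs, abs_of_pos (ha0 n)]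
  have hu : Summable (fun n => a n * (8 * B n)) := by
    have h1 := summable_pow_mul_geometric_of_norm_lt_one 1 (r := (1/4 : ℝ)) (by norm_num)
    have h2 := (h1.mul_left 8).add (hasum.mul_left 8)
    refine h2.congr fun n => ?_
    simp only [hBdef, hadef]; ring
  have hgle : ∀ n x, ‖(a n : ℂ) * gg (B n) (X n) x‖ ≤ a n := by
    intro n x
    rw [norm_mul, hnorma]
    exact mul_le_of_le_one_right (ha0 n).le (norm_gg_le_one (hB n) (hX n) x)
  have hg'le : ∀ n x, ‖(a n : ℂ) * gg' (B n) (X n) x‖ ≤ a n * (8 * B n) := by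
    intro n x
    rw [norm_mul, hnorma]
    exact mul_le_mul_of_nonneg_left (norm_gg'_le' (hB n) (hX n) x) (ha0 n).le
  have hgsum : ∀ x, Summable (fun n => (a n : ℂ) * gg (B n) (X n) x) := fun x =>
    Summable.of_norm_bounded hasum fun n => hgle n x
  refine ⟨fun x => ∑' n, (a n : ℂ) * gg (B n) (X n) x,
    fun x => ∑' n, (a n : ℂ) * gg' (B n) (X n) x, ?_, ?_, ?_, ?_, ?_⟩
  · intro x _
    exact (hasDerivAt_tsum hu (fun n y => (hasDerivAt_gg (B n) (X n) y).const_mul (a n : ℂ))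
      hg'le (hgsum 0) x).hasDerivWithinAt
  · exact (continuous_tsum (fun n => (continuous_gg' (B n) (X n)).const_mul _) hu
      hg'le).continuousOn
  · have h := tendsto_tsum_of_dominated_convergence (𝓕 := atTop)
      (f := fun (x : ℝ) n => (a n : ℂ) * gg' (B n) (X n) x)
      (g := fun _ => 0) hu
      (fun n => by simpa using (tendsto_gg' (hB n) (hX n)).const_mul (a n : ℂ))
      (Eventually.of_forall fun x n => hg'le n x)
    simpa using h
  · refine ⟨fun s => ∑' n, (a n : ℂ) * Laplace (gg (B n) (X n)) s, ?_, ?_⟩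
    · intro s₀
      obtain ⟨N, hN⟩ := exists_nat_gt (‖s₀‖ + 1)
      set M : ℕ → ℝ := fun n => ∫ x in Set.Ioi (0 : ℝ),
        ‖gg (B n) (X n) x * Complex.exp (-(((-(‖s₀‖ + 1) : ℝ) : ℂ) * (x : ℂ)))‖ with hM
      set u : ℕ → ℝ := fun n => if n < N then a n * M n else a n * 5 with hudef
      have husum : Summable u := by
        rw [← summable_nat_add_iff N]
        refine ((summable_nat_add_iff N).2 (hasum.mul_right 5)).congr fun n => ?_
        simp [hudef]
      have hdiff := Complex.differentiableOn_tsum_of_summable_norm husum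
        (U := Metric.ball s₀ 1) (F := fun n s => (a n : ℂ) * Laplace (gg (B n) (X n)) s)
        (fun n => ((differentiable_laplace (hB n) (hX n)).const_mul _).differentiableOn)
        Metric.isOpen_ball
        (by
          intro n w hw
          have hw' : ‖w‖ ≤ ‖s₀‖ + 1 := by
            rw [Metric.mem_ball, dist_eq_norm] at hw
            have := norm_le_norm_add_norm_sub' w s₀
            linarith
          rw [norm_mul, hnorma]
          simp only [hudef]
          split_ifs with hn
          · exact mul_le_mul_of_nonneg_left (laplace_norm_le (hB n) (hX n) hw') (ha0 n).le
          · refine mul_le_mul_of_nonneg_left (laplace_bound (hB n) (hX n) ?_) (ha0 n).le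
            have : (N : ℝ) ≤ n := by exact_mod_cast not_lt.1 hn
            simp only [hBdef]
            linarith)
      exact hdiff.differentiableAt (Metric.ball_mem_nhds s₀ one_pos)
    · intro s hs
      have hint : ∀ n, Integrable (fun x : ℝ => (a n : ℂ) *
          (gg (B n) (X n) x * Complex.exp (-(s * (x : ℂ))))) (volume.restrict (Set.Ioi 0)) :=
        fun n => ((integrable_gg (hB n) (hX n) s).const_mul _).integrableOn
      have hexp : IntegrableOn (fun x : ℝ => Real.exp (-s.re * x)) (Set.Ioi 0) :=
        integrableOn_exp_mul_Ioi (by linarith) 0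
      have hsum : Summable (fun n => ∫ x in Set.Ioi (0:ℝ), ‖(a n : ℂ) *
          (gg (B n) (X n) x * Complex.exp (-(s * (x : ℂ))))‖) := by
        refine Summable.of_nonneg_of_le (fun n => integral_nonneg fun x => norm_nonneg _)
          (fun n => ?_) (hasum.mul_right (∫ x in Set.Ioi (0:ℝ), Real.exp (-s.re * x)))
        rw [← integral_const_mul]
        refine integral_mono (hint n).norm (hexp.const_mul _) fun x => ?_
        simp only
        rw [← mul_assoc, norm_mul]
        refine mul_le_mul (hgle n x) (le_of_eq ?_) (norm_nonneg _) (ha0 n).le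
        rw [Complex.norm_exp]
        simp
      have h := hasSum_integral_of_summable_integral_norm hint hsum
      have h1 : ∀ n, (∫ x in Set.Ioi (0:ℝ), (a n : ℂ) *
          (gg (B n) (X n) x * Complex.exp (-(s * (x : ℂ)))))
          = (a n : ℂ) * Laplace (gg (B n) (X n)) s := fun n => by
        rw [integral_const_mul, Laplace]
      simp only [h1] at h
      refine h.tsum_eq.trans ?_
      rw [Laplace]
      congr 1
      ext x
      rw [← tsum_mul_right]
      simp only [mul_assoc]
  · intro C
    have hlow : ∀ n, a n / 4 ≤ ‖∑' m, (a m : ℂ) * gg (B m) (X m) (X n)‖ := by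
      intro n
      have hs := (hgsum (X n)).sum_add_tsum_nat_add (n + 1)
      rw [Finset.sum_range_succ] at hs
      have hhead : ‖∑ m ∈ Finset.range n, (a m : ℂ) * gg (B m) (X m) (X n)‖ ≤ a n / 4 := by
        have h1 : ∀ m ∈ Finset.range n, ‖(a m : ℂ) * gg (B m) (X m) (X n)‖
            ≤ a n / (4 * ((n:ℝ) + 1)) := by
          intro m hm
          rw [norm_mul, hnorma]
          have ha1 : a m ≤ 1 := pow_le_one₀ (by norm_num) (by norm_num)
          have h2 := norm_gg_far (hB m) (hX m) (hX2 m n (Finset.mem_range.1 hm))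
          exact (mul_le_of_le_one_left (norm_nonneg _) ha1).trans (h2.trans (hφP n).2.le)
        refine (norm_sum_le_of_le _ h1).trans ?_
        rw [Finset.sum_const, Finset.card_range, nsmul_eq_mul, mul_div_assoc', div_le_div_iff₀
          (by positivity) (by norm_num)]
        nlinarith [ha0 n]
      have htail : ‖∑' m, (a (m + (n + 1)) : ℂ) * gg (B (m + (n + 1))) (X (m + (n + 1))) (X n)‖
          ≤ a n / 3 := by
        have hgeo : HasSum (fun m => a (m + (n + 1))) (a n / 3) := by
          have := (hasSum_geometric_of_lt_one (r := (1/4 : ℝ)) (by norm_num) (by norm_num)).mul_right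
            (a (n + 1))
          convert! this using 1
          · ext m; simp only [hadef]; rw [pow_add]
          · simp only [hadef]; rw [pow_succ]; ring
        exact tsum_of_norm_bounded hgeo fun m => hgle _ _
      have hmid : ‖(a n : ℂ) * gg (B n) (X n) (X n)‖ = a n := by
        rw [norm_mul, hnorma, norm_gg (hX n)]; simp
      rw [← hs]
      have t1 := norm_sub_le_norm_add
        (∑ m ∈ Finset.range n, (a m : ℂ) * gg (B m) (X m) (X n)
          + (a n : ℂ) * gg (B n) (X n) (X n))
        (∑' m, (a (m + (n + 1)) : ℂ) * gg (B (m + (n + 1))) (X (m + (n + 1))) (X n))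
      have t2 := norm_sub_le_norm_add ((a n : ℂ) * gg (B n) (X n) (X n))
        (∑ m ∈ Finset.range n, (a m : ℂ) * gg (B m) (X m) (X n))
      rw [add_comm ((a n : ℂ) * gg (B n) (X n) (X n))] at t2
      linarith [ha0 n]
    have hXtop : Tendsto X atTop atTop :=
      (tendsto_pow_atTop_atTop_of_one_lt (by norm_num)).comp hφ.tendsto_atTop
    have hev : ∀ᶠ n : ℕ in atTop, C < ‖∑' m, (a m : ℂ) * gg (B m) (X m) (X n)‖ / ρ (X n) := by
      filter_upwards [(tendsto_natCast_atTop_atTop (R := ℝ)).eventually_ge_atTop C] with n hn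
      have hρn : 0 < ρ (X n) := hρpos _ (by linarith [hX n])
      rw [lt_div_iff₀ hρn]
      have h1 : ρ (X n) < a n / (4 * ((n:ℝ) + 1)) := (hφP n).1
      rw [lt_div_iff₀ (by positivity)] at h1
      have h2 := hlow n
      have h3 : C * ρ (X n) ≤ n * ρ (X n) := mul_le_mul_of_nonneg_right hn hρn.le
      linarith
    exact hXtop.frequently hev.frequently
end

section
/- Let α < 0 and r > 0. For every τ ∈ V_{α,r} with associated extension F of its Laplace transform, and every ε > 0, there exists σ ∈ V_{-∞}, with entire extension G of its Laplace transform, such that sup_{x≥0}|τ'(x) − σ'(x)| + sup_{s∈R̄_{α,r}} |F(s) − G(s)| < ε. That is, V_{-∞} is dense in the Banach space V_{α,r}. -/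
open Filter Set MeasureTheory

/-- The closed rectangle `R̄_{α,r} = {s : α ≤ Re s ≤ 1, |Im s| ≤ r}`. -/
def Rbar (α r : ℝ) : Set ℂ := {s : ℂ | α ≤ s.re ∧ s.re ≤ 1 ∧ |s.im| ≤ r}

/-- The open rectangle `R_{α,r} = {s : α < Re s < 1, |Im s| < r}`. -/
def Ropen (α r : ℝ) : Set ℂ := {s : ℂ | α < s.re ∧ s.re < 1 ∧ |s.im| < r}

lemma rect_inv_integral (a b c d : ℝ) (s : ℂ) (ha : a < s.re) (hb : s.re < b)
    (hc : c < s.im) (hd : s.im < d) :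
    (∫ x : ℝ in a..b, ((x + c * Complex.I : ℂ) - s)⁻¹) -
      (∫ x : ℝ in a..b, ((x + d * Complex.I : ℂ) - s)⁻¹) +
      Complex.I • (∫ y : ℝ in c..d, ((b + y * Complex.I : ℂ) - s)⁻¹) -
      Complex.I • (∫ y : ℝ in c..d, ((a + y * Complex.I : ℂ) - s)⁻¹) =
      2 * Real.pi * Complex.I := by
  have key : ∀ (γ : ℝ → ℂ) (g v : ℂ) (u w : ℝ), g ≠ 0 → (∀ t, HasDerivAt γ v t) → v ≠ 0 →
      (∀ t ∈ Set.uIcc u w, g * (γ t - s) ∈ Complex.slitPlane) →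
      v * ∫ t in u..w, (γ t - s)⁻¹ = Complex.log (g * (γ w - s)) - Complex.log (g * (γ u - s)) := by
    intro γ g v u w hg hγ hv hsl
    rw [← intervalIntegral.integral_const_mul]
    refine intervalIntegral.integral_eq_sub_of_hasDerivAt
      (f := fun t => Complex.log (g * (γ t - s))) ?_ ?_
    · intro t ht
      have h1 : HasDerivAt (fun t => g * (γ t - s)) (g * v) t := ((hγ t).sub_const s).const_mul g
      have h2 := h1.clog_real (hsl t ht)
      have h3 : γ t - s ≠ 0 := by
        intro h
        have := hsl t ht
        rw [h] at this
        simp at this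
      rw [mul_div_mul_left _ _ hg, div_eq_mul_inv] at h2
      exact h2
    · apply ContinuousOn.intervalIntegrable
      apply ContinuousOn.mul continuousOn_const
      apply ContinuousOn.inv₀
      · exact fun t ht => ((hγ t).continuousAt.sub continuousAt_const).continuousWithinAt
      · intro t ht h
        have := hsl t ht
        rw [h] at this
        simp at this
  have hh : ∀ (e : ℝ), ∀ t : ℝ, HasDerivAt (fun x : ℝ => (x + e * Complex.I : ℂ)) 1 t := by
    intro e t
    exact (HasDerivAt.ofReal_comp (hasDerivAt_id t)).add_const _
  have hv : ∀ (e : ℝ), ∀ t : ℝ, HasDerivAt (fun y : ℝ => (e + y * Complex.I : ℂ)) Complex.I t := by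
    intro e t
    have := ((HasDerivAt.ofReal_comp (hasDerivAt_id t)).mul_const Complex.I).const_add (e : ℂ)
    simpa using this
  have k1 := key _ 1 1 a b one_ne_zero (hh c) one_ne_zero (by
    intro t ht; right; simp; intro h; linarith)
  have k2 := key _ 1 1 a b one_ne_zero (hh d) one_ne_zero (by
    intro t ht; right; simp; intro h; linarith)
  have k3 := key _ 1 Complex.I c d one_ne_zero (hv b) Complex.I_ne_zero (by
    intro t ht; left; simp; linarith)
  have k4 := key _ (-1) Complex.I c d (by simp) (hv a) Complex.I_ne_zero (by
    intro t ht; left; simp; linarith)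
  rw [one_mul] at k1 k2
  rw [k1, k2, smul_eq_mul, smul_eq_mul, k3, k4]
  have e1 : Complex.log (-1 * ((a + d * Complex.I : ℂ) - s)) =
      Complex.log (1 * ((a + d * Complex.I : ℂ) - s)) - Real.pi * Complex.I := by
    rw [neg_one_mul, one_mul, Complex.log, Complex.log, norm_neg,
      Complex.arg_neg_eq_arg_sub_pi_of_im_pos (by simp; linarith)]
    push_cast; ring
  have e2 : Complex.log (-1 * ((a + c * Complex.I : ℂ) - s)) =
      Complex.log (1 * ((a + c * Complex.I : ℂ) - s)) + Real.pi * Complex.I := by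
    rw [neg_one_mul, one_mul, Complex.log, Complex.log, norm_neg,
      Complex.arg_neg_eq_arg_add_pi_of_im_neg (by simp; linarith)]
    push_cast; ring
  rw [e1, e2]
  ring

lemma rect_cauchy (a b c d : ℝ) (s : ℂ) (D : ℂ → ℂ) (ha : a < s.re) (hb : s.re < b)
    (hc : c < s.im) (hd : s.im < d)
    (hD : ∀ z : ℂ, z.re ∈ Set.Icc a b → z.im ∈ Set.Icc c d → DifferentiableAt ℂ D z) :
    (∫ x : ℝ in a..b, D (x + c * Complex.I) * ((x + c * Complex.I : ℂ) - s)⁻¹) -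
      (∫ x : ℝ in a..b, D (x + d * Complex.I) * ((x + d * Complex.I : ℂ) - s)⁻¹) +
      Complex.I • (∫ y : ℝ in c..d, D (b + y * Complex.I) * ((b + y * Complex.I : ℂ) - s)⁻¹) -
      Complex.I • (∫ y : ℝ in c..d, D (a + y * Complex.I) * ((a + y * Complex.I : ℂ) - s)⁻¹) =
      2 * Real.pi * Complex.I * D s := by
  have hab : a ≤ b := by linarith
  have hcd : c ≤ d := by linarith
  have hDs := hD s ⟨ha.le, hb.le⟩ ⟨hc.le, hd.le⟩
  have h0 := Complex.integral_boundary_rect_eq_zero_of_differentiable_on_off_countable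
    (dslope D s) ⟨a, c⟩ ⟨b, d⟩ {s} (Set.countable_singleton s)
    (by
      intro z hz
      rw [Complex.mem_reProdIm] at hz
      simp only [Set.uIcc_of_le hab, Set.uIcc_of_le hcd] at hz
      by_cases hzs : z = s
      · rw [hzs]; exact (continuousAt_dslope_same.2 hDs).continuousWithinAt
      · exact ((continuousAt_dslope_of_ne hzs).2 (hD z hz.1 hz.2).continuousAt).continuousWithinAt)
    (by
      rintro z ⟨hz, hzs⟩
      rw [Complex.mem_reProdIm] at hz
      simp only [min_eq_left hab, max_eq_right hab, min_eq_left hcd, max_eq_right hcd] at hz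
      exact (differentiableAt_dslope_of_ne hzs).2
        (hD z (Set.Ioo_subset_Icc_self hz.1) (Set.Ioo_subset_Icc_self hz.2)))
  simp only at h0
  have h1 := rect_inv_integral a b c d s ha hb hc hd
  have key : ∀ (γ : ℝ → ℂ) (u w : ℝ), u ≤ w → Continuous γ → 
      (∀ t ∈ Set.Icc u w, γ t - s ≠ 0 ∧ (γ t).re ∈ Set.Icc a b ∧ (γ t).im ∈ Set.Icc c d) →
      ∫ t in u..w, D (γ t) * (γ t - s)⁻¹ =
        (∫ t in u..w, dslope D s (γ t)) + D s * ∫ t in u..w, (γ t - s)⁻¹ := by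
    intro γ u w huw hγ h
    rw [← Set.uIcc_of_le huw] at h
    have i1 : ContinuousOn (fun t => (γ t - s)⁻¹) (Set.uIcc u w) :=
      ContinuousOn.inv₀ (hγ.sub continuous_const).continuousOn fun t ht => (h t ht).1
    have i2 : ContinuousOn (fun t => D (γ t)) (Set.uIcc u w) := fun t ht =>
      ((hD _ (h t ht).2.1 (h t ht).2.2).continuousAt.comp hγ.continuousAt).continuousWithinAt
    have e : ∫ t in u..w, dslope D s (γ t) = 
        ∫ t in u..w, (D (γ t) * (γ t - s)⁻¹ - D s * (γ t - s)⁻¹) := by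
      apply intervalIntegral.integral_congr
      intro t ht
      simp only
      rw [dslope_of_ne _ (sub_ne_zero.1 (h t ht).1), slope_def_field]
      ring
    rw [e, intervalIntegral.integral_sub, intervalIntegral.integral_const_mul]
    · ring
    · exact (i2.mul i1).intervalIntegrable
    · exact (continuousOn_const.mul i1).intervalIntegrable
  have ne1 : ∀ z : ℂ, z.re ≠ s.re → z - s ≠ 0 := fun z h h' => h (by rw [sub_eq_zero.1 h'])
  have ne2 : ∀ z : ℂ, z.im ≠ s.im → z - s ≠ 0 := fun z h h' => h (by rw [sub_eq_zero.1 h'])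
  rw [key (fun x : ℝ => (x + c * Complex.I : ℂ)) a b hab (by fun_prop)
      (fun t ht => ⟨ne2 _ (by simpa using hc.ne), by simpa using ht, by simpa using hcd⟩),
    key (fun x : ℝ => (x + d * Complex.I : ℂ)) a b hab (by fun_prop)
      (fun t ht => ⟨ne2 _ (by simpa using hd.ne'), by simpa using ht, by simpa using hcd⟩),
    key (fun y : ℝ => (b + y * Complex.I : ℂ)) c d hcd (by fun_prop)
      (fun t ht => ⟨ne1 _ (by simpa using hb.ne'), by simpa using hab, by simpa using ht⟩),
    key (fun y : ℝ => (a + y * Complex.I : ℂ)) c d hcd (by fun_prop)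
      (fun t ht => ⟨ne1 _ (by simpa using ha.ne), by simpa using hab, by simpa using ht⟩)]
  simp only [smul_eq_mul] at h0 h1 ⊢
  linear_combination h0 + D s * h1


/-- C¹ on `[0,∞)` with derivative tending to zero. -/
structure IsC1 (τ τ' : ℝ → ℂ) : Prop where
  der : ∀ x ∈ Set.Ici (0 : ℝ), HasDerivWithinAt τ (τ' x) (Set.Ici 0) x
  cont : ContinuousOn τ' (Set.Ici 0)
  lim : Tendsto τ' atTop (nhds 0)

lemma IsC1.bdd {τ τ' : ℝ → ℂ} (h : IsC1 τ τ') : ∃ M > 0, ∀ x, 0 ≤ x → ‖τ' x‖ ≤ M := by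
  have h1 := h.lim.norm
  rw [norm_zero] at h1
  obtain ⟨X, hX⟩ := eventually_atTop.1 (h1.eventually (gt_mem_nhds zero_lt_one))
  obtain ⟨C, hC⟩ := (isCompact_Icc (a := (0:ℝ)) (b := X)).exists_bound_of_continuousOn
    (h.cont.mono Icc_subset_Ici_self)
  refine ⟨max C 1, by positivity, fun x hx => ?_⟩
  rcases le_total x X with h2 | h2
  · exact (hC x ⟨hx, h2⟩).trans (le_max_left _ _)
  · exact (hX x h2).le.trans (le_max_right _ _)

lemma IsC1.continuousOn {τ τ' : ℝ → ℂ} (h : IsC1 τ τ') : ContinuousOn τ (Set.Ici 0) :=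
  fun x hx => (h.der x hx).continuousWithinAt

lemma IsC1.growth {τ τ' : ℝ → ℂ} (h : IsC1 τ τ') (ε : ℝ) (hε : 0 < ε) :
    ∃ A > 0, ∀ x, 0 ≤ x → ‖τ x‖ ≤ A + ε * x := by
  have h1 := h.lim.norm
  rw [norm_zero] at h1
  obtain ⟨X', hX'⟩ := eventually_atTop.1 (h1.eventually (gt_mem_nhds hε))
  set X := max X' 0
  have hX0 : 0 ≤ X := le_max_right _ _
  obtain ⟨C, hC⟩ := (isCompact_Icc (a := (0:ℝ)) (b := X)).exists_bound_of_continuousOn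
    (h.continuousOn.mono Icc_subset_Ici_self)
  have hC0 : 0 ≤ C := (norm_nonneg _).trans (hC 0 ⟨le_rfl, hX0⟩)
  refine ⟨C + 1, by linarith, fun x hx => ?_⟩
  rcases le_total x X with h2 | h2
  · have := hC x ⟨hx, h2⟩
    nlinarith [mul_nonneg hε.le hx]
  · have h3 := (convex_Ici X).norm_image_sub_le_of_norm_hasDerivWithin_le (f := τ) (f' := τ') (C := ε)
      (s := Set.Ici X)
      (fun y hy => (h.der y (hX0.trans hy)).mono (Set.Ici_subset_Ici.2 hX0))
      (fun y hy => (hX' y ((le_max_left _ _).trans hy)).le) (Set.self_mem_Ici) (Set.mem_Ici.2 h2)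
    have h4 := hC X ⟨hX0, le_rfl⟩
    have h5 : ‖τ x‖ ≤ ‖τ x - τ X‖ + ‖τ X‖ := by simpa using norm_add_le (τ x - τ X) (τ X)
    rw [Real.norm_of_nonneg (by linarith)] at h3
    nlinarith [mul_nonneg hε.le hX0]

open scoped SchwartzMap in
lemma cutoff_close {τ τ' : ℝ → ℂ} (h : IsC1 τ τ') (φ : 𝓢(ℝ, ℂ)) (hφ : φ 0 = 1) (ε : ℝ)
    (hε : 0 < ε) : ∃ l₀ > 0, ∀ l, 0 < l → l < l₀ → ∀ x, 0 ≤ x →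
      ‖τ' x - (τ' x * φ (l * x) + τ x * (l * deriv φ (l * x)))‖ ≤ ε := by
  obtain ⟨B0, hB0p, hB0⟩ : ∃ B > 0, ∀ x, ‖φ x‖ ≤ B := by
    obtain ⟨C, hC0, hC⟩ := φ.decay 0 0
    exact ⟨C, hC0, fun x => by simpa using hC x⟩
  obtain ⟨B1, hB1p, hB1⟩ : ∃ B > 0, ∀ x, ‖deriv φ x‖ ≤ B := by
    obtain ⟨C, hC0, hC⟩ := φ.decay 0 1
    exact ⟨C, hC0, fun x => by simpa [norm_iteratedFDeriv_eq_norm_iteratedDeriv] using hC x⟩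
  obtain ⟨B2, hB2p, hB2⟩ : ∃ B > 0, ∀ x, |x| * ‖deriv φ x‖ ≤ B := by
    obtain ⟨C, hC0, hC⟩ := φ.decay 1 1
    exact ⟨C, hC0, fun x => by simpa [norm_iteratedFDeriv_eq_norm_iteratedDeriv] using hC x⟩
  have hlip : ∀ x, ‖1 - φ x‖ ≤ B1 * |x| := by
    intro x
    have := convex_univ.norm_image_sub_le_of_norm_deriv_le (f := φ) (C := B1) (s := Set.univ)
      (fun y _ => φ.differentiableAt) (fun y _ => hB1 y) (Set.mem_univ 0) (Set.mem_univ x)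
    rw [hφ, norm_sub_rev] at this
    simpa using this
  obtain ⟨M, hM0, hM⟩ := h.bdd
  set e1 := ε / (4 * (1 + B0)) with he1
  have he1p : 0 < e1 := by positivity
  have h1 := h.lim.norm
  rw [norm_zero] at h1
  obtain ⟨X', hX'⟩ := eventually_atTop.1 (h1.eventually (gt_mem_nhds he1p))
  set X := max X' 1
  have hX0 : 0 < X := lt_of_lt_of_le one_pos (le_max_right _ _)
  obtain ⟨A, hA0, hA⟩ := h.growth (ε / (4 * B2)) (by positivity)
  refine ⟨min (ε / (4 * M * B1 * X)) (ε / (4 * A * B1)), by positivity, fun l hl hl0 x hx => ?_⟩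
  have hla := hl0.trans_le (min_le_left _ _)
  have hlb := hl0.trans_le (min_le_right _ _)
  rw [lt_div_iff₀ (by positivity)] at hla hlb
  have p1 : ‖τ' x * (1 - φ (l * x))‖ ≤ ε / 4 := by
    rw [norm_mul]
    rcases le_total x X with h2 | h2
    · calc ‖τ' x‖ * ‖1 - φ (l * x)‖ ≤ M * (B1 * (l * X)) := by
            refine mul_le_mul (hM x hx) ((hlip _).trans ?_) (norm_nonneg _) hM0.le
            rw [abs_of_nonneg (by positivity)]
            gcongr
        _ ≤ ε / 4 := by nlinarith
    · calc ‖τ' x‖ * ‖1 - φ (l * x)‖ ≤ e1 * (1 + B0) := by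
            refine mul_le_mul (hX' x ((le_max_left _ _).trans h2)).le ?_ (norm_nonneg _) he1p.le
            refine (norm_sub_le _ _).trans ?_
            simpa using hB0 (l * x)
        _ = ε / 4 := by rw [he1]; field_simp
  have p2 : ‖τ x * (l * deriv φ (l * x))‖ ≤ ε / 2 := by
    rw [norm_mul, norm_mul, Complex.norm_real, Real.norm_of_nonneg hl.le]
    have q1 := hB1 (l * x)
    have q2 := hB2 (l * x)
    rw [abs_of_nonneg (by positivity)] at q2
    calc ‖τ x‖ * (l * ‖deriv φ (l * x)‖) ≤ (A + ε / (4 * B2) * x) * (l * ‖deriv φ (l * x)‖) := by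
          gcongr; exact hA x hx
      _ = A * l * ‖deriv φ (l * x)‖ + ε / (4 * B2) * (l * x * ‖deriv φ (l * x)‖) := by ring
      _ ≤ A * l * B1 + ε / (4 * B2) * B2 := by gcongr
      _ = A * l * B1 + ε / 4 := by field_simp
      _ ≤ ε / 2 := by nlinarith
  calc ‖τ' x - (τ' x * φ (l * x) + τ x * (l * deriv φ (l * x)))‖
      = ‖τ' x * (1 - φ (l * x)) - τ x * (l * deriv φ (l * x))‖ := by congr 1; ring
    _ ≤ ε / 4 + ε / 2 := (norm_sub_le _ _).trans (add_le_add p1 p2)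
    _ ≤ ε := by linarith

open scoped SchwartzMap in
lemma cutoff_isC1 {τ τ' : ℝ → ℂ} (h : IsC1 τ τ') (φ : 𝓢(ℝ, ℂ)) (l : ℝ) (hl : 0 < l) :
    IsC1 (fun x => τ x * φ (l * x)) (fun x => τ' x * φ (l * x) + τ x * (l * deriv φ (l * x))) := by
  have hd1 : Continuous (deriv φ) := (φ.smooth 1).continuous_deriv le_rfl
  constructor
  · intro x hx
    have h1 : HasDerivAt (fun x : ℝ => φ (l * x)) (l * deriv φ (l * x)) x := by
      have h2 : HasDerivAt (fun x : ℝ => l * x) l x := by simpa using (hasDerivAt_id x).const_mul l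
      have := (φ.differentiableAt (x := l * x)).hasDerivAt.scomp x h2
      simp only [Complex.real_smul] at this
      exact this
    exact (h.der x hx).mul h1.hasDerivWithinAt
  · have : Continuous φ := φ.continuous
    exact (h.cont.mul (by fun_prop)).add (h.continuousOn.mul (by fun_prop))
  · obtain ⟨C0, hC0, hC⟩ := φ.decay 0 0
    obtain ⟨C1, hC1, hC'⟩ := φ.decay 2 1
    obtain ⟨A, hA0, hA⟩ := h.growth 1 one_pos
    have t1 : Tendsto (fun x => ‖τ' x‖ * C0 + (A + 1 * x) * (l * (C1 / (l * x)^2))) atTop (nhds 0) := by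
      have a1 : Tendsto (fun x => ‖τ' x‖ * C0) atTop (nhds 0) := by
        simpa using h.lim.norm.mul_const C0
      have a2 : Tendsto (fun x : ℝ => (C1 / l) * (A * (x⁻¹ * x⁻¹) + x⁻¹)) atTop (nhds 0) := by
        have := tendsto_inv_atTop_zero (𝕜 := ℝ)
        simpa using (((this.mul this).const_mul A).add this).const_mul (C1 / l)
      have a3 := a1.add a2
      rw [add_zero] at a3
      refine a3.congr' ?_
      filter_upwards [eventually_gt_atTop 0] with x hx
      field_simp
    apply squeeze_zero_norm' _ t1
    filter_upwards [eventually_gt_atTop 0] with x hx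
    have b0 : ‖φ (l * x)‖ ≤ C0 := by simpa using hC (l * x)
    have b1 : ‖deriv φ (l * x)‖ ≤ C1 / (l * x)^2 := by
      rw [le_div_iff₀ (by positivity), mul_comm]
      simpa [norm_iteratedFDeriv_eq_norm_iteratedDeriv, abs_of_pos hl, abs_of_pos hx] using hC' (l * x)
    refine (norm_add_le _ _).trans ?_
    rw [norm_mul, norm_mul, norm_mul, Complex.norm_real, Real.norm_of_nonneg hl.le]
    have := hA x hx.le
    gcongr

/-- compactly supported C¹ functions on `[0,∞)`. -/
structure IsTest (σ σ' : ℝ → ℂ) : Prop extends IsC1 σ σ' where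
  supp : ∃ R > 0, ∀ x, R ≤ x → σ x = 0

lemma IsTest.integrableOn {σ σ' : ℝ → ℂ} (h : IsTest σ σ') (s : ℂ) :
    IntegrableOn (fun x : ℝ => σ x * Complex.exp (-(s * (x : ℂ)))) (Set.Ioi 0) := by
  obtain ⟨R, hR, h0⟩ := h.supp
  rw [← Set.Ioc_union_Ioi_eq_Ioi hR.le]
  apply IntegrableOn.union
  · have : ContinuousOn (fun x : ℝ => σ x * Complex.exp (-(s * (x : ℂ)))) (Set.Icc 0 R) :=
      (h.toIsC1.continuousOn.mono Set.Icc_subset_Ici_self).mul (by fun_prop)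
    exact this.integrableOn_Icc.mono_set Set.Ioc_subset_Icc_self
  · refine IntegrableOn.congr_fun (f := fun _ => (0:ℂ)) integrableOn_zero (fun x hx => ?_) measurableSet_Ioi
    simp [h0 x (le_of_lt hx)]

lemma IsTest.differentiable {σ σ' : ℝ → ℂ} (h : IsTest σ σ') :
    Differentiable ℂ (Laplace σ) := by
  obtain ⟨R, hR, h0⟩ := h.supp
  have e : Laplace σ = fun s => ∫ x in (0:ℝ)..R, σ x * Complex.exp (-(s * (x : ℂ))) := by
    funext s
    have hi := h.integrableOn s
    rw [Laplace, intervalIntegral.integral_of_le hR.le, ← Set.Ioc_union_Ioi_eq_Ioi hR.le,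
      setIntegral_union (Set.Ioc_disjoint_Ioi le_rfl) measurableSet_Ioi
        (hi.mono_set Set.Ioc_subset_Ioi_self) (hi.mono_set (Set.Ioi_subset_Ioi hR.le)),
      setIntegral_eq_zero_of_forall_eq_zero (t := Set.Ioi R), add_zero]
    intro x hx
    simp [h0 x (le_of_lt hx)]
  rw [e]
  have hc : ContinuousOn σ (Set.uIcc 0 R) := by
    rw [Set.uIcc_of_le hR.le]; exact h.toIsC1.continuousOn.mono Set.Icc_subset_Ici_self
  have hsm : ∀ g : ℝ → ℂ, ContinuousOn g (Set.uIcc 0 R) →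
      AEStronglyMeasurable g (volume.restrict (Set.uIoc 0 R)) := by
    intro g hg
    exact (hg.mono Set.uIoc_subset_uIcc).aestronglyMeasurable measurableSet_uIoc
  obtain ⟨C, hC⟩ := isCompact_uIcc.exists_bound_of_continuousOn hc
  intro s
  refine (intervalIntegral.hasDerivAt_integral_of_dominated_loc_of_deriv_le
    (F' := fun s x => σ x * (Complex.exp (-(s * (x : ℂ))) * (-(x : ℂ))))
    (bound := fun _ => C * (Real.exp ((‖s‖ + 1) * R) * R))
    (Metric.ball_mem_nhds s one_pos) (Eventually.of_forall fun s => hsm _ (hc.mul (by fun_prop)))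
    (hc.mul (by fun_prop)).intervalIntegrable
    (hsm _ (hc.mul (by fun_prop))) ?_ intervalIntegrable_const ?_).2.differentiableAt
  · refine Eventually.of_forall fun x hx w hw => ?_
    rw [norm_mul, norm_mul, norm_neg, Complex.norm_exp, Complex.norm_real]
    have hx' : 0 ≤ x ∧ x ≤ R := by
      rw [Set.uIoc_of_le hR.le] at hx; exact ⟨hx.1.le, hx.2⟩
    have hCx := hC x (Set.uIoc_subset_uIcc hx)
    have hC0 : 0 ≤ C := (norm_nonneg _).trans hCx
    have hw' : ‖w‖ ≤ ‖s‖ + 1 := by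
      have h1 : ‖w - s‖ < 1 := by simpa [dist_eq_norm] using hw
      have h2 : ‖w‖ ≤ ‖w - s‖ + ‖s‖ := by simpa using norm_add_le (w - s) s
      linarith
    have hre : (-(w * (x:ℂ))).re ≤ (‖s‖ + 1) * R := by
      have := Complex.abs_re_le_norm w
      have h3 : -w.re ≤ ‖s‖ + 1 := by linarith [neg_abs_le w.re]
      simp only [Complex.neg_re, Complex.re_mul_ofReal]
      have := norm_nonneg s
      nlinarith
    rw [Real.norm_of_nonneg hx'.1]
    exact mul_le_mul hCx (mul_le_mul (Real.exp_le_exp.2 hre) hx'.2 hx'.1 (Real.exp_nonneg _))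
      (mul_nonneg (Real.exp_nonneg _) hx'.1) hC0
  · refine Eventually.of_forall fun x hx w hw => ?_
    have h1 : HasDerivAt (fun w : ℂ => -(w * (x:ℂ))) (-(x:ℂ)) w := by
      have h2 := ((hasDerivAt_id w).mul_const (x:ℂ)).neg
      rw [one_mul] at h2
      exact h2
    exact (h1.cexp).const_mul _

open scoped SchwartzMap ContDiff in
lemma exists_chi : ∃ χ : 𝓢(ℝ, ℂ), χ 0 = 1 ∧ ∀ x, 2 ≤ x → χ x = 0 := by
  let f : ContDiffBump (0:ℝ) := ⟨1, 2, one_pos, one_lt_two⟩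
  have h1 : HasCompactSupport (fun x => (f x : ℂ)) :=
    f.hasCompactSupport.comp_left Complex.ofReal_zero
  have h2 : ContDiff ℝ ∞ (fun x => (f x : ℂ)) := Complex.ofRealCLM.contDiff.comp f.contDiff
  refine ⟨h1.toSchwartzMap h2, ?_, ?_⟩
  · change ((f 0 : ℝ) : ℂ) = 1
    rw [f.one_of_mem_closedBall (by simp [f])]; simp
  · intro x hx
    change ((f x : ℝ) : ℂ) = 0
    rw [f.zero_of_le_dist (by rw [Real.dist_eq, sub_zero]; exact hx.trans (le_abs_self x))]; simp

lemma truncation {τ τ' : ℝ → ℂ} (h : IsC1 τ τ') (a : ℝ)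
    (hi : IntegrableOn (fun x => ‖τ x‖ * Real.exp (-(a * x))) (Set.Ioi 0)) (ε : ℝ) (hε : 0 < ε) :
    ∃ σ σ', IsTest σ σ' ∧ (∀ x, 0 ≤ x → ‖τ' x - σ' x‖ ≤ ε) ∧
      ∀ s : ℂ, a ≤ s.re → ‖Laplace τ s - Laplace σ s‖ ≤ ε := by
  obtain ⟨χ, hχ0, hχ⟩ := exists_chi
  obtain ⟨l₀, hl₀, hcl⟩ := cutoff_close h χ hχ0 ε hε
  obtain ⟨C, hC0, hC⟩ := χ.decay 0 0
  have hC : ∀ x, ‖χ x‖ ≤ C := fun x => by simpa using hC x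
  have ht : Tendsto (fun l : ℝ => ∫ x in Set.Ioi (0:ℝ),
      (‖τ x‖ * Real.exp (-(a * x))) * ‖1 - χ (l * x)‖) (nhdsWithin 0 (Set.Ioi 0)) (nhds 0) := by
    suffices hs : Tendsto (fun l : ℝ => ∫ x in Set.Ioi (0:ℝ),
        (‖τ x‖ * Real.exp (-(a * x))) * ‖1 - χ (l * x)‖) (nhdsWithin 0 (Set.Ioi 0))
        (nhds (∫ x in Set.Ioi (0:ℝ), (0:ℝ))) by rwa [integral_zero] at hs
    apply tendsto_integral_filter_of_dominated_convergence
      (fun x => (‖τ x‖ * Real.exp (-(a * x))) * (1 + C))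
    · refine Eventually.of_forall fun l => hi.aestronglyMeasurable.mul ?_
      have : Continuous χ := χ.continuous
      exact Continuous.aestronglyMeasurable (by fun_prop)
    · refine Eventually.of_forall fun l => Eventually.of_forall fun x => ?_
      rw [Real.norm_of_nonneg (by positivity)]
      gcongr
      refine (norm_sub_le _ _).trans ?_
      simpa using hC (l * x)
    · exact hi.mul_const _
    · refine Eventually.of_forall fun x => ?_
      have hc : Continuous fun l : ℝ => (‖τ x‖ * Real.exp (-(a * x))) * ‖1 - χ (l * x)‖ := by
        have : Continuous χ := χ.continuous
        fun_prop
      have := hc.tendsto 0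
      simp only [zero_mul, hχ0, sub_self, norm_zero, mul_zero] at this
      exact this.mono_left nhdsWithin_le_nhds
  obtain ⟨l, hl1, hl2, hl3⟩ := ((ht.eventually (gt_mem_nhds hε)).and
    ((eventually_mem_nhdsWithin (a := (0:ℝ)) (s := Set.Ioi 0)).and
      (mem_nhdsWithin_of_mem_nhds (gt_mem_nhds hl₀)))).exists
  simp only [Set.mem_Ioi] at hl2
  have hT : IsC1 _ _ := cutoff_isC1 h χ l hl2
  have hT' : IsTest (fun x => τ x * χ (l * x)) _ := ⟨hT, 2 / l, by positivity, fun x hx => by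
    rw [div_le_iff₀ hl2] at hx
    simp [hχ (l * x) (by linarith)]⟩
  refine ⟨_, _, hT', hcl l hl2 hl3, fun s hs => ?_⟩
  have hn : ∀ x : ℝ, 0 < x → ‖Complex.exp (-(s * (x:ℂ)))‖ ≤ Real.exp (-(a * x)) := by
    intro x hx
    rw [Complex.norm_exp]
    simp only [Complex.neg_re, Complex.re_mul_ofReal]
    gcongr
  have hτi : IntegrableOn (fun x : ℝ => τ x * Complex.exp (-(s * (x : ℂ)))) (Set.Ioi 0) := by
    refine Integrable.mono' hi ?_ ?_
    · exact ((h.continuousOn.mono Set.Ioi_subset_Ici_self).mul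
        (by fun_prop)).aestronglyMeasurable measurableSet_Ioi
    · refine (ae_restrict_iff' measurableSet_Ioi).2 (Eventually.of_forall fun x hx => ?_)
      rw [norm_mul]
      gcongr
      exact hn x hx
  rw [Laplace, Laplace, ← integral_sub hτi (hT'.integrableOn s)]
  refine (norm_integral_le_integral_norm _).trans (le_trans ?_ hl1.le)
  apply integral_mono_of_nonneg (Eventually.of_forall fun x => norm_nonneg _)
  · refine Integrable.mono' (hi.mul_const (1 + C)) ?_ (Eventually.of_forall fun x => ?_)
    · refine hi.aestronglyMeasurable.mul ?_
      have : Continuous χ := χ.continuous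
      exact Continuous.aestronglyMeasurable (by fun_prop)
    · rw [Real.norm_of_nonneg (by positivity)]
      gcongr
      refine (norm_sub_le _ _).trans ?_
      simpa using hC (l * x)
  · refine (ae_restrict_iff' measurableSet_Ioi).2 (Eventually.of_forall fun x hx => ?_)
    simp only
    have : τ x * Complex.exp (-(s * x)) - τ x * χ (l * x) * Complex.exp (-(s * x)) =
      τ x * Complex.exp (-(s * x)) * (1 - χ (l * x)) := by ring
    rw [this, norm_mul, norm_mul]
    gcongr
    exact hn x hx

lemma IsC1.integrableOn {τ τ' : ℝ → ℂ} (h : IsC1 τ τ') (s : ℂ) (hs : 0 < s.re) :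
    IntegrableOn (fun x : ℝ => τ x * Complex.exp (-(s * (x : ℂ)))) (Set.Ioi 0) := by
  obtain ⟨A, hA0, hA⟩ := h.growth 1 one_pos
  set c := s.re with hc
  have h1 : IntegrableOn (fun x : ℝ => (A + 2 / c) * Real.exp (-(c / 2) * x)) (Set.Ioi 0) :=
    (exp_neg_integrableOn_Ioi 0 (half_pos hs)).const_mul _
  refine Integrable.mono' h1 ?_ ?_
  · exact ((h.continuousOn.mono Set.Ioi_subset_Ici_self).mul
        (by fun_prop)).aestronglyMeasurable measurableSet_Ioi
  · refine (ae_restrict_iff' measurableSet_Ioi).2 (Eventually.of_forall fun x hx => ?_)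
    have hx0 : (0:ℝ) < x := hx
    rw [norm_mul, Complex.norm_exp]
    simp only [Complex.neg_re, Complex.re_mul_ofReal, ← hc]
    have e1 : c / 2 * x + 1 ≤ Real.exp (c / 2 * x) := Real.add_one_le_exp _
    have e0 : 1 ≤ Real.exp (c / 2 * x) := Real.one_le_exp (by positivity)
    have e2 : x ≤ 2 / c * Real.exp (c / 2 * x) := by
      have : 2 / c * (c / 2 * x) = x := by field_simp
      calc x = 2 / c * (c / 2 * x) := this.symm
        _ ≤ _ := by gcongr; linarith
    have e3 : ‖τ x‖ ≤ (A + 2 / c) * Real.exp (c / 2 * x) := by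
      have := hA x hx0.le
      nlinarith
    calc ‖τ x‖ * Real.exp (-(c * x)) ≤ (A + 2 / c) * Real.exp (c / 2 * x) * Real.exp (-(c * x)) := by
          gcongr
      _ = (A + 2 / c) * Real.exp (-(c / 2) * x) := by
          rw [mul_assoc, ← Real.exp_add]; congr 2; ring

open scoped SchwartzMap in
lemma cutoff_integrableOn {τ τ' : ℝ → ℂ} (h : IsC1 τ τ') (φ : 𝓢(ℝ, ℂ)) (l : ℝ) (hl : 0 < l) :
    IntegrableOn (fun x => ‖τ x * φ (l * x)‖ * Real.exp (-(0 * x))) (Set.Ioi 0) := by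
  obtain ⟨A, hA0, hA⟩ := h.growth l hl
  have i1 : Integrable (fun x => A * (‖l * x‖ ^ 0 * ‖φ (l * x)‖) + ‖l * x‖ ^ 1 * ‖φ (l * x)‖) :=
    (((φ.integrable_pow_mul volume 0).comp_mul_left' hl.ne').const_mul A).add
      ((φ.integrable_pow_mul volume 1).comp_mul_left' hl.ne')
  have hφc : Continuous φ := φ.continuous
  refine Integrable.mono' i1.integrableOn ?_ ?_
  · refine ContinuousOn.aestronglyMeasurable ?_ measurableSet_Ioi
    exact ((h.continuousOn.mono Set.Ioi_subset_Ici_self).mul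
        (by fun_prop)).norm.mul (by fun_prop)
  · refine (ae_restrict_iff' measurableSet_Ioi).2 (Eventually.of_forall fun x hx => ?_)
    have hx0 : (0:ℝ) < x := hx
    have := hA x hx0.le
    rw [Real.norm_of_nonneg (by positivity), Real.norm_of_nonneg (by positivity), norm_mul]
    simp only [zero_mul, neg_zero, Real.exp_zero, mul_one, pow_zero, one_mul, pow_one]
    rw [← add_mul]
    gcongr

open scoped SchwartzMap ContDiff FourierTransform in
lemma exists_phi : ∃ (w : ℝ → ℝ) (φ : 𝓢(ℝ, ℂ)), Continuous w ∧ (∀ t, 0 ≤ w t) ∧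
    (∀ t, 1 < |t| → w t = 0) ∧ Integrable w ∧ ∫ t, w t = 1 ∧
    (∀ y : ℝ, φ y = ∫ t, (w t : ℂ) * Complex.exp (-(2 * Real.pi * t * y * Complex.I))) := by
  let f : ContDiffBump (0:ℝ) := ⟨1/2, 1, by norm_num, by norm_num⟩
  have h1 : HasCompactSupport (fun x => (f.normed volume x : ℂ)) :=
    (f.hasCompactSupport_normed (μ := volume)).comp_left Complex.ofReal_zero
  have h2 : ContDiff ℝ ∞ (fun x => (f.normed volume x : ℂ)) :=
    Complex.ofRealCLM.contDiff.comp f.contDiff_normed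
  refine ⟨f.normed volume, 𝓕 (h1.toSchwartzMap h2), f.continuous_normed, f.nonneg_normed, ?_,
    f.integrable_normed, f.integral_normed, ?_⟩
  · intro t ht
    by_contra h0
    have : t ∈ Function.support (f.normed volume) := h0
    rw [f.support_normed_eq] at this
    simp [f] at this
    linarith
  · intro y
    rw [SchwartzMap.fourier_coe, Real.fourier_real_eq_integral_exp_smul]
    apply integral_congr_ae
    refine Eventually.of_forall fun t => ?_
    change Complex.exp _ • (f.normed volume t : ℂ) = _
    rw [smul_eq_mul, mul_comm]
    congr 2
    push_cast
    ring

open scoped SchwartzMap in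
lemma laplace_cutoff {τ τ' : ℝ → ℂ} (h : IsC1 τ τ') (w : ℝ → ℝ) (φ : 𝓢(ℝ, ℂ))
    (hwi : Integrable w)
    (hφ : ∀ y : ℝ, φ y = ∫ t, (w t : ℂ) * Complex.exp (-(2 * Real.pi * t * y * Complex.I)))
    (l : ℝ) (s : ℂ) (hs : 0 < s.re) :
    Laplace (fun x => τ x * φ (l * x)) s =
      ∫ t, (w t : ℂ) * Laplace τ (s + (2 * Real.pi * t * l : ℝ) * Complex.I) ∧
    Integrable fun t => (w t : ℂ) * Laplace τ (s + (2 * Real.pi * t * l : ℝ) * Complex.I) := by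
  have hi := h.integrableOn s hs
  have e1 : Laplace (fun x => τ x * φ (l * x)) s = ∫ x in Set.Ioi (0:ℝ), ∫ t,
      (τ x * Complex.exp (-(s * (x : ℂ)))) * (w t : ℂ) *
        Complex.exp (-((2 * Real.pi * t * l * x : ℝ) * Complex.I)) := by
    rw [Laplace]
    congr 1
    funext x
    rw [hφ, mul_right_comm, ← integral_const_mul]
    congr 1
    funext t
    push_cast
    rw [mul_assoc (τ x * _)]
    congr 4
    ring
  have hin : ∀ t : ℝ, ∫ x in Set.Ioi (0:ℝ),
      (τ x * Complex.exp (-(s * (x : ℂ)))) * (w t : ℂ) *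
        Complex.exp (-((2 * Real.pi * t * l * x : ℝ) * Complex.I)) =
      (w t : ℂ) * Laplace τ (s + (2 * Real.pi * t * l : ℝ) * Complex.I) := by
    intro t
    rw [Laplace, ← integral_const_mul]
    congr 1
    funext x
    have : Complex.exp (-((s + (2 * Real.pi * t * l : ℝ) * Complex.I) * (x:ℂ))) =
        Complex.exp (-(s * (x : ℂ))) * Complex.exp (-((2 * Real.pi * t * l * x : ℝ) * Complex.I)) := by
      rw [← Complex.exp_add]; congr 1; push_cast; ring
    rw [this]; ring
  have hprod : Integrable (Function.uncurry fun (x t : ℝ) =>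
      (τ x * Complex.exp (-(s * (x : ℂ)))) * (w t : ℂ) *
        Complex.exp (-((2 * Real.pi * t * l * x : ℝ) * Complex.I)))
      ((volume.restrict (Set.Ioi (0:ℝ))).prod volume) := by
    have := hi.mul_prod (hwi.ofReal (𝕜 := ℂ))
    refine this.mul_bdd (c := 1) ?_ ?_
    · exact Continuous.aestronglyMeasurable (by fun_prop)
    · refine Eventually.of_forall fun p => ?_
      rw [← neg_mul, ← Complex.ofReal_neg, Complex.norm_exp_ofReal_mul_I]
  constructor
  · rw [e1, integral_integral_swap hprod]
    simp_rw [hin]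
  · have := hprod.integral_prod_right
    simp only [Function.uncurry_apply_pair] at this
    simp_rw [hin] at this
    exact this

/-- Existence of a test function close to `τ` with Laplace transform close on `Re s > 0`. -/
lemma exists_cut {τ τ' : ℝ → ℂ} (h : IsC1 τ τ') (F : ℂ → ℂ) (a b r r₁ : ℝ) (ha : a < 0) 
    (hrr : r < r₁)
    (hF : ContinuousOn F {s : ℂ | a ≤ s.re ∧ s.re ≤ b ∧ |s.im| ≤ r₁})
    (hFL : ∀ s : ℂ, 0 < s.re → s.re ≤ b → |s.im| ≤ r₁ → F s = Laplace τ s)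
    (ε : ℝ) (hε : 0 < ε) :
    ∃ σ σ', IsTest σ σ' ∧ (∀ x, 0 ≤ x → ‖τ' x - σ' x‖ ≤ ε) ∧
      ∀ s : ℂ, 0 < s.re → s.re ≤ b → |s.im| ≤ r → ‖F s - Laplace σ s‖ ≤ ε := by
  obtain ⟨w, φ, hwc, hw0, hws, hwi, hw1, hφ⟩ := exists_phi
  have hφ0 : φ 0 = 1 := by
    rw [hφ]
    simp only [Complex.ofReal_zero, mul_zero, zero_mul, neg_zero, Complex.exp_zero, mul_one]
    rw [integral_complex_ofReal, hw1]; simp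
  have hcomp : IsCompact {s : ℂ | a ≤ s.re ∧ s.re ≤ b ∧ |s.im| ≤ r₁} := by
    have : {s : ℂ | a ≤ s.re ∧ s.re ≤ b ∧ |s.im| ≤ r₁} = Set.Icc a b ×ℂ Set.Icc (-r₁) r₁ := by
      ext s; simp [Complex.mem_reProdIm, abs_le, and_assoc]
    rw [this]
    exact isCompact_Icc.reProdIm isCompact_Icc
  have huc := hcomp.uniformContinuousOn_of_continuous hF
  rw [Metric.uniformContinuousOn_iff] at huc
  obtain ⟨δ, hδ, huc⟩ := huc (ε / 2) (half_pos hε)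
  obtain ⟨l₀, hl₀, hcl⟩ := cutoff_close h φ hφ0 (ε / 2) (half_pos hε)
  obtain ⟨l, hl, hl1, hl2⟩ : ∃ l > 0, l < l₀ ∧ 2 * Real.pi * l < min δ (r₁ - r) := by
    have hm : 0 < min δ (r₁ - r) := lt_min hδ (by linarith)
    refine ⟨min (l₀ / 2) (min δ (r₁ - r) / (4 * Real.pi)), by positivity, ?_, ?_⟩
    · exact (min_le_left _ _).trans_lt (by linarith)
    · calc 2 * Real.pi * min (l₀ / 2) (min δ (r₁ - r) / (4 * Real.pi))
          ≤ 2 * Real.pi * (min δ (r₁ - r) / (4 * Real.pi)) := by gcongr; exact min_le_right _ _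
        _ = min δ (r₁ - r) / 2 := by field_simp; norm_num
        _ < _ := by linarith
  obtain ⟨σ, σ', hσ, hσ1, hσ2⟩ := truncation (cutoff_isC1 h φ l hl) 0
    (cutoff_integrableOn h φ l hl) (ε / 2) (half_pos hε)
  refine ⟨σ, σ', hσ, fun x hx => ?_, fun s hs0 hsb hsr => ?_⟩
  · have := norm_add_le (τ' x - (τ' x * φ (l * x) + τ x * (l * deriv φ (l * x))))
      ((τ' x * φ (l * x) + τ x * (l * deriv φ (l * x))) - σ' x)
    rw [sub_add_sub_cancel] at this
    linarith [hcl l hl hl1 x hx, hσ1 x hx]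
  · have h1 := hσ2 s hs0.le
    have h2 : ‖F s - Laplace (fun x => τ x * φ (l * x)) s‖ ≤ ε / 2 := by
      rw [(laplace_cutoff h w φ hwi hφ l s hs0).1]
      have hpt : ∀ t, ‖(w t : ℂ) * (F s - Laplace τ (s + (2 * Real.pi * t * l : ℝ) * Complex.I))‖ ≤
          w t * (ε / 2) := by
        intro t
        rcases le_or_gt |t| 1 with ht | ht
        · rw [norm_mul, Complex.norm_real, Real.norm_of_nonneg (hw0 t)]
          refine mul_le_mul_of_nonneg_left ?_ (hw0 t)
          have hsmall : |2 * Real.pi * t * l| ≤ 2 * Real.pi * l := by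
            rw [abs_mul, abs_mul, abs_of_pos hl, abs_of_pos Real.two_pi_pos]
            have := Real.two_pi_pos
            calc 2 * Real.pi * |t| * l ≤ 2 * Real.pi * 1 * l := by gcongr
              _ = _ := by ring
          have hre : (s + (2 * Real.pi * t * l : ℝ) * Complex.I).re = s.re := by simp
          have him : (s + (2 * Real.pi * t * l : ℝ) * Complex.I).im = s.im + 2 * Real.pi * t * l := by
            simp
          have hr' : |s.im + 2 * Real.pi * t * l| ≤ r₁ := by
            refine (abs_add_le _ _).trans ?_
            linarith [min_le_right δ (r₁ - r)]
          rw [← hFL _ (by rw [hre]; exact hs0) (by rw [hre]; exact hsb) (by rw [him]; exact hr'),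
            ← dist_eq_norm]
          refine (huc s ⟨by linarith, hsb, by linarith⟩ _
            ⟨by rw [hre]; linarith, by rw [hre]; exact hsb, by rw [him]; exact hr'⟩ ?_).le
          rw [dist_eq_norm, sub_add_cancel_left, norm_neg, norm_mul, Complex.norm_I, mul_one,
            Complex.norm_real]
          exact hsmall.trans_lt (hl2.trans_le (min_le_left _ _))
        · rw [hws t ht]; simp
      have e : F s - ∫ t, (w t : ℂ) * Laplace τ (s + (2 * Real.pi * t * l : ℝ) * Complex.I) =
          ∫ t, (w t : ℂ) * (F s - Laplace τ (s + (2 * Real.pi * t * l : ℝ) * Complex.I)) := by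
        have i1 : Integrable fun t => (w t : ℂ) * F s := (hwi.ofReal (𝕜 := ℂ)).mul_const _
        have i2 : Integrable fun t => (w t : ℂ) * Laplace τ (s + (2 * Real.pi * t * l : ℝ) * Complex.I) :=
          (laplace_cutoff h w φ hwi hφ l s hs0).2
        simp_rw [mul_sub]
        rw [integral_sub i1 i2, integral_mul_const, integral_complex_ofReal, hw1]
        simp
      rw [e]
      refine (norm_integral_le_of_norm_le (hwi.mul_const _) (Eventually.of_forall hpt)).trans ?_
      rw [integral_mul_const, hw1]; simp
    have := norm_add_le (F s - Laplace (fun x => τ x * φ (l * x)) s)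
      (Laplace (fun x => τ x * φ (l * x)) s - Laplace σ s)
    rw [sub_add_sub_cancel] at this
    linarith


open scoped BoundedContinuousFunction

/-- The ambient Banach space. -/
abbrev XSp (K : Set ℂ) : Type := (↥(Set.Ici (0:ℝ)) →ᵇ ℂ) × (↥K →ᵇ ℂ)

lemma mkX (K : Set ℂ) (f : ℝ → ℂ) (g : ℂ → ℂ) (hf : ContinuousOn f (Set.Ici 0))
    (hg : ContinuousOn g K) (Cf Cg : ℝ) (hCf : ∀ x, 0 ≤ x → ‖f x‖ ≤ Cf)
    (hCg : ∀ s ∈ K, ‖g s‖ ≤ Cg) :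
    ∃ p : XSp K, (∀ x : ↥(Set.Ici (0:ℝ)), p.1 x = f x) ∧ ∀ s : K, p.2 s = g s :=
  ⟨(BoundedContinuousFunction.ofNormedAddCommGroup (fun x : ↥(Set.Ici (0:ℝ)) => f x)
      hf.domRestrict Cf (fun x => hCf x x.2),
    BoundedContinuousFunction.ofNormedAddCommGroup (fun s : K => g s)
      hg.domRestrict Cg (fun x => hCg x x.2)), fun _ => rfl, fun _ => rfl⟩

lemma normX_le {K : Set ℂ} (p : XSp K) (C : ℝ) (hC : 0 ≤ C) (h1 : ∀ x, ‖p.1 x‖ ≤ C)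
    (h2 : ∀ s, ‖p.2 s‖ ≤ C) : ‖p‖ ≤ C := by
  rw [Prod.norm_def]
  exact max_le ((BoundedContinuousFunction.norm_le hC).2 h1)
    ((BoundedContinuousFunction.norm_le hC).2 h2)

lemma IsTest.add {σ σ' τ τ' : ℝ → ℂ} (h : IsTest σ σ') (k : IsTest τ τ') :
    IsTest (fun x => σ x + τ x) (fun x => σ' x + τ' x) := by
  obtain ⟨R, hR, h0⟩ := h.supp
  obtain ⟨S, hS, k0⟩ := k.supp
  refine ⟨⟨fun x hx => (h.der x hx).add (k.der x hx), h.cont.add k.cont, ?_⟩,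
    max R S, lt_max_of_lt_left hR, fun x hx => ?_⟩
  · simpa using h.lim.add k.lim
  · simp [h0 x (le_of_max_le_left hx), k0 x (le_of_max_le_right hx)]

lemma IsTest.smul {σ σ' : ℝ → ℂ} (h : IsTest σ σ') (c : ℂ) :
    IsTest (fun x => c * σ x) (fun x => c * σ' x) := by
  obtain ⟨R, hR, h0⟩ := h.supp
  refine ⟨⟨fun x hx => (h.der x hx).const_mul c, h.cont.const_smul c, ?_⟩,
    R, hR, fun x hx => ?_⟩
  · simpa using h.lim.const_mul c
  · simp [h0 x hx]

lemma IsTest.laplace_add {σ σ' τ τ' : ℝ → ℂ} (h : IsTest σ σ') (k : IsTest τ τ') (s : ℂ) :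
    Laplace (fun x => σ x + τ x) s = Laplace σ s + Laplace τ s := by
  unfold Laplace
  rw [← integral_add (h.integrableOn s) (k.integrableOn s)]
  simp only [add_mul]

lemma laplace_smul {σ : ℝ → ℂ} (c : ℂ) (s : ℂ) :
    Laplace (fun x => c * σ x) s = c * Laplace σ s := by
  unfold Laplace
  rw [← integral_const_mul]
  simp only [mul_assoc]

lemma isTest_zero : IsTest (fun _ => 0) (fun _ => 0) :=
  ⟨⟨fun x _ => hasDerivWithinAt_const _ _ _, continuousOn_const, tendsto_const_nhds⟩,
    1, one_pos, fun _ _ => rfl⟩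

/-- test functions inside the Banach space. -/
noncomputable def WSub (K : Set ℂ) : Submodule ℂ (XSp K) where
  carrier := {p | ∃ σ σ', IsTest σ σ' ∧ (∀ x : ↥(Set.Ici (0:ℝ)), p.1 x = σ' x) ∧
    ∀ s : K, p.2 s = Laplace σ s}
  add_mem' := by
    rintro p q ⟨σ, σ', h, h1, h2⟩ ⟨τ, τ', k, k1, k2⟩
    refine ⟨_, _, h.add k, fun x => ?_, fun s => ?_⟩
    · simp [h1, k1]
    · rw [h.laplace_add k]; simp [h2, k2]
  zero_mem' := ⟨_, _, isTest_zero, fun x => rfl, fun s => by simp [Laplace]⟩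
  smul_mem' := by
    rintro c p ⟨σ, σ', h, h1, h2⟩
    refine ⟨_, _, h.smul c, fun x => ?_, fun s => ?_⟩
    · simp [h1]
    · rw [laplace_smul]; simp [h2]

/-- characterization of the exponential elements. -/
def IsE (K : Set ℂ) (z : ℂ) (p : XSp K) : Prop :=
  (∀ x : ↥(Set.Ici (0:ℝ)), p.1 x = z * Complex.exp (z * ((x:ℝ):ℂ))) ∧
    ∀ s : K, p.2 s = ((s:ℂ) - z)⁻¹

lemma isolate (K : Set ℂ) (hK : IsClosed K) (z : ℂ) (hz : z ∉ K) :
    ∃ m > 0, ∀ s ∈ K, m ≤ ‖s - z‖ := by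
  obtain ⟨m, hm, h⟩ := Metric.isOpen_iff.1 hK.isOpen_compl z hz
  refine ⟨m, hm, fun s hs => ?_⟩
  by_contra hlt
  push Not at hlt
  exact h (by simpa [dist_eq_norm] using hlt) hs

lemma norm_exp_le {z : ℂ} (hz : z.re ≤ 0) {x : ℝ} (hx : 0 ≤ x) :
    ‖Complex.exp (z * (x:ℂ))‖ ≤ 1 := by
  rw [Complex.norm_exp, Real.exp_le_one_iff]
  simp only [Complex.re_mul_ofReal]
  exact mul_nonpos_of_nonpos_of_nonneg hz hx

lemma exists_e (K : Set ℂ) (hK : IsClosed K) (z : ℂ) (hz : z.re < 0) (hzK : z ∉ K) :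
    ∃ p : XSp K, IsE K z p := by
  obtain ⟨m, hm, h⟩ := isolate K hK z hzK
  refine mkX K (fun x => z * Complex.exp (z * (x:ℂ))) (fun s => (s - z)⁻¹)
    (by fun_prop) ?_ ‖z‖ m⁻¹ ?_ ?_
  · refine ContinuousOn.inv₀ (by fun_prop) (fun s hs => ?_)
    exact norm_pos_iff.1 (hm.trans_le (h s hs))
  · intro x hx
    rw [norm_mul]
    exact mul_le_of_le_one_right (norm_nonneg _) (norm_exp_le hz.le hx)
  · intro s hs
    rw [norm_inv]
    exact inv_anti₀ hm (h s hs)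

lemma t_exp_le {c x : ℝ} (hc : 0 < c) : x * Real.exp (-(c * x)) ≤ 1 / c := by
  have h := Real.add_one_le_exp (c * x)
  rw [Real.exp_neg, ← div_eq_mul_inv, div_le_div_iff₀ (Real.exp_pos _) hc]
  linarith

lemma t2_exp_le {c x : ℝ} (hc : 0 < c) (hx : 0 ≤ x) : x ^ 2 * Real.exp (-(c * x)) ≤ 4 / c ^ 2 := by
  have h := t_exp_le (c := c / 2) (x := x) (by positivity)
  have h2 : x ^ 2 * Real.exp (-(c * x)) = (x * Real.exp (-(c / 2 * x))) ^ 2 := by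
    rw [mul_pow, ← Real.exp_nat_mul]; congr 2; push_cast; ring
  rw [h2]
  have h3 : (4:ℝ) / c ^ 2 = (1 / (c / 2)) ^ 2 := by field_simp; norm_num
  rw [h3]
  exact pow_le_pow_left₀ (by positivity) h 2

lemma rem1 {z h : ℂ} {c x : ℝ} (hc : 0 < c) (hz : z.re = -c) (hh : ‖h‖ ≤ c / 2) (hx : 0 ≤ x) :
    ‖(z + h) * Complex.exp ((z + h) * (x:ℂ)) - z * Complex.exp (z * (x:ℂ))
      - h * ((1 + z * x) * Complex.exp (z * (x:ℂ)))‖ ≤ (‖z‖ * (16 / c ^ 2) + 2 / c) * ‖h‖ ^ 2 := by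
  have e1 : (z + h) * Complex.exp ((z + h) * (x:ℂ)) - z * Complex.exp (z * (x:ℂ))
      - h * ((1 + z * x) * Complex.exp (z * (x:ℂ))) =
      Complex.exp (z * x) * (z * (Complex.exp (h * x) - 1 - h * x)
        + h * (Complex.exp (h * x) - 1)) := by
    rw [add_mul z h (x:ℂ), Complex.exp_add]; ring
  have b1 := Complex.norm_exp_sub_sum_le_norm_mul_exp (h * x) 1
  have b2 := Complex.norm_exp_sub_sum_le_norm_mul_exp (h * x) 2
  simp only [Finset.sum_range_succ, Finset.sum_range_zero, zero_add, pow_zero, pow_one,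
    Nat.factorial, Nat.cast_one, div_one, mul_one, Nat.succ_eq_add_one] at b1 b2
  have hn : ‖h * (x:ℂ)‖ = ‖h‖ * x := by rw [norm_mul, Complex.norm_real, Real.norm_of_nonneg hx]
  rw [hn] at b1 b2
  have hE : Real.exp (‖h‖ * x) ≤ Real.exp (c / 2 * x) := by
    apply Real.exp_le_exp.2; gcongr
  have hez : ‖Complex.exp (z * x)‖ = Real.exp (-(c * x)) := by
    rw [Complex.norm_exp]; simp [hz]
  have hsplit : Real.exp (-(c * x)) * Real.exp (c / 2 * x) = Real.exp (-(c / 2 * x)) := by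
    rw [← Real.exp_add]; congr 1; ring
  have t1 := t_exp_le (c := c / 2) (x := x) (by positivity)
  have t2 := t2_exp_le (c := c / 2) (x := x) (by positivity) hx
  rw [e1, norm_mul, hez]
  have b1' : ‖Complex.exp (h * x) - 1‖ ≤ ‖h‖ * x * Real.exp (c / 2 * x) :=
    b1.trans (by gcongr)
  have b2' : ‖Complex.exp (h * x) - 1 - h * x‖ ≤ (‖h‖ * x) ^ 2 * Real.exp (c / 2 * x) := by
    rw [sub_sub]; exact b2.trans (by gcongr)
  have hN : ‖z * (Complex.exp (h * x) - 1 - h * x) + h * (Complex.exp (h * x) - 1)‖ ≤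
      ‖z‖ * ((‖h‖ * x) ^ 2 * Real.exp (c / 2 * x)) + ‖h‖ * (‖h‖ * x * Real.exp (c / 2 * x)) := by
    refine (norm_add_le _ _).trans ?_
    rw [norm_mul, norm_mul]
    gcongr
  calc _ ≤ Real.exp (-(c * x)) * (‖z‖ * ((‖h‖ * x) ^ 2 * Real.exp (c / 2 * x)) + ‖h‖ * (‖h‖ * x * Real.exp (c / 2 * x))) := by gcongr
    _ = (‖z‖ * (x ^ 2 * Real.exp (-(c / 2 * x))) + x * Real.exp (-(c / 2 * x))) * ‖h‖ ^ 2 := by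
        rw [← hsplit]; ring
    _ ≤ (‖z‖ * (4 / (c / 2) ^ 2) + 1 / (c / 2)) * ‖h‖ ^ 2 := by gcongr
    _ = _ := by field_simp; ring

lemma rem2 {z h s : ℂ} {m : ℝ} (hm : 0 < m) (hs : m ≤ ‖s - z‖) (hh : ‖h‖ ≤ m / 2) :
    ‖(s - (z + h))⁻¹ - (s - z)⁻¹ - h * ((s - z) ^ 2)⁻¹‖ ≤ (2 / m ^ 3) * ‖h‖ ^ 2 := by
  have h1 : m / 2 ≤ ‖s - (z + h)‖ := by
    have : ‖s - z‖ ≤ ‖s - (z + h)‖ + ‖h‖ := by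
      have := norm_add_le (s - (z + h)) h
      rwa [show s - (z + h) + h = s - z by ring] at this
    linarith
  have n1 : s - z ≠ 0 := norm_pos_iff.1 (hm.trans_le hs)
  have n2 : s - (z + h) ≠ 0 := norm_pos_iff.1 ((half_pos hm).trans_le h1)
  have e1 : (s - (z + h))⁻¹ - (s - z)⁻¹ - h * ((s - z) ^ 2)⁻¹ =
      h ^ 2 * ((s - z) ^ 2)⁻¹ * (s - (z + h))⁻¹ := by
    field_simp; ring
  rw [e1, norm_mul, norm_mul, norm_inv, norm_inv, norm_pow, norm_pow]
  calc _ ≤ ‖h‖ ^ 2 * (m ^ 2)⁻¹ * (m / 2)⁻¹ := by gcongr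
    _ = _ := by field_simp

lemma exists_d (K : Set ℂ) (hK : IsClosed K) (z : ℂ) (hz : z.re < 0) (hzK : z ∉ K) :
    ∃ p : XSp K, (∀ x : ↥(Set.Ici (0:ℝ)), p.1 x = (1 + z * ((x:ℝ):ℂ)) *
      Complex.exp (z * ((x:ℝ):ℂ))) ∧ ∀ s : K, p.2 s = (((s:ℂ) - z) ^ 2)⁻¹ := by
  obtain ⟨m, hm, h⟩ := isolate K hK z hzK
  refine mkX K (fun x => (1 + z * (x:ℂ)) * Complex.exp (z * (x:ℂ))) (fun s => ((s - z) ^ 2)⁻¹)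
    (by fun_prop) ?_ (1 + ‖z‖ * (1 / (-z.re))) (m ^ 2)⁻¹ ?_ ?_
  · refine ContinuousOn.inv₀ (by fun_prop) (fun s hs => ?_)
    exact pow_ne_zero _ (norm_pos_iff.1 (hm.trans_le (h s hs)))
  · intro x hx
    rw [add_mul, one_mul]
    refine (norm_add_le _ _).trans (add_le_add (norm_exp_le hz.le hx) ?_)
    rw [norm_mul, norm_mul, Complex.norm_real, Real.norm_of_nonneg hx, mul_assoc]
    gcongr
    have := t_exp_le (c := -z.re) (x := x) (by linarith)
    rw [Complex.norm_exp]
    simpa using this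
  · intro s hs
    rw [norm_inv, norm_pow]
    have := h s hs
    gcongr

lemma e_differentiable (K : Set ℂ) (hK : IsClosed K) (U : Set ℂ) (hU : IsOpen U)
    (hUK : ∀ z ∈ U, z.re < 0 ∧ z ∉ K) (e : ℂ → XSp K) (he : ∀ z ∈ U, IsE K z (e z)) :
    DifferentiableOn ℂ e U := by
  intro z hz
  obtain ⟨hz0, hzK⟩ := hUK z hz
  obtain ⟨d, d1, d2⟩ := exists_d K hK z hz0 hzK
  obtain ⟨m, hm, hmK⟩ := isolate K hK z hzK
  obtain ⟨c, hc⟩ : ∃ c, c = -z.re := ⟨_, rfl⟩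
  have hc0 : 0 < c := by linarith
  refine DifferentiableAt.differentiableWithinAt ?_
  have : HasDerivAt e d z := by
    rw [hasDerivAt_iff_isLittleO]
    set C := (‖z‖ * (16 / c ^ 2) + 2 / c) + 2 / m ^ 3
    have hO : (fun w => e w - e z - (w - z) • d) =O[nhds z] fun w => ‖w - z‖ ^ 2 := by
      refine Asymptotics.IsBigO.of_bound C ?_
      have ev1 : ∀ᶠ w in nhds z, w ∈ U := hU.mem_nhds hz
      have ev2 : ∀ᶠ w in nhds z, ‖w - z‖ < min (c / 2) (m / 2) := by
        have := Metric.ball_mem_nhds z (ε := min (c / 2) (m / 2)) (by positivity)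
        filter_upwards [this] with w hw
        simpa [dist_eq_norm] using hw
      filter_upwards [ev1, ev2] with w hw1 hw2
      rw [norm_pow, norm_norm]
      have A : w = z + (w - z) := by ring
      have hw3 := (hw2.trans_le (min_le_left _ _)).le
      have hw4 := (hw2.trans_le (min_le_right _ _)).le
      apply normX_le _ _ (by positivity)
      · intro x
        have := rem1 (z := z) hc0 (by linarith) hw3 x.2
        rw [← A] at this
        have h2 : (0:ℝ) ≤ 2 / m ^ 3 := by positivity
        simp only [Prod.fst_sub, Prod.smul_fst, BoundedContinuousFunction.coe_sub, Pi.sub_apply,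
          BoundedContinuousFunction.coe_smul, smul_eq_mul, (he w hw1).1 x, (he z hz).1 x, d1 x]
        refine this.trans ?_
        gcongr
        linarith
      · intro s
        have := rem2 hm (hmK s s.2) hw4
        rw [← A] at this
        have h2 : (0:ℝ) ≤ ‖z‖ * (16 / c ^ 2) + 2 / c := by positivity
        simp only [Prod.snd_sub, Prod.smul_snd, BoundedContinuousFunction.coe_sub, Pi.sub_apply,
          BoundedContinuousFunction.coe_smul, smul_eq_mul, (he w hw1).2 s, (he z hz).2 s, d2 s]
        refine this.trans ?_
        gcongr
        linarith
    refine hO.trans_isLittleO ?_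
    have := Asymptotics.isLittleO_pow_sub_sub z (m := 2) (by norm_num)
    exact this
  exact this.differentiableAt

lemma isC1_exp (z : ℂ) (hz : z.re < 0) :
    IsC1 (fun x : ℝ => Complex.exp (z * (x:ℂ))) (fun x : ℝ => z * Complex.exp (z * (x:ℂ))) := by
  refine ⟨fun x _ => ?_, by fun_prop, ?_⟩
  · have h1 : HasDerivAt (fun y : ℝ => z * (y:ℂ)) z x := by
      simpa using (Complex.ofRealCLM.hasDerivAt (x := x)).const_mul z
    have := h1.cexp
    rw [mul_comm] at this
    exact this.hasDerivWithinAt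
  · rw [tendsto_zero_iff_norm_tendsto_zero]
    have h : Tendsto (fun x : ℝ => ‖z‖ * Real.exp (z.re * x)) atTop (nhds (‖z‖ * 0)) := by
      apply Tendsto.const_mul
      exact Real.tendsto_exp_atBot.comp (tendsto_id.const_mul_atTop_of_neg hz)
    rw [mul_zero] at h
    refine h.congr fun x => ?_
    rw [norm_mul, Complex.norm_exp]; simp

lemma laplace_exp (z s : ℂ) (h : z.re < s.re) :
    Laplace (fun x : ℝ => Complex.exp (z * (x:ℂ))) s = (s - z)⁻¹ := by
  unfold Laplace
  have h1 := integral_exp_mul_complex_Ioi (a := z - s) (by simpa using h) 0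
  have h2 : ∀ x : ℝ, Complex.exp (z * (x:ℂ)) * Complex.exp (-(s * (x:ℂ))) =
      Complex.exp ((z - s) * x) := by
    intro x; rw [← Complex.exp_add]; congr 1; ring
  simp only [h2]
  rw [h1]
  have : s - z ≠ 0 := by
    intro h0
    have := congrArg Complex.re h0
    simp at this; linarith
  simp only [Complex.ofReal_zero, mul_zero, Complex.exp_zero]
  rw [← neg_sub s z, neg_div_neg_eq, one_div]

lemma mem_closure_of_approx {K : Set ℂ} (p : XSp K)
    (h : ∀ ε > 0, ∃ σ σ', IsTest σ σ' ∧ (∀ x : ↥(Set.Ici (0:ℝ)), ‖p.1 x - σ' x‖ ≤ ε) ∧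
      ∀ s : K, ‖p.2 s - Laplace σ s‖ ≤ ε) : p ∈ (WSub K).topologicalClosure := by
  rw [← SetLike.mem_coe, Submodule.topologicalClosure_coe, Metric.mem_closure_iff]
  intro ε hε
  obtain ⟨σ, σ', hT, h1, h2⟩ := h (ε / 2) (by positivity)
  obtain ⟨M, hM, hMb⟩ := hT.toIsC1.bdd
  obtain ⟨q, q1, q2⟩ := mkX K σ' (Laplace σ) hT.cont hT.differentiable.continuous.continuousOn M
    (‖p.2‖ + ε / 2) hMb (fun s hs => by
      have := h2 ⟨s, hs⟩
      have h3 := p.2.norm_coe_le_norm ⟨s, hs⟩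
      have h4 := norm_sub_norm_le (Laplace σ s) (p.2 ⟨s, hs⟩)
      rw [norm_sub_rev] at h4
      simp only at this
      linarith)
  refine ⟨q, ⟨σ, σ', hT, q1, q2⟩, ?_⟩
  rw [dist_eq_norm]
  refine lt_of_le_of_lt (normX_le _ (ε / 2) (by positivity) ?_ ?_) (by linarith)
  · intro x; simpa [q1] using h1 x
  · intro s; simpa [q2] using h2 s

lemma e_mem_left {K : Set ℂ} (α : ℝ) (hα : α < 0) (hK : ∀ s ∈ K, α ≤ s.re) (z : ℂ)
    (hz : z.re < α) (p : XSp K) (hp : IsE K z p) : p ∈ (WSub K).topologicalClosure := by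
  apply mem_closure_of_approx
  intro ε hε
  have hi : IntegrableOn (fun x : ℝ => ‖Complex.exp (z * (x:ℂ))‖ * Real.exp (-(α * x))) (Ioi 0) := by
    have := integrableOn_exp_mul_Ioi (a := z.re - α) (by linarith) 0
    refine this.congr_fun (fun x _ => ?_) measurableSet_Ioi
    simp only [Complex.norm_exp, Complex.re_mul_ofReal]
    rw [← Real.exp_add]; congr 1; ring
  obtain ⟨σ, σ', hT, h1, h2⟩ := truncation (isC1_exp z (hz.trans hα)) α hi ε hε
  refine ⟨σ, σ', hT, fun x => ?_, fun s => ?_⟩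
  · rw [hp.1]; exact h1 x x.2
  · rw [hp.2, ← laplace_exp z s (hz.trans_le (hK s s.2))]; exact h2 s (hK s s.2)

lemma e_mem_conn {K : Set ℂ} (hKc : IsClosed K) (α : ℝ) (hα : α < 0) (hK : ∀ s ∈ K, α ≤ s.re)
    (U : Set ℂ) (hU : IsOpen U) (hUc : IsPreconnected U) (hUK : ∀ z ∈ U, z.re < 0 ∧ z ∉ K)
    (z₀ : ℂ) (hz₀ : z₀ ∈ U) (hz₀' : z₀.re < α) (e : ℂ → XSp K) (he : ∀ z ∈ U, IsE K z (e z))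
    (z : ℂ) (hz : z ∈ U) : e z ∈ (WSub K).topologicalClosure := by
  set Wb := (WSub K).topologicalClosure with hWb
  have : IsClosed (Wb : Set (XSp K)) := (WSub K).isClosed_topologicalClosure
  have hd := e_differentiable K hKc U hU hUK e he
  have hq : DifferentiableOn ℂ (fun z => Wb.mkQL (e z)) U := by
    intro w hw
    exact (Wb.mkQL.differentiableAt (x := e w)).comp_differentiableWithinAt w (hd w hw)
  have ha : AnalyticOnNhd ℂ (fun z => Wb.mkQL (e z)) U := hq.analyticOnNhd hU
  have h0 : (fun z => Wb.mkQL (e z)) =ᶠ[nhds z₀] 0 := by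
    have ev1 : ∀ᶠ w in nhds z₀, w ∈ U := hU.mem_nhds hz₀
    have ev2 : ∀ᶠ w : ℂ in nhds z₀, w.re < α :=
      (isOpen_lt Complex.continuous_re continuous_const).mem_nhds hz₀'
    filter_upwards [ev1, ev2] with w h1 h2
    have := e_mem_left α hα hK w h2 (e w) (he w h1)
    simpa using (Submodule.Quotient.mk_eq_zero Wb).2 this
  have := ha.eqOn_zero_of_preconnected_of_eventuallyEq_zero hUc hz₀ h0 hz
  exact (Submodule.Quotient.mk_eq_zero Wb).1 (by simpa using this)



lemma path_int {K : Set ℂ} (hKc : IsClosed K) (U : Set ℂ) (hU : IsOpen U)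
    (hUK : ∀ z ∈ U, z.re < 0 ∧ z ∉ K) (e : ℂ → XSp K) (he : ∀ z ∈ U, IsE K z (e z))
    (u v : ℝ) (huv : u ≤ v) (γ : ℝ → ℂ) (hγ : Continuous γ)
    (hγU : ∀ t ∈ Icc u v, γ t ∈ U ∧ e (γ t) ∈ (WSub K).topologicalClosure)
    (D : ℂ → ℂ) (hD : ContinuousOn (fun t => D (γ t)) (Icc u v)) :
    ∃ p ∈ (WSub K).topologicalClosure,
      (∀ x : ↥(Set.Ici (0:ℝ)), p.1 x =
        ∫ t in u..v, D (γ t) * (γ t * Complex.exp (γ t * ((x:ℝ):ℂ)))) ∧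
      ∀ s : K, p.2 s = ∫ t in u..v, D (γ t) * ((s:ℂ) - γ t)⁻¹ := by
  have hd := e_differentiable K hKc U hU hUK e he
  set Wb := (WSub K).topologicalClosure with hWb
  have : IsClosed (Wb : Set (XSp K)) := (WSub K).isClosed_topologicalClosure
  have hc : ContinuousOn (fun t => D (γ t) • e (γ t)) (Icc u v) :=
    hD.smul (hd.continuousOn.comp hγ.continuousOn (fun t ht => (hγU t ht).1))
  have hi : IntervalIntegrable (fun t => D (γ t) • e (γ t)) volume u v := by
    apply ContinuousOn.intervalIntegrable; rwa [uIcc_of_le huv]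
  refine ⟨∫ t in u..v, D (γ t) • e (γ t), ?_, ?_, ?_⟩
  · apply (Submodule.Quotient.mk_eq_zero Wb).1
    have h1 := Wb.mkQL.intervalIntegral_comp_comm hi
    have h2 : ∫ t in u..v, Wb.mkQL (D (γ t) • e (γ t)) = 0 := by
      rw [intervalIntegral.integral_congr (g := fun _ => 0)]
      · simp
      · intro t ht
        rw [uIcc_of_le huv] at ht
        have := (Submodule.Quotient.mk_eq_zero Wb).2 (Wb.smul_mem (D (γ t)) (hγU t ht).2)
        simpa using this
    rw [h2] at h1
    simpa using h1.symm
  · intro x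
    have h1 := ((BoundedContinuousFunction.evalCLM ℂ x).comp
      (ContinuousLinearMap.fst ℂ (↥(Set.Ici (0:ℝ)) →ᵇ ℂ) (↥K →ᵇ ℂ))).intervalIntegral_comp_comm hi
    refine Eq.trans h1.symm (intervalIntegral.integral_congr fun t ht => ?_)
    rw [uIcc_of_le huv] at ht
    simp [(he _ (hγU t ht).1).1 x]
  · intro x
    have h1 := ((BoundedContinuousFunction.evalCLM ℂ x).comp
      (ContinuousLinearMap.snd ℂ (↥(Set.Ici (0:ℝ)) →ᵇ ℂ) (↥K →ᵇ ℂ))).intervalIntegral_comp_comm hi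
    refine Eq.trans h1.symm (intervalIntegral.integral_congr fun t ht => ?_)
    rw [uIcc_of_le huv] at ht
    simp [(he _ (hγU t ht).1).2 x]

lemma isClosed_Rbar (α r : ℝ) : IsClosed (Rbar α r) :=
  (isClosed_le continuous_const Complex.continuous_re).inter
    ((isClosed_le Complex.continuous_re continuous_const).inter
      (isClosed_le (continuous_abs.comp Complex.continuous_im) continuous_const))

lemma exists_E (α r : ℝ) (hα : α < 0) : ∃ e : ℂ → XSp (Rbar α r),
    ∀ z, z.re < 0 → (z.re < α ∨ r < |z.im|) →
      IsE (Rbar α r) z (e z) ∧ e z ∈ (WSub (Rbar α r)).topologicalClosure := by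
  have hK := isClosed_Rbar α r
  have hKα : ∀ s ∈ Rbar α r, α ≤ s.re := fun s hs => hs.1
  have hnot : ∀ z : ℂ, (z.re < α ∨ r < |z.im|) → z ∉ Rbar α r := by
    rintro z (h | h) hz
    · exact absurd hz.1 (not_le.2 h)
    · exact absurd hz.2.2 (not_le.2 h)
  have : ∀ z : ℂ, ∃ p : XSp (Rbar α r), z.re < 0 → (z.re < α ∨ r < |z.im|) →
      IsE (Rbar α r) z p := by
    intro z
    by_cases h : z.re < 0 ∧ (z.re < α ∨ r < |z.im|)
    · obtain ⟨p, hp⟩ := exists_e _ hK z h.1 (hnot z h.2)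
      exact ⟨p, fun _ _ => hp⟩
    · exact ⟨0, fun h1 h2 => absurd ⟨h1, h2⟩ h⟩
  choose e he using this
  refine ⟨e, fun z hz hz' => ⟨he z hz hz', ?_⟩⟩
  rcases hz' with h | h
  · exact e_mem_left α hα hKα z h _ (he z hz (Or.inl h))
  · rcases lt_abs.1 h with h | h
    · refine e_mem_conn hK α hα hKα ({z : ℂ | z.re < 0} ∩ {z : ℂ | r < z.im})
        ((isOpen_lt Complex.continuous_re continuous_const).inter
          (isOpen_lt continuous_const Complex.continuous_im))
        ((convex_halfSpace_re_lt 0).inter (convex_halfSpace_im_gt r)).isPreconnected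
        ?_ ⟨α - 1, r + 1⟩ ⟨?_, ?_⟩ ?_ e ?_ z ⟨hz, h⟩
      · exact fun w hw => ⟨hw.1, hnot w (Or.inr (lt_abs.2 (Or.inl hw.2)))⟩
      · show α - 1 < 0
        linarith
      · show r < r + 1
        linarith
      · show α - 1 < α
        linarith
      · exact fun w hw => he w hw.1 (Or.inr (lt_abs.2 (Or.inl hw.2)))
    · refine e_mem_conn hK α hα hKα ({z : ℂ | z.re < 0} ∩ {z : ℂ | z.im < -r})
        ((isOpen_lt Complex.continuous_re continuous_const).inter
          (isOpen_lt Complex.continuous_im continuous_const))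
        ((convex_halfSpace_re_lt 0).inter (convex_halfSpace_im_lt (-r))).isPreconnected
        ?_ ⟨α - 1, -r - 1⟩ ⟨?_, ?_⟩ ?_ e ?_ z ⟨hz, ?_⟩
      · exact fun w hw => ⟨hw.1, hnot w (Or.inr (lt_abs.2 (Or.inr (lt_neg.2 hw.2))))⟩
      · show α - 1 < 0
        linarith
      · show -r - 1 < -r
        linarith
      · show α - 1 < α
        linarith
      · exact fun w hw => he w hw.1 (Or.inr (lt_abs.2 (Or.inr (lt_neg.2 hw.2))))
      · show z.im < -r
        linarith

lemma lemC (α r : ℝ) (hα : α < 0) (hr : 0 < r) (a b ρ c δ m : ℝ) (ha : a < α)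
    (hb : 1 < b) (hρ : r < ρ) (hc : 0 < c) (hc' : c < -α) (hm : 0 < m) (hm1 : m ≤ ρ - r)
    (hm2 : m ≤ b - 1) (D : ℂ → ℂ)
    (hD : ∀ z : ℂ, z.re ∈ Set.Icc a b → z.im ∈ Set.Icc (-ρ) ρ → DifferentiableAt ℂ D z)
    (hδ : ∀ z : ℂ, z.re ∈ Set.Icc (-c) b → z.im ∈ Set.Icc (-ρ) ρ → ‖D z‖ ≤ δ) :
    ∃ p ∈ (WSub (Rbar α r)).topologicalClosure,
      (∀ x : ↥(Set.Ici (0:ℝ)), ‖p.1 x‖ ≤ 2 * ρ * (δ * (|a| + ρ))) ∧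
      ∀ s : Rbar α r, ‖D s - p.2 s‖ ≤ (2 * (b - a) + 2 * ρ) * (δ * m⁻¹) := by
  obtain ⟨e, he⟩ := exists_E α r hα
  have hK := isClosed_Rbar α r
  have hδ0 : 0 ≤ δ := (norm_nonneg _).trans (hδ 0 ⟨by simpa using hc.le, by simp; linarith⟩
    ⟨by simp; linarith, by simp; linarith⟩)
  set U : Set ℂ := {z : ℂ | z.re < 0} ∩ ({z : ℂ | z.re < α} ∪ {z : ℂ | r < |z.im|}) with hUdef
  have hU : IsOpen U := (isOpen_lt Complex.continuous_re continuous_const).inter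
    ((isOpen_lt Complex.continuous_re continuous_const).union
      (isOpen_lt continuous_const (by fun_prop)))
  have hUK : ∀ z ∈ U, z.re < 0 ∧ z ∉ Rbar α r := by
    rintro z ⟨h1, h | h⟩
    · exact ⟨h1, fun hz => absurd hz.1 (not_le.2 h)⟩
    · exact ⟨h1, fun hz => absurd hz.2.2 (not_le.2 h)⟩
  have heU : ∀ z ∈ U, IsE (Rbar α r) z (e z) := fun z hz => (he z hz.1 hz.2).1
  have hac : a ≤ -c := by linarith
  have hDh : ∀ y ∈ Set.Icc (-ρ) ρ, ContinuousOn (fun x : ℝ => D (x + y * Complex.I)) (Icc a b) := by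
    intro y hy x hx
    have h1 := (hD (x + y * Complex.I) (by simpa using hx) (by simpa using hy)).continuousAt
    refine ContinuousAt.continuousWithinAt ?_
    exact ContinuousAt.comp (g := D) (f := fun x : ℝ => (x + y * Complex.I : ℂ)) h1 (by fun_prop)
  have hDv : ∀ x ∈ Set.Icc a b, ContinuousOn (fun y : ℝ => D (x + y * Complex.I)) (Icc (-ρ) ρ) := by
    intro x hx y hy
    have h1 := (hD (x + y * Complex.I) (by simpa using hx) (by simpa using hy)).continuousAt
    refine ContinuousAt.continuousWithinAt ?_
    exact ContinuousAt.comp (g := D) (f := fun y : ℝ => (x + y * Complex.I : ℂ)) h1 (by fun_prop)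
  have hbotU : ∀ y : ℝ, |y| = ρ → ∀ x ∈ Icc a (-c), (x + y * Complex.I : ℂ) ∈ U := by
    intro y hy x hx
    refine ⟨?_, Or.inr ?_⟩
    · have := hx.2
      simp; linarith
    · simp; rw [hy]; exact hρ
  have hleftU : ∀ y : ℝ, (a + y * Complex.I : ℂ) ∈ U := by
    intro y
    refine ⟨?_, Or.inl ?_⟩
    · simp; linarith
    · simpa using ha
  have hρ0 : 0 < ρ := by linarith
  obtain ⟨p1, hp1, p11, p12⟩ := path_int hK U hU hUK e heU a (-c) hac
    (fun x => (x + (-ρ : ℝ) * Complex.I : ℂ)) (by fun_prop)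
    (fun x hx => by
      have := hbotU (-ρ) (by rw [abs_neg, abs_of_pos hρ0]) x hx
      exact ⟨this, (he _ this.1 this.2).2⟩) D
    ((hDh (-ρ) ⟨le_rfl, by linarith⟩).mono (Icc_subset_Icc_right (by linarith)))
  obtain ⟨p2, hp2, p21, p22⟩ := path_int hK U hU hUK e heU a (-c) hac
    (fun x => (x + (ρ : ℝ) * Complex.I : ℂ)) (by fun_prop)
    (fun x hx => by
      have := hbotU (ρ) (by rw [abs_of_pos hρ0]) x hx
      exact ⟨this, (he _ this.1 this.2).2⟩) D
    ((hDh (ρ) ⟨by linarith, le_rfl⟩).mono (Icc_subset_Icc_right (by linarith)))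
  obtain ⟨p3, hp3, p31, p32⟩ := path_int hK U hU hUK e heU (-ρ) ρ (by linarith)
    (fun y => (a + y * Complex.I : ℂ)) (by fun_prop)
    (fun x hx => ⟨hleftU x, (he _ (hleftU x).1 (hleftU x).2).2⟩) D
    (hDv a ⟨le_rfl, by linarith⟩)
  have hpi : (2 * Real.pi * Complex.I : ℂ) ≠ 0 := Complex.two_pi_I_ne_zero
  have hpin : ‖(2 * Real.pi * Complex.I : ℂ)⁻¹‖ ≤ 1 := by
    rw [norm_inv]
    apply inv_le_one_of_one_le₀
    simp only [norm_mul, Complex.norm_ofNat, Complex.norm_real, Complex.norm_I, mul_one]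
    rw [Real.norm_of_nonneg Real.pi_pos.le]
    linarith [Real.pi_gt_three]
  refine ⟨(-(2 * Real.pi * Complex.I : ℂ)⁻¹) • (p1 - p2 - Complex.I • p3),
    Submodule.smul_mem _ _ (Submodule.sub_mem _ (Submodule.sub_mem _ hp1 hp2)
      (Submodule.smul_mem _ _ hp3)), fun x => ?_, fun s => ?_⟩
  · have hcau := Complex.integral_boundary_rect_eq_zero_of_differentiableOn
      (fun z => D z * (z * Complex.exp (z * ((x:ℝ):ℂ)))) ⟨a, -ρ⟩ ⟨-c, ρ⟩ (by
        intro z hz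
        rw [Complex.mem_reProdIm] at hz
        simp only [uIcc_of_le hac, uIcc_of_le (by linarith : -ρ ≤ ρ)] at hz
        have := hD z ⟨hz.1.1, by linarith [hz.1.2]⟩ hz.2
        refine DifferentiableAt.differentiableWithinAt ?_
        exact this.mul (by fun_prop))
    simp only at hcau
    have hval : p1.1 x - p2.1 x - Complex.I * p3.1 x =
        - (Complex.I * ∫ y : ℝ in (-ρ)..ρ, D ((-c : ℝ) + y * Complex.I) *
          (((-c : ℝ) + y * Complex.I) * Complex.exp (((-c : ℝ) + y * Complex.I) * ((x:ℝ):ℂ)))) := by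
      rw [p11, p21, p31]
      simp only [smul_eq_mul] at hcau
      linear_combination hcau
    have hbd : ‖∫ y : ℝ in (-ρ)..ρ, D ((-c : ℝ) + y * Complex.I) *
          (((-c : ℝ) + y * Complex.I) * Complex.exp (((-c : ℝ) + y * Complex.I) * ((x:ℝ):ℂ)))‖
          ≤ (δ * (|a| + ρ)) * |ρ - (-ρ)| := by
      apply intervalIntegral.norm_integral_le_of_norm_le_const
      intro y hy
      rw [uIoc_of_le (by linarith)] at hy
      rw [norm_mul, norm_mul]
      have h1 := hδ ((-c : ℝ) + y * Complex.I) ⟨by simp, by simp; linarith⟩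
        ⟨by simpa using hy.1.le, by simpa using hy.2⟩
      have h2 : ‖((-c : ℝ) + y * Complex.I : ℂ)‖ ≤ |a| + ρ := by
        refine (norm_add_le _ _).trans (add_le_add ?_ ?_)
        · rw [Complex.norm_real, Real.norm_eq_abs, abs_neg, abs_of_pos hc,
            abs_of_neg (by linarith)]; linarith
        · rw [norm_mul, Complex.norm_I, mul_one, Complex.norm_real, Real.norm_eq_abs, abs_le]
          exact ⟨hy.1.le, hy.2⟩
      have h3 : ‖Complex.exp (((-c : ℝ) + y * Complex.I : ℂ) * ((x:ℝ):ℂ))‖ ≤ 1 :=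
        norm_exp_le (by simpa using hc.le) x.2
      calc _ ≤ δ * ((|a| + ρ) * 1) := by gcongr
        _ = _ := by ring
    simp only [Prod.smul_fst, Prod.fst_sub, BoundedContinuousFunction.coe_smul,
      BoundedContinuousFunction.coe_sub, Pi.sub_apply, smul_eq_mul]
    rw [hval, norm_mul, norm_neg, norm_neg, norm_mul, Complex.norm_I, one_mul]
    rw [show |ρ - -ρ| = 2 * ρ by rw [abs_of_pos (by linarith)]; ring] at hbd
    calc _ ≤ 1 * (δ * (|a| + ρ) * (2 * ρ)) := by gcongr
      _ = _ := by ring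
  · obtain ⟨s, hs⟩ := s
    have hsim := abs_le.1 hs.2.2
    have hcau := rect_cauchy a b (-ρ) ρ s D (by linarith [hs.1]) (by linarith [hs.2.1])
      (by linarith) (by linarith) hD
    have hdist : ∀ z : ℂ, (m ≤ |z.re - s.re| ∨ m ≤ |z.im - s.im|) → ‖(z - s)⁻¹‖ ≤ m⁻¹ := by
      intro z hz
      rw [norm_inv]
      apply inv_anti₀ hm
      rcases hz with h | h
      · have := Complex.abs_re_le_norm (z - s)
        rw [Complex.sub_re] at this; linarith
      · have := Complex.abs_im_le_norm (z - s)
        rw [Complex.sub_im] at this; linarith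
    have hIntg : ∀ y : ℝ, |y| = ρ → ∀ u ∈ Icc a b, ∀ v ∈ Icc a b, IntervalIntegrable (fun x : ℝ =>
        D (x + y * Complex.I) * ((x + y * Complex.I : ℂ) - s)⁻¹) volume u v := by
      intro y hy u hu v hv
      apply ContinuousOn.intervalIntegrable
      have hyy : y ∈ Icc (-ρ) ρ := abs_le.1 hy.le
      have hsub : uIcc u v ⊆ Icc a b := uIcc_subset_Icc hu hv
      refine ((hDh y hyy).mono hsub).mul ?_
      refine ContinuousOn.inv₀ (by fun_prop) (fun x _ h0 => ?_)
      have := congrArg Complex.im h0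
      simp at this
      have h2 : |s.im| = ρ := by rw [← hy]; congr 1; linarith
      linarith [hs.2.2]
    have ma : a ∈ Icc a b := ⟨le_rfl, by linarith⟩
    have mb : b ∈ Icc a b := ⟨by linarith, le_rfl⟩
    have mc : -c ∈ Icc a b := ⟨by linarith, by linarith⟩
    have sp1 := intervalIntegral.integral_add_adjacent_intervals
      (hIntg (-ρ) (by rw [abs_neg, abs_of_pos hρ0]) a ma (-c) mc)
      (hIntg (-ρ) (by rw [abs_neg, abs_of_pos hρ0]) (-c) mc b mb)
    have sp2 := intervalIntegral.integral_add_adjacent_intervals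
      (hIntg (ρ) (by rw [abs_of_pos hρ0]) a ma (-c) mc)
      (hIntg (ρ) (by rw [abs_of_pos hρ0]) (-c) mc b mb)
    have q12 := p12 ⟨s, hs⟩
    have q22 := p22 ⟨s, hs⟩
    have q32 := p32 ⟨s, hs⟩
    have flip : ∀ z : ℂ, D z * (s - z)⁻¹ = -(D z * (z - s)⁻¹) := by
      intro z; rw [← neg_sub z s, inv_neg]; ring
    simp only [flip, intervalIntegral.integral_neg] at q12 q22 q32
    have hbH : ∀ y : ℝ, |y| = ρ → ‖∫ x : ℝ in (-c)..b,
        D (x + y * Complex.I) * ((x + y * Complex.I : ℂ) - s)⁻¹‖ ≤ (δ * m⁻¹) * |b - -c| := by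
      intro y hy
      apply intervalIntegral.norm_integral_le_of_norm_le_const
      intro x hx
      rw [uIoc_of_le (by linarith)] at hx
      rw [norm_mul]
      have h1 := hδ (x + y * Complex.I) ⟨by simpa using hx.1.le, by simpa using hx.2⟩
        (by simpa using abs_le.1 hy.le)
      have h2 := hdist (x + y * Complex.I) (Or.inr (by
        have h3 : |y| ≤ |y - s.im| + |s.im| := by simpa using abs_add_le (y - s.im) s.im
        simp
        linarith [hs.2.2]))
      gcongr
    have hbV : ‖∫ y : ℝ in (-ρ)..ρ,
        D (b + y * Complex.I) * ((b + y * Complex.I : ℂ) - s)⁻¹‖ ≤ (δ * m⁻¹) * |ρ - -ρ| := by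
      apply intervalIntegral.norm_integral_le_of_norm_le_const
      intro y hy
      rw [uIoc_of_le (by linarith)] at hy
      rw [norm_mul]
      have h1 := hδ (b + y * Complex.I) ⟨by simp; linarith, by simp⟩
        ⟨by simpa using hy.1.le, by simpa using hy.2⟩
      have h2 := hdist (b + y * Complex.I) (Or.inl (by
        simp
        refine le_trans ?_ (le_abs_self _)
        linarith [hs.2.1]))
      gcongr
    have n1 := hbH (-ρ) (by rw [abs_neg, abs_of_pos hρ0])
    have n2 := hbH ρ (abs_of_pos hρ0)
    rw [show |ρ - -ρ| = 2 * ρ by rw [abs_of_pos (by linarith)]; ring] at hbV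
    rw [abs_of_pos (by linarith)] at n1 n2
    set A := ∫ x : ℝ in (-c)..b, D (x + (-ρ:ℝ) * Complex.I) * ((x + (-ρ:ℝ) * Complex.I : ℂ) - s)⁻¹
    set B := ∫ x : ℝ in (-c)..b, D (x + (ρ:ℝ) * Complex.I) * ((x + (ρ:ℝ) * Complex.I : ℂ) - s)⁻¹
    set C := ∫ y : ℝ in (-ρ)..ρ, D (b + y * Complex.I) * ((b + y * Complex.I : ℂ) - s)⁻¹
    have hkey : 2 * Real.pi * Complex.I * D s +
        (p1.2 ⟨s, hs⟩ - p2.2 ⟨s, hs⟩ - Complex.I * p3.2 ⟨s, hs⟩) = A - B + Complex.I * C := by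
      rw [q12, q22, q32, ← hcau, ← sp1, ← sp2]
      simp only [smul_eq_mul]
      ring
    simp only [Prod.smul_snd, Prod.snd_sub, BoundedContinuousFunction.coe_smul,
      BoundedContinuousFunction.coe_sub, Pi.sub_apply, smul_eq_mul]
    have hfin : D s - -(2 * Real.pi * Complex.I : ℂ)⁻¹ *
        (p1.2 ⟨s, hs⟩ - p2.2 ⟨s, hs⟩ - Complex.I * p3.2 ⟨s, hs⟩) =
        (2 * Real.pi * Complex.I : ℂ)⁻¹ * (A - B + Complex.I * C) := by
      rw [← hkey, mul_add, inv_mul_cancel_left₀ hpi]; ring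
    rw [hfin, norm_mul]
    have hd0 : 0 ≤ δ * m⁻¹ := by positivity
    have hN : ‖A - B + Complex.I * C‖ ≤ (2 * (b - a) + 2 * ρ) * (δ * m⁻¹) := by
      refine (norm_add_le _ _).trans ?_
      rw [norm_mul, Complex.norm_I, one_mul]
      have := norm_sub_le A B
      have h5 : δ * m⁻¹ * (b - -c) ≤ δ * m⁻¹ * (b - a) := by gcongr
      nlinarith
    calc _ ≤ 1 * ((2 * (b - a) + 2 * ρ) * (δ * m⁻¹)) := by gcongr
      _ = _ := one_mul _


lemma isCompact_rect (a b r : ℝ) : IsCompact {s : ℂ | a ≤ s.re ∧ s.re ≤ b ∧ |s.im| ≤ r} := by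
  have : {s : ℂ | a ≤ s.re ∧ s.re ≤ b ∧ |s.im| ≤ r} = Icc a b ×ℂ Icc (-r) r := by
    ext s
    simp only [mem_ofPred_eq, Complex.mem_reProdIm, mem_Icc, abs_le]
    tauto
  rw [this]
  exact isCompact_Icc.reProdIm isCompact_Icc

lemma IsC1.dilate {τ τ' : ℝ → ℂ} (h : IsC1 τ τ') (l : ℝ) (hl : 0 < l) :
    IsC1 (fun x => (l:ℂ) * τ (l * x)) (fun x => (l:ℂ) ^ 2 * τ' (l * x)) := by
  have hmaps : MapsTo (fun x : ℝ => l * x) (Ici 0) (Ici 0) := fun x hx => mul_nonneg hl.le hx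
  refine ⟨fun x hx => ?_, ?_, ?_⟩
  · have h1 := h.der (l * x) (hmaps hx)
    have h2 : HasDerivWithinAt (fun x : ℝ => l * x) l (Ici 0) x := by
      simpa using ((hasDerivAt_id x).const_mul l).hasDerivWithinAt
    have h3 := (h1.scomp x h2 hmaps).const_mul (l:ℂ)
    refine h3.congr_deriv ?_
    rw [Complex.real_smul]; ring
  · exact continuousOn_const.mul (h.cont.comp (by fun_prop) hmaps)
  · have : Tendsto (fun x : ℝ => l * x) atTop atTop := tendsto_id.const_mul_atTop hl
    simpa using (h.lim.comp this).const_mul ((l:ℂ) ^ 2)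

lemma laplace_dilate (τ : ℝ → ℂ) (l : ℝ) (hl : 0 < l) (s : ℂ) :
    Laplace (fun x => (l:ℂ) * τ (l * x)) s = Laplace τ (s / l) := by
  have hl' : (l:ℂ) ≠ 0 := by exact_mod_cast hl.ne'
  unfold Laplace
  have h1 := integral_comp_mul_left_Ioi
    (fun x : ℝ => τ x * Complex.exp (-(s / l * (x:ℂ)))) 0 hl
  rw [mul_zero] at h1
  have h2 : ∀ x : ℝ, (l:ℂ) * τ (l * x) * Complex.exp (-(s * (x:ℂ))) =
      (l:ℂ) * (τ (l * x) * Complex.exp (-(s / l * ((l * x : ℝ):ℂ)))) := by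
    intro x
    rw [mul_assoc]
    congr 4
    push_cast
    field_simp
  simp only [h2]
  rw [integral_const_mul, h1, Complex.real_smul]
  push_cast
  rw [mul_inv_cancel_left₀ hl']

lemma dil_close {τ τ' : ℝ → ℂ} (h : IsC1 τ τ') (ε : ℝ) (hε : 0 < ε) :
    ∃ η > 0, ∀ l : ℝ, 1 < l → l < 1 + η → ∀ x, 0 ≤ x → ‖τ' x - (l:ℂ) ^ 2 * τ' (l * x)‖ ≤ ε := by
  obtain ⟨M, hM, hMb⟩ := h.bdd
  obtain ⟨N, hN⟩ := (Metric.tendsto_atTop.1 h.lim) (ε / 8) (by positivity)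
  have hN' : ∀ x, max N 1 ≤ x → ‖τ' x‖ ≤ ε / 8 := by
    intro x hx
    have := hN x ((le_max_left _ _).trans hx)
    rw [dist_zero_right] at this
    exact this.le
  obtain ⟨P, hP⟩ : ∃ P, P = max N 1 := ⟨_, rfl⟩
  rw [← hP] at hN'
  have hP0 : 0 < P := by rw [hP]; exact lt_max_of_lt_right one_pos
  have huc := (isCompact_Icc (a := (0:ℝ)) (b := 2 * P)).uniformContinuousOn_of_continuous
    (h.cont.mono Icc_subset_Ici_self)
  obtain ⟨θ, hθ, hθ'⟩ := Metric.uniformContinuousOn_iff.1 huc (ε / 2) (by positivity)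
  refine ⟨min 1 (min (θ / P) (ε / (6 * M))), by positivity, fun l hl hl' x hx => ?_⟩
  have g1 : l - 1 < 1 := by linarith [min_le_left 1 (min (θ / P) (ε / (6 * M)))]
  have g2 : l - 1 < θ / P := by
    have := (min_le_right 1 (min (θ / P) (ε / (6 * M)))).trans (min_le_left _ _)
    linarith
  have g3 : l - 1 < ε / (6 * M) := by
    have := (min_le_right 1 (min (θ / P) (ε / (6 * M)))).trans (min_le_right _ _)
    linarith
  rw [lt_div_iff₀ hP0] at g2
  rw [lt_div_iff₀ (by positivity)] at g3
  have hl2 : ‖(l:ℂ) ^ 2‖ = l ^ 2 := by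
    rw [norm_pow, Complex.norm_real, Real.norm_of_nonneg (by linarith)]
  by_cases hxP : P ≤ x
  · have a1 := hN' x hxP
    have a2 := hN' (l * x) (by nlinarith)
    refine (norm_sub_le _ _).trans ?_
    rw [norm_mul, hl2]
    have : l ^ 2 ≤ 4 := by nlinarith
    have : l ^ 2 * ‖τ' (l * x)‖ ≤ 4 * (ε / 8) := by gcongr
    linarith
  · push Not at hxP
    have hlx : 0 ≤ l * x := by nlinarith
    have a1 := hθ' x ⟨hx, by linarith⟩ (l * x) ⟨hlx, by nlinarith⟩ (by
      rw [dist_comm, Real.dist_eq, abs_of_nonneg (by nlinarith)]; nlinarith)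
    rw [dist_eq_norm] at a1
    have e1 : τ' x - (l:ℂ) ^ 2 * τ' (l * x) = (τ' x - τ' (l * x)) +
        (((1 - l ^ 2 : ℝ):ℂ)) * τ' (l * x) := by push_cast; ring
    rw [e1]
    refine (norm_add_le _ _).trans ?_
    rw [norm_mul, Complex.norm_real, Real.norm_eq_abs, abs_sub_comm, abs_of_nonneg (by nlinarith)]
    have a2 := hMb (l * x) hlx
    have : (l ^ 2 - 1) * ‖τ' (l * x)‖ ≤ (3 * (l - 1)) * M := by
      apply mul_le_mul (by nlinarith) a2 (norm_nonneg _) (by linarith)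
    linarith

lemma F_close (α r : ℝ) (hα : α < 0) (F : ℂ → ℂ) (hF : ContinuousOn F (Rbar α r))
    (ε : ℝ) (hε : 0 < ε) :
    ∃ η > 0, ∀ l : ℝ, 1 < l → l < 1 + η → ∀ s ∈ Rbar α r, ‖F s - F (s / l)‖ ≤ ε := by
  have hK : IsCompact (Rbar α r) := isCompact_rect α 1 r
  obtain ⟨S, hS⟩ := hK.exists_bound_of_continuousOn continuousOn_id
  obtain ⟨θ, hθ, hθ'⟩ := Metric.uniformContinuousOn_iff.1
    (hK.uniformContinuousOn_of_continuous hF) ε hε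
  refine ⟨θ / (|S| + 1), by positivity, fun l hl hl' s hs => ?_⟩
  have hl0 : 0 < l := by linarith
  have hmem : s / l ∈ Rbar α r := by
    refine ⟨?_, ?_, ?_⟩
    · rw [Complex.div_ofReal_re, le_div_iff₀ hl0]; nlinarith [hs.1]
    · rw [Complex.div_ofReal_re, div_le_iff₀ hl0]; nlinarith [hs.2.1]
    · rw [Complex.div_ofReal_im, abs_div, abs_of_pos hl0, div_le_iff₀ hl0]
      nlinarith [hs.2.2, abs_nonneg s.im]
  have := hθ' s hs (s / l) hmem (by
    have hlc : (l:ℂ) ≠ 0 := by exact_mod_cast hl0.ne'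
    have e1 : s - s / l = s * (((l - 1) / l : ℝ) : ℂ) := by
      push_cast; field_simp
    rw [dist_eq_norm, e1, norm_mul, Complex.norm_real, Real.norm_of_nonneg
      (div_nonneg (by linarith) hl0.le)]
    have h1 : ‖s‖ ≤ |S| + 1 := by
      have := hS s hs
      simp only [id] at this
      linarith [le_abs_self S]
    have h2 : (l - 1) / l ≤ l - 1 := div_le_self (by linarith) hl.le
    have h3 : l - 1 < θ / (|S| + 1) := by linarith
    have h4 : 0 < |S| + 1 := by positivity
    rw [lt_div_iff₀ h4] at h3
    calc _ ≤ (|S| + 1) * (l - 1) := by gcongr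
      _ < θ := by linarith)
  rw [dist_eq_norm] at this
  exact this.le

lemma main_aux
    (α r : ℝ) (hα : α < 0) (hr : 0 < r)
    (τ τ' : ℝ → ℂ) (F : ℂ → ℂ) (h : IsC1 τ τ')
    (hFan : DifferentiableOn ℂ F (Ropen α r))
    (hFcont : ContinuousOn F (Rbar α r))
    (hFeq : ∀ s ∈ Rbar α r, 0 < s.re → F s = Laplace τ s)
    (ε : ℝ) (hε : 0 < ε) :
    ∃ σ σ', IsTest σ σ' ∧ (∀ x : ℝ, 0 ≤ x → ‖τ' x - σ' x‖ ≤ 4 * ε) ∧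
        (∀ s ∈ Rbar α r, ‖F s - Laplace σ s‖ ≤ 4 * ε) := by
  obtain ⟨η₁, hη₁, d1⟩ := dil_close h ε hε
  obtain ⟨η₂, hη₂, d2⟩ := F_close α r hα F hFcont ε hε
  obtain ⟨l, hl, hlη⟩ : ∃ l, 1 < l ∧ l < 1 + min η₁ η₂ :=
    exists_between (by linarith [lt_min hη₁ hη₂])
  replace d1 := d1 l hl (by linarith [min_le_left η₁ η₂])
  replace d2 := d2 l hl (by linarith [min_le_right η₁ η₂])
  have hl0 : 0 < l := by linarith
  obtain ⟨k, hk, hkl⟩ := exists_between hl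
  set a := k * α with ha
  set b := k with hb
  set ρ := k * r with hρ
  have ha' : a < α := by rw [ha]; nlinarith
  have hla : l * α < a := by rw [ha]; nlinarith
  have hρr : r < ρ := by rw [hρ]; nlinarith
  have hρl : ρ < l * r := by rw [hρ]; nlinarith
  have hρ0 : 0 < ρ := by linarith
  set m := min (ρ - r) (b - 1) with hm
  have hm0 : 0 < m := lt_min (by linarith) (by linarith)
  set C1 := 2 * ρ * (2 * (|a| + ρ)) with hC1
  set C2 := (2 * (b - a) + 2 * ρ) * (2 * m⁻¹) with hC2
  have hC10 : 0 ≤ C1 := by positivity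
  have hba : 0 < b - a := by linarith
  have hC20 : 0 ≤ C2 := by positivity
  set δ := ε / (1 + C1 + C2) with hδ
  have hδ0 : 0 < δ := by positivity
  have hδe : δ * (1 + C1 + C2) = ε := by rw [hδ]; field_simp
  have hδ1 : δ ≤ ε := by nlinarith
  have hδC1 : δ * C1 ≤ ε := by nlinarith [mul_nonneg hδ0.le hC20]
  have hδC2 : δ * C2 ≤ ε := by nlinarith [mul_nonneg hδ0.le hC10]
  have hmem : ∀ s : ℂ, a ≤ s.re → s.re ≤ b → |s.im| ≤ l * r → s / l ∈ Rbar α r := by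
    intro s h1 h2 h3
    refine ⟨?_, ?_, ?_⟩
    · rw [Complex.div_ofReal_re, le_div_iff₀ hl0]; linarith
    · rw [Complex.div_ofReal_re, div_le_iff₀ hl0]; linarith
    · rw [Complex.div_ofReal_im, abs_div, abs_of_pos hl0, div_le_iff₀ hl0]; linarith
  have hmemo : ∀ s : ℂ, a ≤ s.re → s.re ≤ b → |s.im| ≤ ρ → s / l ∈ Ropen α r := by
    intro s h1 h2 h3
    refine ⟨?_, ?_, ?_⟩
    · rw [Complex.div_ofReal_re, lt_div_iff₀ hl0]; linarith
    · rw [Complex.div_ofReal_re, div_lt_iff₀ hl0]; linarith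
    · rw [Complex.div_ofReal_im, abs_div, abs_of_pos hl0, div_lt_iff₀ hl0]; linarith
  have hRo : IsOpen (Ropen α r) := (isOpen_lt continuous_const Complex.continuous_re).inter
    ((isOpen_lt Complex.continuous_re continuous_const).inter
      (isOpen_lt (continuous_abs.comp Complex.continuous_im) continuous_const))
  obtain ⟨σ₂, σ₂', hT2, e1, e2⟩ := exists_cut (h.dilate l hl0) (fun s => F (s / l)) a b ρ (l * r)
    (by linarith) hρl
    (hFcont.comp (by fun_prop) (fun s hs => hmem s hs.1 hs.2.1 hs.2.2))
    (fun s hs1 hs2 hs3 => by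
      rw [laplace_dilate τ l hl0]
      apply hFeq _ (hmem s (by linarith) hs2 hs3)
      rw [Complex.div_ofReal_re]; positivity) δ hδ0
  set D : ℂ → ℂ := fun s => F (s / l) - Laplace σ₂ s with hDdef
  have hD : ∀ z : ℂ, z.re ∈ Set.Icc a b → z.im ∈ Set.Icc (-ρ) ρ → DifferentiableAt ℂ D z := by
    intro z h1 h2
    have h3 : DifferentiableAt ℂ F (z / l) :=
      hFan.differentiableAt (hRo.mem_nhds (hmemo z h1.1 h1.2 (abs_le.2 h2)))
    refine DifferentiableAt.sub ?_ (hT2.differentiable z)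
    exact DifferentiableAt.comp z h3 (by fun_prop)
  have hDc : ContinuousOn D {s : ℂ | a ≤ s.re ∧ s.re ≤ b ∧ |s.im| ≤ ρ} := fun z hz =>
    (hD z ⟨hz.1, hz.2.1⟩ (abs_le.1 hz.2.2)).continuousAt.continuousWithinAt
  obtain ⟨θ, hθ, hθ'⟩ := Metric.uniformContinuousOn_iff.1
    ((isCompact_rect a b ρ).uniformContinuousOn_of_continuous hDc) δ hδ0
  obtain ⟨c, hc, hcm⟩ : ∃ c, 0 < c ∧ c < min (θ / 2) (min (1 / 2) (-α)) :=
    exists_between (by apply lt_min (by positivity) (lt_min (by norm_num) (by linarith)))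
  have hcθ : c < θ / 2 := hcm.trans_le (min_le_left _ _)
  have hc1 : c < 1 / 2 := hcm.trans_le ((min_le_right _ _).trans (min_le_left _ _))
  have hcα : c < -α := hcm.trans_le ((min_le_right _ _).trans (min_le_right _ _))
  have hsmall : ∀ z : ℂ, z.re ∈ Set.Icc (-c) b → z.im ∈ Set.Icc (-ρ) ρ → ‖D z‖ ≤ 2 * δ := by
    intro z h1 h2
    by_cases hz : 0 < z.re
    · have := e2 z hz h1.2 (abs_le.2 h2)
      exact this.trans (by linarith)
    · push Not at hz
      have hw := e2 (z + (2 * c : ℝ)) (by simp; linarith [h1.1]) (by simp; linarith)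
        (by simpa using abs_le.2 h2)
      have hdist := hθ' z ⟨by linarith [h1.1], h1.2, abs_le.2 h2⟩ (z + (2 * c : ℝ))
        ⟨by simp; linarith [h1.1], by simp; linarith, by simpa using abs_le.2 h2⟩ (by
          rw [dist_comm, dist_eq_norm, add_sub_cancel_left, Complex.norm_real,
            Real.norm_of_nonneg (by linarith)]; linarith)
      rw [dist_eq_norm] at hdist
      have h5 : ‖D z‖ ≤ ‖D z - D (z + (2 * c : ℝ))‖ + ‖D (z + (2 * c : ℝ))‖ := by
        simpa using norm_add_le (D z - D (z + (2 * c : ℝ))) (D (z + (2 * c : ℝ)))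
      have h6 : ‖D (z + (2 * c : ℝ))‖ ≤ δ := hw
      linarith
  obtain ⟨p, hp, pb1, pb2⟩ := lemC α r hα hr a b ρ c (2 * δ) m ha' hk hρr hc hcα hm0
    (min_le_left _ _) (min_le_right _ _) D hD hsmall
  rw [← SetLike.mem_coe, Submodule.topologicalClosure_coe, Metric.mem_closure_iff] at hp
  obtain ⟨q, ⟨σ₃, σ₃', hT3, q1, q2⟩, hq⟩ := hp ε hε
  rw [dist_eq_norm, Prod.norm_def] at hq
  refine ⟨_, _, hT2.add hT3, fun x hx => ?_, fun s hs => ?_⟩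
  · have f1 := d1 x hx
    have f2 := e1 x hx
    have f3 := pb1 ⟨x, hx⟩
    have f4 := ((p - q).1.norm_coe_le_norm ⟨x, hx⟩).trans ((le_max_left _ _).trans hq.le)
    have f5 := q1 ⟨x, hx⟩
    simp only [Prod.fst_sub, BoundedContinuousFunction.coe_sub, Pi.sub_apply, f5] at f4
    have e3 : τ' x - (σ₂' x + σ₃' x) = (τ' x - (l:ℂ) ^ 2 * τ' (l * x)) +
      ((l:ℂ) ^ 2 * τ' (l * x) - σ₂' x) - p.1 ⟨x, hx⟩ + (p.1 ⟨x, hx⟩ - σ₃' x) := by ring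
    rw [e3]
    have f6 : ‖p.1 ⟨x, hx⟩‖ ≤ ε := by
      refine f3.trans (le_trans (le_of_eq ?_) hδC1); rw [hC1]; ring
    refine (norm_add_le _ _).trans ?_
    have := norm_sub_le ((τ' x - (l:ℂ) ^ 2 * τ' (l * x)) +
      ((l:ℂ) ^ 2 * τ' (l * x) - σ₂' x)) (p.1 ⟨x, hx⟩)
    have := norm_add_le (τ' x - (l:ℂ) ^ 2 * τ' (l * x)) ((l:ℂ) ^ 2 * τ' (l * x) - σ₂' x)
    linarith
  · have f1 := d2 s hs
    have f3 := pb2 ⟨s, hs⟩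
    have f4 := ((p - q).2.norm_coe_le_norm ⟨s, hs⟩).trans ((le_max_right _ _).trans hq.le)
    have f5 := q2 ⟨s, hs⟩
    simp only [Prod.snd_sub, BoundedContinuousFunction.coe_sub, Pi.sub_apply, f5] at f4
    have f6 : ‖D s - p.2 ⟨s, hs⟩‖ ≤ ε := by
      refine f3.trans (le_trans (le_of_eq ?_) hδC2); rw [hC2]; ring
    rw [hT2.laplace_add hT3]
    have e3 : F s - (Laplace σ₂ s + Laplace σ₃ s) = (F s - F (s / l)) +
      (D s - p.2 ⟨s, hs⟩) + (p.2 ⟨s, hs⟩ - Laplace σ₃ s) := by rw [hDdef]; ring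
    rw [e3]
    refine (norm_add_le _ _).trans ?_
    have := norm_add_le (F s - F (s / l)) (D s - p.2 ⟨s, hs⟩)
    linarith

/-- `V_{-∞}` is dense in the Banach space `V_{α,r}`: every `τ ∈ V_{α,r}` (with
extension `F` of its Laplace transform) can be approximated in the norm
`‖τ‖_{α,r} = sup_{x≥0}|τ'(x)| + sup_{s∈R̄_{α,r}}|F(s)|` by functions `σ ∈ V_{-∞}`
whose Laplace transforms extend to entire functions `G`. -/
theorem Vminusinfty_dense_in_Valphar
    (α r : ℝ) (hα : α < 0) (hr : 0 < r)
    (τ τ' : ℝ → ℂ) (F : ℂ → ℂ)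
    (hder : ∀ x ∈ Set.Ici (0 : ℝ), HasDerivWithinAt τ (τ' x) (Set.Ici 0) x)
    (hcont : ContinuousOn τ' (Set.Ici 0))
    (hto0 : Tendsto τ' atTop (nhds 0))
    (hFan : DifferentiableOn ℂ F (Ropen α r))
    (hFcont : ContinuousOn F (Rbar α r))
    (hFeq : ∀ s ∈ Rbar α r, 0 < s.re → F s = Laplace τ s)
    (ε : ℝ) (hε : 0 < ε) :
    ∃ (σ σ' : ℝ → ℂ) (G : ℂ → ℂ),
      (∀ x ∈ Set.Ici (0 : ℝ), HasDerivWithinAt σ (σ' x) (Set.Ici 0) x) ∧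
      ContinuousOn σ' (Set.Ici 0) ∧
      Tendsto σ' atTop (nhds 0) ∧
      Differentiable ℂ G ∧
      (∀ s : ℂ, 0 < s.re → G s = Laplace σ s) ∧
      ∃ ε₁ ε₂ : ℝ, 0 ≤ ε₁ ∧ 0 ≤ ε₂ ∧ ε₁ + ε₂ < ε ∧
        (∀ x : ℝ, 0 ≤ x → ‖τ' x - σ' x‖ ≤ ε₁) ∧
        (∀ s ∈ Rbar α r, ‖F s - G s‖ ≤ ε₂) := by
  obtain ⟨σ, σ', hT, h1, h2⟩ := main_aux α r hα hr τ τ' F ⟨hder, hcont, hto0⟩ hFan hFcont hFeq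
    (ε / 16) (by positivity)
  exact ⟨σ, σ', Laplace σ, hT.der, hT.cont, hT.lim, hT.differentiable, fun _ _ => rfl,
    4 * (ε / 16), 4 * (ε / 16), by positivity, by positivity, by linarith, h1, h2⟩
end

section
/- Let α < 0. For every τ ∈ V_α with associated analytic extension F of its Laplace transform to the half-plane Re s > α, every α' with α < α' < 0, every r > 0, and every ε > 0, there exists σ ∈ V_{-∞}, with entire extension G, such that sup_{x≥0}|τ'(x) − σ'(x)| + sup_{s∈R̄_{α',r}} |F(s) − G(s)| < ε. That is, V_{-∞} is dense in the Fréchet space V_α. -/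
open Filter Set MeasureTheory

lemma aux_growth (τ τ' : ℝ → ℂ)
    (hder : ∀ x ∈ Set.Ici (0 : ℝ), HasDerivWithinAt τ (τ' x) (Set.Ici 0) x)
    (hto0 : Tendsto τ' atTop (nhds 0)) (η : ℝ) (hη : 0 < η) :
    ∃ A : ℝ, 0 ≤ A ∧ ∀ x, 0 ≤ x → ‖τ x‖ ≤ A + η * x := by
  have hc : ContinuousOn τ (Set.Ici 0) := fun x hx => (hder x hx).continuousWithinAt
  have h1 : ∀ᶠ x in atTop, ‖τ' x‖ < η := by
    have := hto0.norm
    rw [norm_zero] at this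
    exact this.eventually_lt_const hη
  obtain ⟨X0, hX0⟩ := eventually_atTop.1 h1
  set X := max X0 0 with hX
  have hX0' : 0 ≤ X := le_max_right _ _
  obtain ⟨A, hA⟩ := (isCompact_Icc (a := (0:ℝ)) (b := X)).exists_bound_of_continuousOn
    (hc.mono Icc_subset_Ici_self)
  have hA0 : 0 ≤ A := (norm_nonneg _).trans (hA 0 ⟨le_rfl, hX0'⟩)
  refine ⟨A, hA0, fun x hx => ?_⟩
  rcases le_total x X with h | h
  · have := hA x ⟨hx, h⟩
    nlinarith
  · have h2 : ‖τ x - τ X‖ ≤ η * ‖x - X‖ := by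
      refine Convex.norm_image_sub_le_of_norm_hasDerivWithin_le (s := Set.Ici X) (f' := τ')
        (fun y hy => (hder y (hX0'.trans hy)).mono (Ici_subset_Ici.2 hX0'))
        (fun y hy => (hX0 y ((le_max_left _ _).trans hy)).le) (convex_Ici X) ?_ ?_
      · simp
      · simpa using h
    rw [Real.norm_of_nonneg (by linarith)] at h2
    have h3 := hA X ⟨hX0', le_rfl⟩
    have h4 : ‖τ x‖ ≤ ‖τ x - τ X‖ + ‖τ X‖ := by
      simpa using norm_add_le (τ x - τ X) (τ X)
    nlinarith

lemma aux_exp1 (y : ℝ) : y * Real.exp (-y ^ 2) ≤ 1 := by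
  have h := Real.add_one_le_exp (y ^ 2)
  rw [Real.exp_neg, ← div_eq_mul_inv, div_le_one (Real.exp_pos _)]
  nlinarith [sq_nonneg (y - 1)]

lemma aux_exp2 (y : ℝ) : y ^ 2 * Real.exp (-y ^ 2) ≤ 1 := by
  have h := Real.add_one_le_exp (y ^ 2)
  rw [Real.exp_neg, ← div_eq_mul_inv, div_le_one (Real.exp_pos _)]
  linarith

lemma aux_deriv (τ τ' : ℝ → ℂ)
    (hder : ∀ x ∈ Set.Ici (0 : ℝ), HasDerivWithinAt τ (τ' x) (Set.Ici 0) x)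
    (hcont : ContinuousOn τ' (Set.Ici 0))
    (hto0 : Tendsto τ' atTop (nhds 0)) (ε : ℝ) (hε : 0 < ε) :
    ∃ C : ℝ, 0 ≤ C ∧ ∀ δ : ℝ, 0 < δ → δ ≤ 1 → ∀ x, 0 ≤ x →
      ‖τ' x - (τ' x * (Real.exp (-(δ * x ^ 2)) : ℂ)
        + τ x * ((-(2 * δ * x) * Real.exp (-(δ * x ^ 2)) : ℝ) : ℂ))‖ ≤ ε + C * √δ := by
  obtain ⟨A, hA0, hA⟩ := aux_growth τ τ' hder hto0 (ε / 4) (by linarith)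
  have h1 : ∀ᶠ x in atTop, ‖τ' x‖ < ε / 4 := by
    have := hto0.norm
    rw [norm_zero] at this
    exact this.eventually_lt_const (by linarith)
  obtain ⟨X0, hX0⟩ := eventually_atTop.1 h1
  set X := max X0 0 with hX
  have hX0' : 0 ≤ X := le_max_right _ _
  obtain ⟨B, hB⟩ := (isCompact_Icc (a := (0:ℝ)) (b := X)).exists_bound_of_continuousOn
    (hcont.mono Icc_subset_Ici_self)
  have hB0 : 0 ≤ B := (norm_nonneg _).trans (hB 0 ⟨le_rfl, hX0'⟩)
  refine ⟨2 * A + B * X ^ 2, by positivity, fun δ hδ hδ1 x hx => ?_⟩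
  set E := Real.exp (-(δ * x ^ 2)) with hE
  have hE0 : 0 < E := Real.exp_pos _
  have hE1 : E ≤ 1 := Real.exp_le_one_iff.2 (by nlinarith [mul_nonneg hδ.le (sq_nonneg x)])
  have hsq : 0 < √δ := Real.sqrt_pos.2 hδ
  have hs2 : √δ ^ 2 = δ := Real.sq_sqrt hδ.le
  have hsle : √δ ≤ 1 := Real.sqrt_le_one.2 hδ1
  have hyE : E = Real.exp (-(√δ * x) ^ 2) := by rw [hE, mul_pow, hs2]
  have e1 : (√δ * x) * E ≤ 1 := hyE ▸ aux_exp1 (√δ * x)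
  have e2 : (√δ * x) ^ 2 * E ≤ 1 := hyE ▸ aux_exp2 (√δ * x)
  have heq : τ' x - (τ' x * (E : ℂ) + τ x * ((-(2 * δ * x) * E : ℝ) : ℂ))
      = τ' x * ((1 - E : ℝ) : ℂ) + τ x * ((2 * δ * x * E : ℝ) : ℂ) := by
    push_cast; ring
  rw [heq]
  refine (norm_add_le _ _).trans ?_
  rw [norm_mul, norm_mul, Complex.norm_real, Complex.norm_real,
    Real.norm_of_nonneg (by linarith), Real.norm_of_nonneg (by positivity)]
  have t1 : ‖τ' x‖ * (1 - E) ≤ ε / 4 + B * X ^ 2 * √δ := by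
    rcases le_total x X with h | h
    · have hb := hB x ⟨hx, h⟩
      have he : 1 - E ≤ δ * x ^ 2 := by
        have := Real.add_one_le_exp (-(δ * x ^ 2)); linarith
      have hx2 : x ^ 2 ≤ X ^ 2 := by gcongr
      have hd : δ ≤ √δ := by nlinarith
      have : 1 - E ≤ √δ * X ^ 2 := he.trans (by gcongr)
      have : ‖τ' x‖ * (1 - E) ≤ B * (√δ * X ^ 2) := by
        apply mul_le_mul hb this (by linarith) hB0
      linarith
    · have := (hX0 x ((le_max_left _ _).trans h)).le
      have h5 : ‖τ' x‖ * (1 - E) ≤ ε / 4 * 1 := by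
        apply mul_le_mul this (by linarith) (by linarith) (by linarith)
      have : 0 ≤ B * X ^ 2 * √δ := by positivity
      linarith
  have t2 : ‖τ x‖ * (2 * δ * x * E) ≤ 2 * A * √δ + ε / 2 := by
    calc ‖τ x‖ * (2 * δ * x * E) ≤ (A + ε / 4 * x) * (2 * δ * x * E) := by
          gcongr; exact hA x hx
      _ = 2 * A * √δ * ((√δ * x) * E) + ε / 2 * ((√δ * x) ^ 2 * E) := by
          rw [mul_pow, hs2]
          nth_rewrite 1 [← hs2]
          nth_rewrite 1 [← hs2]
          rw [Real.sqrt_sq hsq.le]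
          ring_nf
          rw [hs2]
          ring
      _ ≤ 2 * A * √δ * 1 + ε / 2 * 1 := by gcongr
      _ = _ := by ring
  linarith

lemma aux_absgauss (n : ℝ) (hn : 0 < n) :
    Integrable (fun v : ℝ => |v| * Real.exp (-n * v ^ 2)) ∧
    ∫ v : ℝ, |v| * Real.exp (-n * v ^ 2) = 1 / n := by
  constructor
  · have := (integrable_mul_exp_neg_mul_sq hn).norm
    refine this.congr (ae_of_all _ fun v => ?_)
    simp [abs_mul, abs_of_pos (Real.exp_pos _)]
  · have h := integral_comp_abs (f := fun v : ℝ => v * Real.exp (-n * v ^ 2))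
    simp only [sq_abs] at h
    rw [h]
    have h2 := integral_mul_cexp_neg_mul_sq (b := (n : ℂ)) (by simpa using hn)
    have h3 : ((∫ r in Set.Ioi (0:ℝ), r * Real.exp (-n * r ^ 2) : ℝ) : ℂ) = ((2 * n)⁻¹ : ℝ) := by
      rw [← integral_complex_ofReal]
      push_cast
      exact h2
    rw [Complex.ofReal_inj.1 h3]
    field_simp

lemma aux_norm_exp (n d v : ℝ) :
    ‖Complex.exp (n * (d + v * Complex.I) ^ 2)‖ = Real.exp (n * (d ^ 2 - v ^ 2)) := by
  rw [Complex.norm_exp]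
  congr 1
  simp [pow_two]

lemma aux_expneg (n : ℝ) (hn : 0 < n) : Real.exp (-n) ≤ 1 / n := by
  rw [Real.exp_neg, one_div]
  gcongr
  linarith [Real.add_one_le_exp n]

lemma aux_gint (D : ℝ) : Integrable (fun v : ℝ => Real.exp (D ^ 2 - v ^ 2)) := by
  have := (integrable_exp_neg_mul_sq (b := 1) one_pos).const_mul (Real.exp (D ^ 2))
  refine this.congr (ae_of_all _ fun v => ?_)
  simp only [← Real.exp_add]
  congr 1; ring

lemma aux_contour (h : ℂ → ℂ) (d D M L n : ℝ) (hd : 0 ≤ d) (hdD : d ≤ D) (hn : 1 ≤ n)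
    (hM : 0 ≤ M)
    (hdiff : DifferentiableOn ℂ h (Set.Icc 0 d ×ℂ Set.Icc (-(D + 1)) (D + 1)))
    (hb : ∀ w ∈ (Set.Icc 0 d ×ℂ Set.Icc (-(D + 1)) (D + 1)), ‖h w‖ ≤ M)
    (hline : ∀ v : ℝ, ‖h (d + v * Complex.I)‖ ≤ M)
    (hcont : Continuous fun v : ℝ => h (d + v * Complex.I))
    (hL0 : 0 ≤ L)
    (hL : ∀ v : ℝ, |v| ≤ D + 1 → ‖h (v * Complex.I)‖ ≤ L * |v|) :
    ‖∫ v : ℝ, h (d + v * Complex.I) * Complex.exp (n * (d + v * Complex.I) ^ 2)‖ ≤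
      (M * (Real.exp 1 * ∫ v : ℝ, Real.exp (D ^ 2 - v ^ 2)) + 2 * M * D + L) / n := by
  have hn0 : 0 < n := by linarith
  have hD : 0 ≤ D := hd.trans hdD
  set R := D + 1 with hR
  set f : ℂ → ℂ := fun w => h w * Complex.exp (n * w ^ 2) with hf
  have hfd : DifferentiableOn ℂ f (Set.Icc 0 d ×ℂ Set.Icc (-R) R) := by
    apply hdiff.mul
    apply Differentiable.differentiableOn
    fun_prop
  have hd2 : d ^ 2 ≤ D ^ 2 := by gcongr
  have hmeas : Continuous fun v : ℝ => f (d + v * Complex.I) := by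
    apply hcont.mul; fun_prop
  have hint : Integrable fun v : ℝ => f (d + v * Complex.I) := by
    have hg : Integrable fun v : ℝ => M * (Real.exp (n * d ^ 2) * Real.exp (-n * v ^ 2)) :=
      ((integrable_exp_neg_mul_sq hn0).const_mul _).const_mul _
    refine hg.mono' hmeas.aestronglyMeasurable (ae_of_all _ fun v => ?_)
    rw [hf]
    simp only
    rw [norm_mul, aux_norm_exp, ← Real.exp_add]
    have : n * (d ^ 2 - v ^ 2) = n * d ^ 2 + -n * v ^ 2 := by ring
    rw [this]
    gcongr
    exact hline v
  change ‖∫ v : ℝ, f (d + v * Complex.I)‖ ≤ _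
  rw [← integral_add_compl (measurableSet_Ioc (a := -R) (b := R)) hint,
    ← intervalIntegral.integral_of_le (by linarith)]
  have htail : ‖∫ v in (Set.Ioc (-R) R)ᶜ, f (d + v * Complex.I)‖ ≤
      M * (Real.exp 1 * ∫ v : ℝ, Real.exp (D ^ 2 - v ^ 2)) / n := by
    have hgi : Integrable fun v : ℝ => M * (Real.exp (1 - n) * Real.exp (D ^ 2 - v ^ 2)) :=
      ((aux_gint D).const_mul _).const_mul _
    have h1 : ‖∫ v in (Set.Ioc (-R) R)ᶜ, f (d + v * Complex.I)‖ ≤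
        ∫ v in (Set.Ioc (-R) R)ᶜ, M * (Real.exp (1 - n) * Real.exp (D ^ 2 - v ^ 2)) := by
      refine norm_integral_le_of_norm_le hgi.integrableOn ?_
      refine (ae_restrict_iff' measurableSet_Ioc.compl).2 (ae_of_all _ fun v hv => ?_)
      have hv2 : R ^ 2 ≤ v ^ 2 := by
        by_contra hcon
        push Not at hcon
        have := abs_lt_of_sq_lt_sq' hcon (by linarith)
        exact hv ⟨this.1, this.2.le⟩
      rw [hf]
      simp only
      rw [norm_mul, aux_norm_exp, ← Real.exp_add]
      gcongr
      · exact hline v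
      · nlinarith
    have h2 : (∫ v in (Set.Ioc (-R) R)ᶜ, M * (Real.exp (1 - n) * Real.exp (D ^ 2 - v ^ 2))) ≤
        ∫ v : ℝ, M * (Real.exp (1 - n) * Real.exp (D ^ 2 - v ^ 2)) :=
      setIntegral_le_integral hgi (ae_of_all _ fun v => by positivity)
    refine h1.trans (h2.trans ?_)
    rw [integral_const_mul, integral_const_mul, mul_div_assoc]
    have h3 : 0 ≤ ∫ v : ℝ, Real.exp (D ^ 2 - v ^ 2) := integral_nonneg fun v => by positivity
    have h4 : Real.exp (1 - n) ≤ Real.exp 1 * (1 / n) := by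
      rw [sub_eq_add_neg, Real.exp_add]
      gcongr
      exact aux_expneg n hn0
    calc _ ≤ M * (Real.exp 1 * (1 / n) * ∫ v : ℝ, Real.exp (D ^ 2 - v ^ 2)) := by gcongr
      _ = _ := by ring
  have hC := Complex.integral_boundary_rect_eq_zero_of_differentiableOn f ⟨0, -R⟩ ⟨d, R⟩
    (by simpa only [Set.uIcc_of_le hd, Set.uIcc_of_le (show -R ≤ R by linarith)] using hfd)
  simp only at hC
  have hhor : ∀ y : ℝ, |y| = R → ‖∫ x in (0:ℝ)..d, f (x + y * Complex.I)‖ ≤ M * D / n := by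
    intro y hy
    have hy2 : y ^ 2 = R ^ 2 := by rw [← hy, sq_abs]
    have h1 : ‖∫ x in (0:ℝ)..d, f (x + y * Complex.I)‖ ≤ M * (1 / n) * |d - 0| := by
      refine intervalIntegral.norm_integral_le_of_norm_le_const fun x hx => ?_
      rw [Set.uIoc_of_le hd] at hx
      rw [hf]
      simp only
      rw [norm_mul, aux_norm_exp]
      have hx2 : x ^ 2 ≤ D ^ 2 := by
        have := hx.1; have := hx.2
        gcongr
        linarith
      have h5 : Real.exp (n * (x ^ 2 - y ^ 2)) ≤ 1 / n := by
        refine le_trans ?_ (aux_expneg n hn0)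
        gcongr
        nlinarith
      have h6 : ‖h (x + y * Complex.I)‖ ≤ M := by
        apply hb
        rw [Complex.mem_reProdIm]
        simp only [Complex.add_re, Complex.ofReal_re, Complex.mul_re, Complex.I_re, Complex.I_im,
          Complex.ofReal_im, Complex.add_im, Complex.mul_im, mul_zero, mul_one, zero_mul, sub_zero,
          add_zero, zero_add]
        exact ⟨⟨hx.1.le, hx.2⟩, abs_le.1 hy.le⟩
      gcongr
    refine h1.trans ?_
    rw [sub_zero, abs_of_nonneg hd]
    calc M * (1 / n) * d ≤ M * (1 / n) * D := by gcongr
      _ = _ := by ring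
  have hvert : ‖∫ y in (-R)..R, f ((0:ℝ) + y * Complex.I)‖ ≤ L / n := by
    obtain ⟨i1, i2⟩ := aux_absgauss n hn0
    have h1 : ‖∫ y in (-R)..R, f ((0:ℝ) + y * Complex.I)‖ ≤
        ∫ y in (-R)..R, L * (|y| * Real.exp (-n * y ^ 2)) := by
      refine intervalIntegral.norm_integral_le_of_norm_le (by linarith)
        (ae_of_all _ fun y hy => ?_) (i1.const_mul L).intervalIntegrable
      have := hL y (abs_le.2 ⟨hy.1.le, hy.2⟩)
      rw [hf]
      simp only
      rw [norm_mul, aux_norm_exp, ← mul_assoc]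
      have e : n * ((0:ℝ) ^ 2 - y ^ 2) = -n * y ^ 2 := by ring
      rw [e]
      gcongr
      simpa using this
    refine h1.trans ?_
    rw [intervalIntegral.integral_of_le (by linarith)]
    refine (setIntegral_le_integral (i1.const_mul L)
      (ae_of_all _ fun v => by positivity)).trans ?_
    rw [integral_const_mul, i2]
    apply le_of_eq; ring
  have hb1 := hhor (-R) (by rw [abs_neg, abs_of_nonneg (by linarith)])
  have hb2 := hhor R (abs_of_nonneg (by linarith))
  have hmid : ‖∫ y in (-R)..R, f (d + y * Complex.I)‖ ≤ 2 * M * D / n + L / n := by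
    set a := ∫ y in (-R)..R, f (d + y * Complex.I)
    set b := ∫ y in (-R)..R, f ((0:ℝ) + y * Complex.I)
    set p := ∫ x in (0:ℝ)..d, f (x + (-R : ℝ) * Complex.I)
    set q := ∫ x in (0:ℝ)..d, f (x + (R : ℝ) * Complex.I)
    have e : Complex.I * a = Complex.I * b + (q - p) := by
      simp only [smul_eq_mul] at hC
      linear_combination hC
    have e2 : ‖a‖ = ‖Complex.I * a‖ := by simp
    rw [e2, e]
    calc _ ≤ ‖Complex.I * b‖ + (‖q‖ + ‖p‖) :=
          (norm_add_le _ _).trans (by gcongr; exact norm_sub_le _ _)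
      _ ≤ L / n + (M * D / n + M * D / n) := by
          rw [norm_mul, Complex.norm_I, one_mul]; gcongr
      _ = _ := by ring
  refine (norm_add_le _ _).trans ((add_le_add hmid htail).trans (le_of_eq ?_))
  ring

lemma aux_gauss_eq (n : ℝ) (s : ℂ) (x u : ℝ) :
    Complex.exp (-((2 + u * Complex.I) * x)) * Complex.exp (n * (2 + u * Complex.I - s) ^ 2)
    = Complex.exp (-(n : ℂ) * (u : ℂ) ^ 2 + (Complex.I * (2 * n * (2 - s) - x)) * u
        + (n * (2 - s) ^ 2 - 2 * x)) := by
  rw [← Complex.exp_add]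
  congr 1
  linear_combination (n * (u:ℂ) ^ 2) * Complex.I_sq

lemma aux_gauss_int (n : ℝ) (hn : 0 < n) (s : ℂ) :
    Integrable fun u : ℝ => Complex.exp (n * (2 + u * Complex.I - s) ^ 2) := by
  have := integrable_cexp_quadratic (b := (n : ℂ)) (by simpa using hn)
    (Complex.I * (2 * n * (2 - s) - (0:ℝ))) (n * (2 - s) ^ 2 - 2 * (0:ℝ))
  refine this.congr (ae_of_all _ fun u => ?_)
  simp only
  rw [← aux_gauss_eq]
  simp

lemma aux_gauss (n : ℝ) (hn : 0 < n) (s : ℂ) (x : ℝ) :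
    ∫ u : ℝ, Complex.exp (-((2 + u * Complex.I) * x)) *
      Complex.exp (n * (2 + u * Complex.I - s) ^ 2)
    = (√(Real.pi / n) : ℝ) *
      (Complex.exp (-(s * x)) * (Real.exp (-(1 / (4 * n) * x ^ 2)) : ℂ)) := by
  simp_rw [aux_gauss_eq]
  rw [integral_cexp_quadratic (by simpa using hn)]
  have hn' : (n : ℂ) ≠ 0 := by exact_mod_cast hn.ne'
  congr 1
  · rw [neg_neg, Real.sqrt_eq_rpow, Complex.ofReal_cpow (by positivity)]
    push_cast
    rfl
  · push_cast
    rw [← Complex.exp_add]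
    congr 1
    field_simp
    linear_combination ((2 * n * (2 - s) - x) ^ 2) * Complex.I_sq

lemma aux_ioi_exp (k δ : ℝ) (hδ : 0 < δ) :
    Integrable (fun x : ℝ => Real.exp (k * x - δ * x ^ 2)) := by
  have := (integrable_cexp_quadratic (b := (δ : ℂ)) (by simpa using hδ) k 0).norm
  refine this.congr (ae_of_all _ fun x => ?_)
  simp only [Complex.norm_exp]
  congr 1
  simp [pow_two]
  ring

lemma aux_meas (τ : ℝ → ℂ) (hc : ContinuousOn τ (Set.Ici 0)) :
    AEStronglyMeasurable τ (volume.restrict (Set.Ioi 0)) :=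
  (hc.mono Ioi_subset_Ici_self).aestronglyMeasurable measurableSet_Ioi

lemma aux_line_int (τ : ℝ → ℂ) (hc : ContinuousOn τ (Set.Ici 0)) (A : ℝ) (hA0 : 0 ≤ A)
    (hA : ∀ x, 0 ≤ x → ‖τ x‖ ≤ A + 1 * x) :
    IntegrableOn (fun x : ℝ => τ x * Complex.exp (-(2 * x))) (Set.Ioi 0) := by
  have h := (exp_neg_integrableOn_Ioi 0 (b := 1) one_pos).const_mul (A + 1)
  refine Integrable.mono' h ((aux_meas τ hc).mul
    (Continuous.aestronglyMeasurable (by fun_prop))) ?_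
  refine (ae_restrict_iff' measurableSet_Ioi).2 (ae_of_all _ fun x hx => ?_)
  have hx0 : 0 < x := hx
  rw [norm_mul, Complex.norm_exp]
  have e : (-(2 * (x:ℂ))).re = x * (-1) + (-1 * x) := by simp; ring
  rw [e, Real.exp_add, ← mul_assoc]
  gcongr
  have h1 := hA x hx0.le
  have h2 := Real.add_one_le_exp x
  rw [mul_neg_one, Real.exp_neg, ← div_eq_mul_inv, div_le_iff₀ (Real.exp_pos _)]
  nlinarith

lemma aux_fubini (τ : ℝ → ℂ) (hc : ContinuousOn τ (Set.Ici 0)) (A : ℝ) (hA0 : 0 ≤ A)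
    (hA : ∀ x, 0 ≤ x → ‖τ x‖ ≤ A + 1 * x) (n : ℝ) (hn : 0 < n) (s : ℂ) :
    (√(Real.pi / n) : ℝ) * Laplace (fun x => τ x * (Real.exp (-(1 / (4 * n) * x ^ 2)) : ℂ)) s
    = ∫ u : ℝ, Laplace τ (2 + u * Complex.I) *
        Complex.exp (n * (2 + u * Complex.I - s) ^ 2) := by
  have hprod := (aux_line_int τ hc A hA0 hA).mul_prod (aux_gauss_int n hn s)
  have hI : Integrable (Function.uncurry fun (x u : ℝ) =>
      τ x * (Complex.exp (-((2 + u * Complex.I) * x)) *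
        Complex.exp (n * (2 + u * Complex.I - s) ^ 2)))
      ((volume.restrict (Set.Ioi (0:ℝ))).prod volume) := by
    have := hprod.bdd_mul (f := fun z : ℝ × ℝ => Complex.exp ((-(z.2 * z.1) : ℝ) * Complex.I))
      (c := 1) (Continuous.aestronglyMeasurable (by fun_prop))
      (ae_of_all _ fun z => (Complex.norm_exp_ofReal_mul_I _).le)
    refine this.congr (ae_of_all _ fun z => ?_)
    simp only [Function.uncurry]
    have e : Complex.exp (-((2 + z.2 * Complex.I) * z.1)) =
        Complex.exp ((-(z.2 * z.1) : ℝ) * Complex.I) * Complex.exp (-(2 * z.1)) := by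
      rw [← Complex.exp_add]; congr 1; push_cast; ring
    rw [e]; ring
  have hsw := integral_integral_swap hI
  simp only [Laplace]
  rw [← integral_const_mul]
  calc _ = ∫ x in Set.Ioi (0:ℝ), ∫ u : ℝ, τ x * (Complex.exp (-((2 + u * Complex.I) * x)) *
        Complex.exp (n * (2 + u * Complex.I - s) ^ 2)) := by
        congr 1; ext x
        rw [integral_const_mul, aux_gauss n hn s x]
        ring
    _ = _ := hsw
    _ = _ := by
        congr 1; ext u
        rw [← integral_mul_const]
        congr 1; ext x
        ring

lemma aux_entire (τ : ℝ → ℂ) (hc : ContinuousOn τ (Set.Ici 0)) (A : ℝ) (hA0 : 0 ≤ A)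
    (hA : ∀ x, 0 ≤ x → ‖τ x‖ ≤ A + 1 * x) (δ : ℝ) (hδ : 0 < δ) :
    Differentiable ℂ (Laplace (fun x => τ x * (Real.exp (-(δ * x ^ 2)) : ℂ))) := by
  intro s0
  have hm := aux_meas τ hc
  have key : ∀ (j : ℝ) (s : ℂ) (x : ℝ), 0 < x → ‖s - s0‖ < 1 → (0 ≤ j ∧ j ≤ Real.exp x) →
      ‖τ x * (Real.exp (-(δ * x ^ 2)) : ℂ) * Complex.exp (-(s * x))‖ * j ≤
        (A + 1) * Real.exp ((‖s0‖ + 3) * x - δ * x ^ 2) := by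
    intro j s x hx hs hj
    have hs' : -s.re ≤ ‖s0‖ + 1 := by
      have h1 := Complex.abs_re_le_norm s
      have h2 : ‖s‖ ≤ ‖s - s0‖ + ‖s0‖ := by simpa using norm_add_le (s - s0) s0
      have := neg_abs_le s.re
      linarith
    rw [norm_mul, norm_mul, Complex.norm_real, Real.norm_of_nonneg (Real.exp_pos _).le,
      Complex.norm_exp]
    have e : (-(s * x)).re = -s.re * x := by simp
    rw [e]
    have h1 : ‖τ x‖ ≤ (A + 1) * Real.exp x := by
      have := hA x hx.le
      have h2 := Real.add_one_le_exp x
      nlinarith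
    calc _ ≤ (A + 1) * Real.exp x * Real.exp (-(δ * x ^ 2)) * Real.exp ((‖s0‖ + 1) * x) *
          Real.exp x := by
          gcongr
          · exact hj.1
          · exact hj.2
      _ = _ := by
          rw [mul_assoc, mul_assoc, mul_assoc, ← Real.exp_add, ← Real.exp_add, ← Real.exp_add]
          congr 2
          ring
  have hint : IntegrableOn (fun x : ℝ => (A + 1) * Real.exp ((‖s0‖ + 3) * x - δ * x ^ 2))
      (Set.Ioi 0) := ((aux_ioi_exp (‖s0‖ + 3) δ hδ).const_mul _).integrableOn
  have hmeas : ∀ s : ℂ, AEStronglyMeasurable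
      (fun x : ℝ => τ x * (Real.exp (-(δ * x ^ 2)) : ℂ) * Complex.exp (-(s * x)))
      (volume.restrict (Set.Ioi 0)) := fun s =>
    (hm.mul (Continuous.aestronglyMeasurable (by fun_prop))).mul
      (Continuous.aestronglyMeasurable (by fun_prop))
  refine ((hasDerivAt_integral_of_dominated_loc_of_deriv_le
    (F := fun (s : ℂ) (x : ℝ) => τ x * (Real.exp (-(δ * x ^ 2)) : ℂ) * Complex.exp (-(s * x)))
    (F' := fun (s : ℂ) (x : ℝ) =>
      τ x * (Real.exp (-(δ * x ^ 2)) : ℂ) * Complex.exp (-(s * x)) * (-x))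
    (x₀ := s0) (Metric.ball_mem_nhds s0 one_pos) (Eventually.of_forall hmeas) ?_ ?_ ?_ hint
    ?_).2).differentiableAt
  · refine Integrable.mono' hint (hmeas s0) ?_
    refine (ae_restrict_iff' measurableSet_Ioi).2 (ae_of_all _ fun x hx => ?_)
    have := key 1 s0 x hx (by simp) ⟨zero_le_one, Real.one_le_exp (le_of_lt hx)⟩
    simpa using this
  · exact (hmeas s0).mul (Continuous.aestronglyMeasurable (by fun_prop))
  · refine (ae_restrict_iff' measurableSet_Ioi).2 (ae_of_all _ fun x hx s hs => ?_)
    have hx0 : 0 < x := hx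
    have := key x s x hx (by simpa [dist_eq_norm] using hs)
      ⟨hx0.le, by linarith [Real.add_one_le_exp x]⟩
    rw [norm_mul, norm_neg, Complex.norm_real, Real.norm_of_nonneg hx0.le]
    exact this
  · refine ae_of_all _ fun x s _ => ?_
    have h1 : HasDerivAt (fun s : ℂ => -(s * x)) (-(x:ℂ)) s := by
      simpa using ((hasDerivAt_id s).mul_const (x:ℂ)).fun_neg
    have := h1.cexp.const_mul (τ x * (Real.exp (-(δ * x ^ 2)) : ℂ))
    rw [← mul_assoc] at this
    exact this

lemma aux_approx (α : ℝ) (τ : ℝ → ℂ) (F : ℂ → ℂ)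
    (hc : ContinuousOn τ (Set.Ici 0)) (A : ℝ) (hA0 : 0 ≤ A)
    (hA : ∀ x, 0 ≤ x → ‖τ x‖ ≤ A + 1 * x)
    (hα : α < 0)
    (hFan : DifferentiableOn ℂ F {s : ℂ | α < s.re})
    (hFeq : ∀ s : ℂ, 0 < s.re → F s = Laplace τ s)
    (α' r : ℝ) (hα'1 : α < α') (hα'2 : α' < 0) (hr : 0 < r) :
    ∃ C : ℝ, 0 ≤ C ∧ ∀ n : ℝ, 1 ≤ n → ∀ s ∈ Rbar α' r,
      ‖F s - Laplace (fun x => τ x * (Real.exp (-(1 / (4 * n) * x ^ 2)) : ℂ)) s‖ ≤ C / √n := by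
  have hopen : IsOpen {s : ℂ | α < s.re} := isOpen_lt continuous_const Complex.continuous_re
  set D := 2 - α' with hD
  set K : Set ℂ := Set.Icc α' 2 ×ℂ Set.Icc (-(r + D + 1)) (r + D + 1) with hK
  have hKc : IsCompact K := isCompact_Icc.reProdIm isCompact_Icc
  have hKconv : Convex ℝ K :=
    ((convex_Icc α' 2).linear_preimage Complex.reLm).inter
      ((convex_Icc (-(r + D + 1)) (r + D + 1)).linear_preimage Complex.imLm)
  have hKsub : K ⊆ {s : ℂ | α < s.re} := fun z hz => hα'1.trans_le (Complex.mem_reProdIm.1 hz).1.1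
  obtain ⟨M1, hM1⟩ := hKc.exists_bound_of_continuousOn (hFan.continuousOn.mono hKsub)
  obtain ⟨L, hL⟩ := hKc.exists_bound_of_continuousOn
    ((hFan.deriv hopen).continuousOn.mono hKsub)
  have h0K : (0 : ℂ) ∈ K := by
    rw [hK, Complex.mem_reProdIm]
    simp only [Complex.zero_re, Complex.zero_im]
    exact ⟨⟨hα'2.le, by norm_num⟩, ⟨by linarith, by linarith⟩⟩
  have hM10 : 0 ≤ M1 := (norm_nonneg _).trans (hM1 0 h0K)
  have hL0 : 0 ≤ L := (norm_nonneg _).trans (hL 0 h0K)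
  have hlip : ∀ z ∈ K, ∀ w ∈ K, ‖F w - F z‖ ≤ L * ‖w - z‖ := fun z hz w hw =>
    Convex.norm_image_sub_le_of_norm_deriv_le
      (fun y hy => hFan.differentiableAt (hopen.mem_nhds (hKsub hy))) hL hKconv hz hw
  set M2 := ∫ x in Set.Ioi (0:ℝ), ‖τ x * Complex.exp (-(2 * x))‖ with hM2
  have hM20 : 0 ≤ M2 := integral_nonneg fun x => norm_nonneg _
  have hline : ∀ u : ℝ, ‖F (2 + u * Complex.I)‖ ≤ M2 := by
    intro u
    rw [hFeq _ (by simp)]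
    refine (norm_integral_le_integral_norm _).trans (le_of_eq ?_)
    rw [hM2]
    congr 1; ext x
    simp [Complex.norm_exp]
  set M := M1 + M2 with hM
  have hMn : 0 ≤ M1 + M := by positivity
  have hIpos : 0 ≤ ∫ v : ℝ, Real.exp (D ^ 2 - v ^ 2) := integral_nonneg fun v => (Real.exp_pos _).le
  set C := (M1 + M) * (Real.exp 1 * ∫ v : ℝ, Real.exp (D ^ 2 - v ^ 2)) + 2 * (M1 + M) * D + L
    with hC
  have hD0 : 0 ≤ D := by rw [hD]; linarith
  have hC0 : 0 ≤ C := by positivity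
  refine ⟨C, hC0, fun n hn s hs => ?_⟩
  have hn0 : 0 < n := by linarith
  obtain ⟨hs1, hs2, hs3⟩ := hs
  have hs3' := abs_le.1 hs3
  set G := Laplace (fun x => τ x * (Real.exp (-(1 / (4 * n) * x ^ 2)) : ℂ)) with hG
  set κ : ℝ := √(Real.pi / n) with hκ
  have hκ0 : 0 < κ := Real.sqrt_pos.2 (by positivity)
  have hFcont : Continuous fun u : ℝ => F (2 + u * Complex.I) := by
    refine hFan.continuousOn.comp_continuous (by fun_prop) fun u => ?_
    simp; linarith
  have hgi := aux_gauss_int n hn0 s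
  have hFi : Integrable fun u : ℝ =>
      F (2 + u * Complex.I) * Complex.exp (n * (2 + u * Complex.I - s) ^ 2) :=
    hgi.bdd_mul hFcont.aestronglyMeasurable (ae_of_all _ hline)
  have e1 : κ * G s = ∫ u : ℝ, F (2 + u * Complex.I) *
      Complex.exp (n * (2 + u * Complex.I - s) ^ 2) := by
    rw [hG, hκ, aux_fubini τ hc A hA0 hA n hn0 s]
    congr 1; ext u
    rw [hFeq _ (by simp)]
  have e2 : (κ : ℂ) = ∫ u : ℝ, Complex.exp (n * (2 + u * Complex.I - s) ^ 2) := by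
    have := aux_gauss n hn0 s 0
    simp at this
    rw [this]
  have e3 : κ * (G s - F s) = ∫ u : ℝ, (F (2 + u * Complex.I) - F s) *
      Complex.exp (n * (2 + u * Complex.I - s) ^ 2) := by
    simp_rw [sub_mul]
    rw [integral_sub hFi (hgi.const_mul _), integral_const_mul, ← e1, ← e2]
    ring
  set d : ℝ := 2 - s.re with hd
  set h : ℂ → ℂ := fun w => F (s + w) - F s with hh
  have hpt : ∀ v : ℝ, (s + (d + v * Complex.I) : ℂ) = 2 + ((v + s.im : ℝ) : ℂ) * Complex.I := by
    intro v
    apply Complex.ext <;> simp [hd]; ring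
  have e4 : (∫ u : ℝ, (F (2 + u * Complex.I) - F s) *
      Complex.exp (n * (2 + u * Complex.I - s) ^ 2)) =
      ∫ v : ℝ, h (d + v * Complex.I) * Complex.exp (n * (d + v * Complex.I) ^ 2) := by
    rw [← integral_add_right_eq_self _ s.im]
    congr 1; ext v
    simp only [hh]
    rw [hpt v, ← hpt v]
    congr 3
    ring
  have hsK : s ∈ K := Complex.mem_reProdIm.2
    ⟨⟨hs1, by linarith⟩, ⟨by linarith, by linarith⟩⟩
  have hwK : ∀ w ∈ Set.Icc 0 d ×ℂ Set.Icc (-(D + 1)) (D + 1), s + w ∈ K := by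
    intro w hw
    obtain ⟨⟨w1, w2⟩, ⟨w3, w4⟩⟩ := Complex.mem_reProdIm.1 hw
    refine Complex.mem_reProdIm.2 ?_
    simp only [Complex.add_re, Complex.add_im]
    exact ⟨⟨by linarith, by linarith⟩, ⟨by linarith, by linarith⟩⟩
  have hFs := hM1 s hsK
  have hbound := aux_contour h d D (M1 + M) L n (by linarith) (by linarith) hn hMn
    (by
      refine DifferentiableOn.sub_const (hFan.comp (by fun_prop) ?_) _
      exact fun w hw => hKsub (hwK w hw))
    (by
      intro w hw
      have := hM1 _ (hwK w hw)
      refine (norm_sub_le _ _).trans ?_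
      linarith)
    (by
      intro v
      simp only [hh]
      rw [hpt v]
      have := hline (v + s.im)
      refine (norm_sub_le _ _).trans ?_
      linarith)
    (by
      simp only [hh, hpt]
      exact (hFcont.comp (continuous_id.add continuous_const)).sub continuous_const)
    hL0
    (by
      intro v hv
      have hv' := abs_le.1 hv
      have hm : s + v * Complex.I ∈ K := by
        apply hwK
        refine Complex.mem_reProdIm.2 ?_
        simp
        exact ⟨by linarith, by linarith, by linarith⟩
      have := hlip s hsK _ hm
      simpa using this)
  rw [← e4, ← e3, ← hC, norm_mul, Complex.norm_real, Real.norm_of_nonneg hκ0.le,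
    norm_sub_rev] at hbound
  have hκn : 1 / √n ≤ κ := by
    rw [hκ, Real.sqrt_div Real.pi_pos.le]
    gcongr
    rw [Real.one_le_sqrt]
    linarith [Real.pi_gt_three]
  have hsn : 0 < √n := Real.sqrt_pos.2 hn0
  have h7 : 1 / √n * ‖F s - G s‖ ≤ C / n := by
    refine le_trans ?_ hbound
    gcongr
  calc ‖F s - G s‖ = √n * (1 / √n * ‖F s - G s‖) := by field_simp
    _ ≤ √n * (C / n) := by gcongr
    _ = C / √n := by
      nth_rewrite 2 [← Real.sq_sqrt hn0.le]
      field_simp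

/-- `V_{-∞}` is dense in the Fréchet space `V_α`: for every `τ ∈ V_α` (with
analytic extension `F` of its Laplace transform to the half-plane `Re s > α`),
every seminorm `‖·‖_{α',r}` with `α < α' < 0`, `r > 0`, and every `ε > 0`, there
is `σ ∈ V_{-∞}` (with entire extension `G`) within distance `ε` of `τ`. -/
theorem Vminusinfty_dense_in_Valpha
    (α : ℝ) (hα : α < 0)
    (τ τ' : ℝ → ℂ) (F : ℂ → ℂ)
    (hder : ∀ x ∈ Set.Ici (0 : ℝ), HasDerivWithinAt τ (τ' x) (Set.Ici 0) x)
    (hcont : ContinuousOn τ' (Set.Ici 0))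
    (hto0 : Tendsto τ' atTop (nhds 0))
    (hFan : DifferentiableOn ℂ F {s : ℂ | α < s.re})
    (hFeq : ∀ s : ℂ, 0 < s.re → F s = Laplace τ s)
    (α' r : ℝ) (hα'1 : α < α') (hα'2 : α' < 0) (hr : 0 < r)
    (ε : ℝ) (hε : 0 < ε) :
    ∃ (σ σ' : ℝ → ℂ) (G : ℂ → ℂ),
      (∀ x ∈ Set.Ici (0 : ℝ), HasDerivWithinAt σ (σ' x) (Set.Ici 0) x) ∧
      ContinuousOn σ' (Set.Ici 0) ∧
      Tendsto σ' atTop (nhds 0) ∧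
      Differentiable ℂ G ∧
      (∀ s : ℂ, 0 < s.re → G s = Laplace σ s) ∧
      ∃ ε₁ ε₂ : ℝ, 0 ≤ ε₁ ∧ 0 ≤ ε₂ ∧ ε₁ + ε₂ < ε ∧
        (∀ x : ℝ, 0 ≤ x → ‖τ' x - σ' x‖ ≤ ε₁) ∧
        (∀ s ∈ Rbar α' r, ‖F s - G s‖ ≤ ε₂) := by
  obtain ⟨A, hA0, hA⟩ := aux_growth τ τ' hder hto0 1 one_pos
  have hc : ContinuousOn τ (Set.Ici 0) := fun x hx => (hder x hx).continuousWithinAt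
  obtain ⟨C1, hC1, hd⟩ := aux_deriv τ τ' hder hcont hto0 (ε / 4) (by linarith)
  obtain ⟨C2, hC2, ha⟩ := aux_approx α τ F hc A hA0 hA hα hFan hFeq α' r hα'1 hα'2 hr
  set m : ℝ := 1 + (C1 + C2) * (4 / ε) with hm
  have hm1 : 1 ≤ m := by
    have : 0 ≤ (C1 + C2) * (4 / ε) := by positivity
    linarith
  have hm0 : 0 < m := by linarith
  set n : ℝ := m ^ 2 with hn
  have hn1 : 1 ≤ n := one_le_pow₀ hm1
  have hsn : √n = m := Real.sqrt_sq hm0.le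
  set δ : ℝ := 1 / (4 * n) with hδ
  have hδ0 : 0 < δ := by positivity
  have hδ1 : δ ≤ 1 := by rw [hδ, div_le_one (by positivity)]; linarith
  have hsδ : √δ ≤ 1 / m := by
    rw [hδ]
    apply Real.sqrt_le_iff.2 ⟨by positivity, ?_⟩
    rw [div_pow, one_pow, ← hn]
    gcongr
    linarith
  have hCm : (C1 + C2) / m ≤ ε / 4 := by
    rw [div_le_iff₀ hm0, hm]
    have : ε / 4 * (1 + (C1 + C2) * (4 / ε)) = ε / 4 + (C1 + C2) := by field_simp
    rw [this]; linarith
  set σ' : ℝ → ℂ := fun x => τ' x * (Real.exp (-(δ * x ^ 2)) : ℂ)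
        + τ x * ((-(2 * δ * x) * Real.exp (-(δ * x ^ 2)) : ℝ) : ℂ) with hσ'
  refine ⟨fun x => τ x * (Real.exp (-(δ * x ^ 2)) : ℂ), σ',
    Laplace (fun x => τ x * (Real.exp (-(δ * x ^ 2)) : ℂ)), ?_, ?_, ?_, ?_, fun _ _ => rfl,
    ε / 4 + C1 * √δ, C2 / √n, by positivity, by positivity, ?_, ?_, ?_⟩
  · intro x hx
    have h1 : HasDerivAt (fun y : ℝ => Real.exp (-(δ * y ^ 2)))
        (-(2 * δ * x) * Real.exp (-(δ * x ^ 2))) x := by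
      have := (((hasDerivAt_pow 2 x).const_mul δ).fun_neg).exp
      convert this using 1
      simp
      ring
    exact (hder x hx).mul h1.ofReal_comp.hasDerivWithinAt
  · exact (hcont.mul (Continuous.continuousOn (by fun_prop))).add
      (hc.mul (Continuous.continuousOn (by fun_prop)))
  ·
    have hg : Tendsto (fun x : ℝ => (A + 1) * (2 * δ) * (x ^ 2 * Real.exp (-δ * x ^ 2)))
        atTop (nhds 0) := by
      have h1 : Tendsto (fun x : ℝ => x ^ 2 * Real.exp (-δ * x ^ 2)) atTop (nhds 0) := by
        have h2 := (Real.tendsto_pow_mul_exp_neg_atTop_nhds_zero 1).comp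
          ((tendsto_pow_atTop (α := ℝ) two_ne_zero).const_mul_atTop hδ0)
        have h3 := h2.const_mul (1 / δ)
        rw [mul_zero] at h3
        refine h3.congr fun x => ?_
        simp only [Function.comp, pow_one]
        rw [neg_mul]
        field_simp
      simpa using h1.const_mul ((A + 1) * (2 * δ))
    have ht := hto0.norm.add hg
    rw [norm_zero, zero_add] at ht
    refine squeeze_zero_norm' ?_ ht
    filter_upwards [eventually_ge_atTop 1] with x hx
    have hx0 : 0 ≤ x := by linarith
    refine (norm_add_le _ _).trans ?_
    rw [norm_mul, norm_mul, Complex.norm_real, Complex.norm_real,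
      Real.norm_of_nonneg (Real.exp_pos _).le, norm_mul, norm_neg,
      Real.norm_of_nonneg (Real.exp_pos _).le, Real.norm_of_nonneg (by positivity)]
    have hE1 : Real.exp (-(δ * x ^ 2)) ≤ 1 :=
      Real.exp_le_one_iff.2 (by nlinarith [mul_nonneg hδ0.le (sq_nonneg x)])
    have hτ : ‖τ x‖ ≤ (A + 1) * x := by
      have := hA x hx0
      nlinarith
    apply add_le_add
    · exact mul_le_of_le_one_right (norm_nonneg _) hE1
    · calc ‖τ x‖ * (2 * δ * x * Real.exp (-(δ * x ^ 2)))
          ≤ (A + 1) * x * (2 * δ * x * Real.exp (-(δ * x ^ 2))) := by gcongr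
        _ = _ := by rw [neg_mul]; ring
  · exact aux_entire τ hc A hA0 hA δ hδ0
  · rw [hsn]
    have : C1 * √δ ≤ C1 * (1 / m) := by gcongr
    have h5 : C1 * (1 / m) + C2 / m = (C1 + C2) / m := by ring
    linarith
  · exact fun x hx => hd δ hδ0 hδ1 x hx
  · exact fun s hs => ha n hn1 s hs
end
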